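/- arXiv:2503.21923 — 2 statements merged into one kernel-verified Lean document; each statement's English description precedes it below -/
import Mathlib

section
/- In the fixed setup at parameter t0 (with m = ⌊β+3⌋, possibly enlarged by an absolute amount to accommodate the distortion estimates): fix n ∈ ℕ, t ∈ J with 2^{−nm−m} ≤ |t − t0| ≤ 2^{−nm+m}, and x0 ∈ K; for Q ∈ D_n(ℝ) with A_Q ≠ ∅ let a_Q = Σ_{I∈A_Q} p_I, ν_Q^{t0} = a_Q^{−1} Σ_{I∈A_Q} p_I·(f_{I,t0})_*μ_{t0} and ν_Q^{t} = a_Q^{−1} Σ_{I∈A_Q} p_I·(f_{I,t})_*μ_{t}. Then H(μ_{t0}, D_{3nm}) = Σ_Q a_Q log(1/a_Q) + Σ_Q a_Q·H(ν_Q^{t0}, D_{3nm}) + O_K(1), and likewise H(μ_{t}, D_{3nm}) = Σ_Q a_Q log(1/a_Q) + Σ_Q a_Q·H(ν_Q^{t}, D_{3nm}) + O_K(1), where the implied additive constants depend only on the attractor K and the IFS data at t0 (not on n or t). -/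
/-!
Since `Λ_n` is a cut-set of the word tree, `μ_t = ∑_Q a_Q ν_Q^t` for every parameter `t`
(`selfSimilar_cutset`). For any such mixture, the quantity
`H(a) + ∑_Q a_Q H(ν_Q, D_k) - H(μ_t, D_k)` is the average over the cells of `D_k` of the entropy
of the distribution of `Q` given the cell, so it lies between `0` and `log₂ M` if each cell is
charged by at most `M` of the measures `ν_Q` (`merge_bounds`, `mixture_entropy`,
`entropy_decomp`). It remains to bound `M` uniformly.

For large `n`, `t` is within `2⁻ⁿ` of `t₀`. Iterating the one-step estimate
`|f_{i,t}(y) - f_{i,t₀}(y')| ≤ |r_{i,t₀}| |y - y'| + O(|t - t₀|)` along `I ∈ Λ_n` shows that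
`f_{I,t}(supp μ_t)` lies within `O(2⁻ⁿ)` of `f_{I,t₀}(x₀)` (`wordFun_close`), hence `ν_Q` lives
within `O(2⁻ⁿ)` of `Q` and a cell of `D_k`, `k ≥ n`, meets boundedly many of them
(`overlap_bound`). For the finitely many remaining `n`, where `t` may be far from `t₀`, the
number of nonempty `A_Q` is at most the cardinality of the finite set `Λ_n`.
-/

open MeasureTheory Set Filter
open scoped ENNReal Classical

noncomputable section

/-- A measure is exact dimensional with dimension `d`: at a.e. point the local dimension
exists and equals `d`. -/
def ExactDim {X : Type*} [PseudoMetricSpace X] [MeasurableSpace X]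
    (μ : Measure X) (d : ℝ) : Prop :=
  ∀ᵐ x ∂μ, Tendsto (fun r : ℝ => Real.log (μ (Metric.ball x r)).toReal / Real.log r)
    (nhdsWithin 0 (Set.Ioi 0)) (nhds d)

/-- `f_{x,t}(0) = lim_n f_{x_1,t} ∘ ⋯ ∘ f_{x_n,t}(0)` for the IFS
`{y ↦ r i t · y + s i t}_{i}`, written as a series. -/
def codingPoint {Λ : Type*} (r s : Λ → ℝ → ℝ) (x : ℕ → Λ) (t : ℝ) : ℝ :=
  ∑' n : ℕ, (∏ k ∈ Finset.range n, r (x k) t) * s (x n) t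

/-- The metric `d(x,y) = 2^{-|x∧y|}` on `Λ^ℕ`, where `|x∧y|` is the length of the longest
common initial segment. -/
def seqDist {Λ : Type*} (x y : ℕ → Λ) : ℝ :=
  if x = y then 0 else (2 : ℝ) ^ (-((sInf {k : ℕ | x k ≠ y k} : ℕ) : ℤ))

/-- The similarity dimension `(Σ_i p_i log p_i) / (Σ_i p_i log |r_{i,t}|)`. -/
def simDim {Λ : Type*} [Fintype Λ] (p : Λ → ℝ) (r : Λ → ℝ → ℝ) (t : ℝ) : ℝ :=
  (∑ i : Λ, p i * Real.log (p i)) / (∑ i : Λ, p i * Real.log |r i t|)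

/-- `μ` is the self-similar measure associated to the IFS `{y ↦ r i t · y + s i t}_i` and the
probability vector `p`. -/
def IsSelfSimilarMeasure {Λ : Type*} [Fintype Λ] (r s : Λ → ℝ → ℝ) (p : Λ → ℝ) (t : ℝ)
    (μ : Measure ℝ) : Prop :=
  IsProbabilityMeasure μ ∧
    μ = ∑ i : Λ, ENNReal.ofReal (p i) • μ.map (fun x => r i t * x + s i t)

/-- The summand `-(m · log₂ m)` of base-2 Shannon entropy. -/
def negMulLog2 (m : ℝ≥0∞) : ℝ := -(m.toReal * Real.logb 2 m.toReal)

/-- Base-2 Shannon entropy of a measure on `ℝ` with respect to the generation-`k`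
dyadic partition. -/
def ent1 (μ : Measure ℝ) (k : ℕ) : ℝ :=
  ∑' j : ℤ, negMulLog2 (μ {y : ℝ | ⌊(2 : ℝ) ^ k * y⌋ = j})

/-- The composition `f_{I,t} = f_{i₁,t} ∘ ⋯ ∘ f_{i_k,t}` for a word `I = i₁…i_k`. -/
def wordFun {Λ : Type*} (r s : Λ → ℝ → ℝ) (I : List Λ) (t : ℝ) (x : ℝ) : ℝ :=
  I.foldr (fun i y => r i t * y + s i t) x

/-- The contraction ratio `r_{I,t}` of `f_{I,t}`. -/
def wordRatio {Λ : Type*} (r : Λ → ℝ → ℝ) (I : List Λ) (t : ℝ) : ℝ :=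
  (I.map fun i => r i t).prod

/-- The weight `p_I = p_{i₁} ⋯ p_{i_k}`. -/
def wordP {Λ : Type*} (p : Λ → ℝ) (I : List Λ) : ℝ := (I.map p).prod

/-- The generation `Λ_n = {I : |r_{I,t₀}| ≤ 2^{-n} < |r_{I⁻,t₀}|}`. -/
def genIdx {Λ : Type*} (r : Λ → ℝ → ℝ) (t0 : ℝ) (n : ℕ) : Set (List Λ) :=
  {I | I ≠ [] ∧ |wordRatio r I t0| ≤ (2 : ℝ) ^ (-(n : ℝ)) ∧
    (2 : ℝ) ^ (-(n : ℝ)) < |wordRatio r I.dropLast t0|}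

/-- `A_Q` for the dyadic interval `Q` of generation `n` with index `j`: the words `I ∈ Λ_n`
with `f_{I,t₀}(x₀) ∈ Q`. -/
def AQ {Λ : Type*} (r s : Λ → ℝ → ℝ) (t0 : ℝ) (n : ℕ) (x0 : ℝ) (j : ℤ) : Set (List Λ) :=
  {I | I ∈ genIdx r t0 n ∧ ⌊(2 : ℝ) ^ n * wordFun r s I t0 x0⌋ = j}

/-- `a_Q = Σ_{I ∈ A_Q} p_I`. -/
def aQ {Λ : Type*} (r s : Λ → ℝ → ℝ) (p : Λ → ℝ) (t0 : ℝ) (n : ℕ) (x0 : ℝ) (j : ℤ) : ℝ :=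
  ∑' I : AQ r s t0 n x0 j, wordP p (I : List Λ)

/-- `ν_Q^t = a_Q^{-1} Σ_{I ∈ A_Q} p_I · (f_{I,t})_* μ`. -/
def nuQ {Λ : Type*} (r s : Λ → ℝ → ℝ) (p : Λ → ℝ) (t0 : ℝ) (n : ℕ) (x0 : ℝ) (j : ℤ)
    (μ : Measure ℝ) (t : ℝ) : Measure ℝ :=
  (ENNReal.ofReal (aQ r s p t0 n x0 j))⁻¹ •
    Measure.sum (fun I : AQ r s t0 n x0 j =>
      ENNReal.ofReal (wordP p (I : List Λ)) • μ.map (wordFun r s (I : List Λ) t))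

/-! ### Entropy of a finite mixture -/

/-- The entropy lost by merging the masses `x j` into their sum is nonnegative and at most
the total mass times `log₂` of the number of nonzero masses. -/
lemma merge_bounds {ι : Type*} (S : Finset ι) (x : ι → ℝ) (hx : ∀ j ∈ S, 0 ≤ x j)
    (M : ℕ) (hM : (S.filter (fun j => x j ≠ 0)).card ≤ M) :
    0 ≤ ∑ j ∈ S, -(x j * Real.logb 2 (x j)) + (∑ j ∈ S, x j) * Real.logb 2 (∑ j ∈ S, x j) ∧
    ∑ j ∈ S, -(x j * Real.logb 2 (x j)) + (∑ j ∈ S, x j) * Real.logb 2 (∑ j ∈ S, x j)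
      ≤ (∑ j ∈ S, x j) * Real.logb 2 M := by
  set X := ∑ j ∈ S, x j with hX
  have hl2 : 0 < Real.log 2 := Real.log_pos one_lt_two
  have key : ∑ j ∈ S, -(x j * Real.logb 2 (x j)) + X * Real.logb 2 X
      = (∑ j ∈ S, x j * (Real.log X - Real.log (x j))) / Real.log 2 := by
    rw [hX, Finset.sum_mul, ← Finset.sum_add_distrib, Finset.sum_div]
    refine Finset.sum_congr rfl fun j _ => ?_
    simp only [Real.logb]
    ring
  rw [key]
  constructor
  · refine div_nonneg (Finset.sum_nonneg fun j hj => ?_) hl2.le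
    rcases (hx j hj).eq_or_lt with h | h
    · simp [← h]
    · exact mul_nonneg h.le (sub_nonneg.2 (Real.log_le_log h
        (Finset.single_le_sum hx hj)))
  · rw [Real.logb, ← mul_div_assoc, div_le_div_iff_of_pos_right hl2]
    have hXf : X = ∑ j ∈ S.filter (fun j => x j ≠ 0), x j := by
      rw [hX, Finset.sum_filter_ne_zero]
    have hf : ∑ j ∈ S, x j * (Real.log X - Real.log (x j))
        = ∑ j ∈ S.filter (fun j => x j ≠ 0), x j * (Real.log X - Real.log (x j)) := by
      rw [Finset.sum_filter_of_ne]
      intro j _ h h0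
      simp [h0] at h
    have hX0 : 0 ≤ X := Finset.sum_nonneg hx
    rcases Nat.eq_zero_or_pos M with rfl | hMpos
    · have : S.filter (fun j => x j ≠ 0) = ∅ := Finset.card_eq_zero.1 (Nat.le_zero.1 hM)
      rw [hf, this]
      simp
    have hMr : (0 : ℝ) < M := by exact_mod_cast hMpos
    rw [hf]
    -- Gibbs' inequality, through `log z ≤ z - 1` at `z = X / (M * x j)`.
    have hterm : ∀ j ∈ S.filter (fun j => x j ≠ 0),
        x j * (Real.log X - Real.log (x j)) ≤ x j * Real.log M + (X / M - x j) := by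
      intro j hj
      rw [Finset.mem_filter] at hj
      have hxj : 0 < x j := lt_of_le_of_ne (hx j hj.1) (Ne.symm hj.2)
      have hXp : 0 < X := hxj.trans_le (Finset.single_le_sum hx hj.1)
      have h1 := Real.log_le_sub_one_of_pos (x := X / (M * x j)) (by positivity)
      rw [Real.log_div hXp.ne' (by positivity), Real.log_mul hMr.ne' hxj.ne'] at h1
      have h2 := mul_le_mul_of_nonneg_left h1 hxj.le
      have h3 : x j * (X / (M * x j) - 1) = X / M - x j := by field_simp
      rw [h3] at h2
      linarith
    refine (Finset.sum_le_sum hterm).trans ?_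
    rw [Finset.sum_add_distrib, ← Finset.sum_mul, Finset.sum_sub_distrib, ← hXf,
      Finset.sum_const, nsmul_eq_mul]
    have : ((S.filter (fun j => x j ≠ 0)).card : ℝ) * (X / M) ≤ M * (X / M) := by
      gcongr
    rw [mul_div_cancel₀ _ hMr.ne'] at this
    linarith

/-- A mixture `w = ∑ a j • v j` of probability vectors has entropy within `log₂ M` of
`H(a) + ∑ a j * H(v j)`, when every cell is charged by at most `M` components. -/
lemma mixture_entropy (S E : Finset ℤ) (a : ℤ → ℝ) (v : ℤ → ℤ → ℝ) (w : ℤ → ℝ)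
    (ha : ∀ j ∈ S, 0 < a j) (hv : ∀ j e, 0 ≤ v j e)
    (hv1 : ∀ j ∈ S, ∑ e ∈ E, v j e = 1)
    (hw : ∀ e, w e = ∑ j ∈ S, a j * v j e) (hw1 : ∑ e ∈ E, w e = 1)
    (M : ℕ) (hM : ∀ e ∈ E, (S.filter (fun j => a j * v j e ≠ 0)).card ≤ M) :
    |∑ e ∈ E, -(w e * Real.logb 2 (w e)) -
      ((∑ j ∈ S, a j * Real.logb 2 (a j)⁻¹) +
        ∑ j ∈ S, a j * ∑ e ∈ E, -(v j e * Real.logb 2 (v j e)))| ≤ Real.logb 2 M := by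
  have hsplit : (∑ j ∈ S, a j * Real.logb 2 (a j)⁻¹) +
        ∑ j ∈ S, a j * ∑ e ∈ E, -(v j e * Real.logb 2 (v j e))
      = ∑ e ∈ E, ∑ j ∈ S, -((a j * v j e) * Real.logb 2 (a j * v j e)) := by
    rw [Finset.sum_comm, ← Finset.sum_add_distrib]
    refine Finset.sum_congr rfl fun j hj => ?_
    have h1 : a j * Real.logb 2 (a j)⁻¹
        = ∑ e ∈ E, v j e * (a j * Real.logb 2 (a j)⁻¹) := by
      rw [← Finset.sum_mul, hv1 j hj, one_mul]
    rw [h1, Finset.mul_sum, ← Finset.sum_add_distrib]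
    refine Finset.sum_congr rfl fun e _ => ?_
    rcases eq_or_ne (v j e) 0 with h | h
    · simp [h]
    · rw [Real.logb_mul (ha j hj).ne' h, Real.logb_inv]
      ring
  rw [hsplit, ← Finset.sum_sub_distrib]
  have hb := fun e (he : e ∈ E) => merge_bounds S (fun j => a j * v j e)
    (fun j hj => mul_nonneg (ha j hj).le (hv j e)) M (hM e he)
  simp only [← hw] at hb
  have hlow := Finset.sum_nonneg fun e he => (hb e he).1
  have hup := Finset.sum_le_sum fun e he => (hb e he).2
  rw [← Finset.sum_mul, hw1, one_mul] at hup
  simp only [Finset.sum_add_distrib] at hlow hup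
  rw [abs_le]
  simp only [Finset.sum_sub_distrib, Finset.sum_neg_distrib] at *
  constructor <;> linarith

/-! ### Words and the cut-set `Λ_n` -/

lemma wordRatio_concat {Λ : Type*} (r : Λ → ℝ → ℝ) (I : List Λ) (j : Λ) (t : ℝ) :
    wordRatio r (I ++ [j]) t = wordRatio r I t * r j t := by
  simp [wordRatio]

lemma wordP_concat {Λ : Type*} (p : Λ → ℝ) (I : List Λ) (j : Λ) :
    wordP p (I ++ [j]) = wordP p I * p j := by
  simp [wordP]

lemma wordP_pos {Λ : Type*} (p : Λ → ℝ) (hp : ∀ i, 0 < p i) (I : List Λ) :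
    0 < wordP p I := by
  induction I with
  | nil => simp [wordP]
  | cons i I ih => simpa [wordP] using mul_pos (hp i) ih

lemma wordFun_measurable {Λ : Type*} (r s : Λ → ℝ → ℝ) (I : List Λ) (t : ℝ) :
    Measurable (wordFun r s I t) := by
  induction I with
  | nil => exact measurable_id
  | cons i I ih => exact (ih.const_mul (r i t)).add_const (s i t)

lemma abs_wordRatio_le {Λ : Type*} (r : Λ → ℝ → ℝ) (t ρ : ℝ) (h : ∀ i, |r i t| ≤ ρ)
    (I : List Λ) : |wordRatio r I t| ≤ ρ ^ I.length := by
  induction I with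
  | nil => simp [wordRatio]
  | cons i I ih =>
    have : wordRatio r (i :: I) t = r i t * wordRatio r I t := by simp [wordRatio]
    rw [this, abs_mul, List.length_cons, pow_succ']
    exact mul_le_mul (h i) ih (abs_nonneg _) ((abs_nonneg _).trans (h i))

lemma exists_ratio {Λ : Type*} [Fintype Λ] [Nonempty Λ] (u : Λ → ℝ) (h : ∀ i, |u i| < 1) :
    ∃ ρ, 0 < ρ ∧ ρ < 1 ∧ ∀ i, |u i| < ρ := by
  obtain ⟨i0, hi0⟩ := Finite.exists_max (fun i => |u i|)
  refine ⟨(|u i0| + 1) / 2, by positivity, by linarith [h i0], fun i => ?_⟩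
  linarith [h i0, hi0 i]

lemma exists_length_bound {Λ : Type*} [Fintype Λ] [Nonempty Λ] (r : Λ → ℝ → ℝ) (t0 : ℝ)
    (h : ∀ i, |r i t0| < 1) (n : ℕ) :
    ∃ k : ℕ, ∀ I : List Λ, (2 : ℝ) ^ (-(n : ℝ)) < |wordRatio r I t0| → I.length < k := by
  obtain ⟨ρ, h0, h1, hρ⟩ := exists_ratio (fun i => r i t0) h
  obtain ⟨k, hk⟩ := exists_pow_lt_of_lt_one (y := ρ) (x := (2 : ℝ) ^ (-(n : ℝ)))
    (by positivity) h1
  refine ⟨k, fun I hI => ?_⟩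
  by_contra hlen
  have h2 := abs_wordRatio_le r t0 ρ (fun i => (hρ i).le) I
  have h3 : ρ ^ I.length ≤ ρ ^ k := pow_le_pow_of_le_one h0.le h1.le (not_lt.1 hlen)
  linarith

lemma genIdx_finite {Λ : Type*} [Fintype Λ] [Nonempty Λ] (r : Λ → ℝ → ℝ) (t0 : ℝ)
    (h : ∀ i, |r i t0| < 1) (n : ℕ) : (genIdx r t0 n).Finite := by
  obtain ⟨k, hk⟩ := exists_length_bound r t0 h n
  refine (List.finite_length_le Λ k).subset fun I hI => ?_
  have := hk _ hI.2.2
  have h0 : 0 < I.length := List.length_pos_of_ne_nil hI.1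
  rw [List.length_dropLast] at this
  simp only [mem_ofPred_eq]
  omega

/-- `Λ_n` is a cut-set of the word tree: a weight on words that is additive over children has
total mass over `Λ_n` equal to its value at the root. -/
lemma cutset_sum {Λ : Type*} [Fintype Λ] [Nonempty Λ] (r : Λ → ℝ → ℝ) (t0 : ℝ)
    (h : ∀ i, |r i t0| < 1) (n : ℕ) (hn : 1 ≤ n) (F : List Λ → ℝ≥0∞)
    (hF : ∀ I, F I = ∑ j, F (I ++ [j])) :
    F [] = ∑ I ∈ (genIdx_finite r t0 h n).toFinset, F I := by
  set c : ℝ := (2 : ℝ) ^ (-(n : ℝ)) with hc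
  have hc1 : c < 1 := by
    rw [hc]
    exact Real.rpow_lt_one_of_one_lt_of_neg one_lt_two (by simpa using Nat.lt_of_succ_le hn)
  set L := (genIdx_finite r t0 h n).toFinset with hL
  have memL : ∀ I, I ∈ L ↔ I ≠ [] ∧ |wordRatio r I t0| ≤ c ∧
      c < |wordRatio r I.dropLast t0| := by
    intro I
    rw [hL, Set.Finite.mem_toFinset]
    rfl
  let W : ℕ → Finset (List Λ) := fun k => (List.finite_length_eq Λ k).toFinset
  have memW : ∀ k I, I ∈ W k ↔ I.length = k := by
    intro k I
    simp [W]
  -- Words not longer than `k` that were already cut, plus the surviving words of length `k`.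
  have main : ∀ k, F [] = ∑ I ∈ L.filter (fun I => I.length ≤ k), F I
      + ∑ I ∈ (W k).filter (fun I => c < |wordRatio r I t0|), F I := by
    intro k
    induction k with
    | zero =>
      have h1 : L.filter (fun I => I.length ≤ 0) = ∅ := by
        ext I
        simp only [Finset.mem_filter, memL, Finset.notMem_empty, iff_false]
        rintro ⟨h1, h2⟩
        exact h1.1 (List.length_eq_zero_iff.1 (Nat.le_zero.1 h2))
      have h2 : (W 0).filter (fun I => c < |wordRatio r I t0|) = {[]} := by
        ext I
        simp only [Finset.mem_filter, memW, Finset.mem_singleton, List.length_eq_zero_iff]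
        constructor
        · exact fun h => h.1
        · rintro rfl
          exact ⟨rfl, by simpa [wordRatio] using hc1⟩
      rw [h1, h2]
      simp
    | succ k ih =>
      have hstep : ∑ I ∈ (W k).filter (fun I => c < |wordRatio r I t0|), F I
          = ∑ I ∈ (W (k + 1)).filter (fun I => c < |wordRatio r I.dropLast t0|), F I := by
        rw [Finset.sum_congr rfl (fun I _ => hF I), ← Finset.sum_product']
        refine Finset.sum_bij (fun x _ => x.1 ++ [x.2]) ?_ ?_ ?_ ?_
        · rintro ⟨I, j⟩ hI
          simp only [Finset.mem_product, Finset.mem_filter, memW] at hI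
          simp [memW, hI.1.1, hI.1.2]
        · rintro ⟨I, j⟩ _ ⟨I', j'⟩ _ he
          simpa using List.append_inj' he rfl
        · intro J hJ
          simp only [Finset.mem_filter, memW] at hJ
          have hne : J ≠ [] := by
            rintro rfl
            simp at hJ
          refine ⟨(J.dropLast, J.getLast hne), ?_, List.dropLast_append_getLast hne⟩
          simp [memW, hJ.1, hJ.2]
        · intros
          rfl
      have hsplit : ∑ I ∈ (W (k + 1)).filter (fun I => c < |wordRatio r I.dropLast t0|), F I
          = ∑ I ∈ L.filter (fun I => I.length = k + 1), F I
            + ∑ I ∈ (W (k + 1)).filter (fun I => c < |wordRatio r I t0|), F I := by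
        rw [← Finset.sum_filter_add_sum_filter_not _ (fun I => |wordRatio r I t0| ≤ c)]
        congr 1
        · refine Finset.sum_congr ?_ fun _ _ => rfl
          ext I
          simp only [Finset.mem_filter, memW, memL]
          constructor
          · rintro ⟨⟨h1, h2⟩, h3⟩
            exact ⟨⟨by rintro rfl; simp at h1, h3, h2⟩, h1⟩
          · rintro ⟨⟨_, h3, h2⟩, h1⟩
            exact ⟨⟨h1, h2⟩, h3⟩
        · refine Finset.sum_congr ?_ fun _ _ => rfl
          ext I
          simp only [Finset.mem_filter, memW, not_le]
          constructor
          · rintro ⟨⟨h1, h2⟩, h3⟩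
            exact ⟨h1, h3⟩
          · rintro ⟨h1, h3⟩
            have hne : I ≠ [] := by
              rintro rfl
              simp at h1
            refine ⟨⟨h1, ?_⟩, h3⟩
            rw [← List.dropLast_append_getLast hne, wordRatio_concat, abs_mul] at h3
            exact h3.trans_le (mul_le_of_le_one_right (abs_nonneg _) (h _).le)
      have hL' : ∑ I ∈ L.filter (fun I => I.length ≤ k + 1), F I
          = ∑ I ∈ L.filter (fun I => I.length ≤ k), F I
            + ∑ I ∈ L.filter (fun I => I.length = k + 1), F I := by
        rw [← Finset.sum_union]
        · refine Finset.sum_congr ?_ fun _ _ => rfl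
          ext I
          simp only [Finset.mem_filter, Finset.mem_union, ← and_or_left, Nat.le_succ_iff]
        · rw [Finset.disjoint_filter]
          intro I _ h1 h2
          omega
      rw [ih, hstep, hsplit, hL', add_assoc]
  obtain ⟨k, hk⟩ := exists_length_bound r t0 h n
  rw [main k]
  have h1 : (W k).filter (fun I => c < |wordRatio r I t0|) = ∅ := by
    refine Finset.filter_eq_empty_iff.2 fun I hI hlt => ?_
    rw [memW] at hI
    exact absurd (hk I hlt) (by omega)
  have h2 : L.filter (fun I => I.length ≤ k) = L := by
    refine Finset.filter_true_of_mem fun I hI => ?_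
    rw [memL] at hI
    have := hk _ hI.2.2
    rw [List.length_dropLast] at this
    omega
  rw [h1, h2]
  simp

/-! ### Self-similar measures -/

lemma selfSimilar_apply {Λ : Type*} [Fintype Λ] (r s : Λ → ℝ → ℝ) (p : Λ → ℝ) (t : ℝ)
    (μ : Measure ℝ) (hμ : IsSelfSimilarMeasure r s p t μ) (B : Set ℝ) (hB : MeasurableSet B) :
    μ B = ∑ i, ENNReal.ofReal (p i) * μ ((fun x => r i t * x + s i t) ⁻¹' B) := by
  conv_lhs => rw [hμ.2]
  rw [Measure.finsetSum_apply]
  refine Finset.sum_congr rfl fun i _ => ?_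
  rw [Measure.smul_apply, smul_eq_mul, Measure.map_apply (by fun_prop) hB]

lemma selfSimilar_cutset {Λ : Type*} [Fintype Λ] [Nonempty Λ] (r s : Λ → ℝ → ℝ)
    (p : Λ → ℝ) (hp : ∀ i, 0 < p i) (t0 t : ℝ) (h : ∀ i, |r i t0| < 1)
    (n : ℕ) (hn : 1 ≤ n)
    (μ : Measure ℝ) (hμ : IsSelfSimilarMeasure r s p t μ) (B : Set ℝ) (hB : MeasurableSet B) :
    μ B = ∑ I ∈ (genIdx_finite r t0 h n).toFinset,
      ENNReal.ofReal (wordP p I) * μ (wordFun r s I t ⁻¹' B) := by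
  have := cutset_sum r t0 h n hn
    (fun I => ENNReal.ofReal (wordP p I) * μ (wordFun r s I t ⁻¹' B)) ?_
  · rw [← this]
    simp only [wordP, List.map_nil, List.prod_nil, ENNReal.ofReal_one, one_mul]
    rfl
  · intro I
    rw [selfSimilar_apply r s p t μ hμ _ (wordFun_measurable r s I t hB), Finset.mul_sum]
    refine Finset.sum_congr rfl fun j _ => ?_
    rw [wordP_concat, ENNReal.ofReal_mul (wordP_pos p hp I).le, mul_assoc]
    congr 3
    ext x
    simp [wordFun]

/-- A self-similar measure is carried by any interval `[-R, R]` that the bounds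
`|r i t| ≤ ρ` and `|s i t| ≤ (1 - ρ) * R` make invariant: the mass at distance more than `c` from the interval does not exceed the mass at
distance more than `c / ρ ^ k`, for every `k`. -/
lemma selfSimilar_supp {Λ : Type*} [Fintype Λ] (r s : Λ → ℝ → ℝ) (p : Λ → ℝ)
    (hp : ∀ i, 0 < p i) (hp1 : ∑ i : Λ, p i = 1) (t : ℝ)
    (μ : Measure ℝ) (hμ : IsSelfSimilarMeasure r s p t μ)
    (ρ R : ℝ) (h0 : 0 < ρ) (h1 : ρ < 1) (hr : ∀ i, |r i t| ≤ ρ)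
    (hs : ∀ i, |s i t| ≤ (1 - ρ) * R) : μ {x | R < |x|} = 0 := by
  have := hμ.1
  have hmeas : ∀ c : ℝ, MeasurableSet {x : ℝ | c < |x|} := fun c =>
    measurableSet_lt measurable_const (measurable_id.abs)
  have hone : ∑ i, ENNReal.ofReal (p i) = 1 := by
    rw [← ENNReal.ofReal_sum_of_nonneg (fun i _ => (hp i).le), hp1, ENNReal.ofReal_one]
  have hle : ∀ c : ℝ, μ {x | R + c < |x|} ≤ μ {x | R + c / ρ < |x|} := by
    intro c
    rw [selfSimilar_apply r s p t μ hμ _ (hmeas _)]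
    calc _ ≤ ∑ i, ENNReal.ofReal (p i) * μ {x | R + c / ρ < |x|} := by
            refine Finset.sum_le_sum fun i _ => ?_
            gcongr
            intro x hx
            simp only [mem_preimage, mem_ofPred_eq] at hx ⊢
            have h2 : |r i t * x + s i t| ≤ ρ * |x| + (1 - ρ) * R := by
              refine (abs_add_le _ _).trans (add_le_add ?_ (hs i))
              rw [abs_mul]
              exact mul_le_mul_of_nonneg_right (hr i) (abs_nonneg _)
            have h3 : c < ρ * (|x| - R) := by linarith
            have h4 : c / ρ < |x| - R := by
              rw [div_lt_iff₀ h0]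
              linarith
            linarith
      _ = _ := by rw [← Finset.sum_mul, hone, one_mul]
  have hit : ∀ c : ℝ, ∀ k : ℕ, μ {x | R + c < |x|} ≤ μ {x | R + c / ρ ^ k < |x|} := by
    intro c k
    induction k with
    | zero => simp
    | succ k ih =>
      refine ih.trans ((hle _).trans_eq ?_)
      rw [pow_succ, div_div]
  have hz : ∀ c : ℝ, 0 < c → μ {x | R + c < |x|} = 0 := by
    intro c hc
    have hanti : Antitone fun k : ℕ => {x : ℝ | R + c / ρ ^ k < |x|} := by
      intro k l hkl x hx
      simp only [mem_ofPred_eq] at hx ⊢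
      refine lt_of_le_of_lt ?_ hx
      have : ρ ^ l ≤ ρ ^ k := pow_le_pow_of_le_one h0.le h1.le hkl
      gcongr
    have hlim := tendsto_measure_iInter_atTop (μ := μ)
      (fun k => (hmeas (R + c / ρ ^ k)).nullMeasurableSet) hanti
      ⟨0, measure_ne_top _ _⟩
    have hempty : (⋂ k : ℕ, {x : ℝ | R + c / ρ ^ k < |x|}) = ∅ := by
      refine eq_empty_iff_forall_notMem.2 fun x hx => ?_
      simp only [mem_iInter, mem_ofPred_eq] at hx
      obtain ⟨k, hk⟩ := exists_pow_lt_of_lt_one (y := ρ) (x := c / (|x| + |R| + 1))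
        (by positivity) h1
      have h2 := hx k
      have h3 : |x| + |R| + 1 < c / ρ ^ k := by
        rw [lt_div_iff₀ (by positivity)] at hk ⊢
        linarith
      linarith [neg_abs_le R]
    rw [hempty, measure_empty] at hlim
    exact le_antisymm (ge_of_tendsto' hlim (hit c)) zero_le
  have hU : {x : ℝ | R < |x|} = ⋃ k : ℕ, {x : ℝ | R + 1 / ((k : ℝ) + 1) < |x|} := by
    ext x
    simp only [mem_ofPred_eq, mem_iUnion]
    constructor
    · intro hx
      obtain ⟨k, hk⟩ := exists_nat_one_div_lt (sub_pos.2 hx)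
      exact ⟨k, by linarith⟩
    · rintro ⟨k, hk⟩
      have : 0 < 1 / ((k : ℝ) + 1) := by positivity
      linarith
  rw [hU]
  exact measure_iUnion_null fun k => hz _ (by positivity)

/-- Two orbits along the same word, one per parameter, stay within the contraction at `t0` of
their initial distance plus a geometric series of one-step errors `η`. -/
lemma wordFun_close {Λ : Type*} (r s : Λ → ℝ → ℝ) (t0 t ρ R η : ℝ)
    (h0 : 0 < ρ) (h1 : ρ < 1) (hη : 0 ≤ η)
    (hr0 : ∀ i, |r i t0| ≤ ρ) (hr : ∀ i, |r i t| ≤ ρ) (hs : ∀ i, |s i t| ≤ (1 - ρ) * R)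
    (hdiff : ∀ i, |r i t - r i t0| * R + |s i t - s i t0| ≤ η)
    (y y' : ℝ) (hy : |y| ≤ R) (I : List Λ) :
    |wordFun r s I t y| ≤ R ∧
    |wordFun r s I t y - wordFun r s I t0 y'| ≤ |wordRatio r I t0| * |y - y'| + η / (1 - ρ) := by
  have h1' : 0 < 1 - ρ := by linarith
  induction I with
  | nil =>
    refine ⟨hy, ?_⟩
    have : 0 ≤ η / (1 - ρ) := by positivity
    simpa [wordFun, wordRatio] using this
  | cons i I ih =>
    obtain ⟨ihb, ihd⟩ := ih
    have e1 : wordFun r s (i :: I) t y = r i t * wordFun r s I t y + s i t := rfl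
    have e2 : wordFun r s (i :: I) t0 y' = r i t0 * wordFun r s I t0 y' + s i t0 := rfl
    have e3 : wordRatio r (i :: I) t0 = r i t0 * wordRatio r I t0 := by simp [wordRatio]
    rw [e1, e2, e3]
    set u := wordFun r s I t y
    set u' := wordFun r s I t0 y'
    constructor
    · refine (abs_add_le _ _).trans ?_
      rw [abs_mul]
      have := mul_le_mul (hr i) ihb (abs_nonneg _) h0.le
      linarith [hs i]
    · have e4 : r i t * u + s i t - (r i t0 * u' + s i t0)
          = r i t0 * (u - u') + ((r i t - r i t0) * u + (s i t - s i t0)) := by ring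
      rw [e4]
      have b1 : |(r i t - r i t0) * u + (s i t - s i t0)| ≤ η := by
        refine (abs_add_le _ _).trans ((add_le_add_left ?_ _).trans (hdiff i))
        rw [abs_mul]
        exact mul_le_mul_of_nonneg_left ihb (abs_nonneg _)
      have b2 : |r i t0 * (u - u')| ≤
          |r i t0 * wordRatio r I t0| * |y - y'| + ρ * (η / (1 - ρ)) := by
        rw [abs_mul, abs_mul]
        have := mul_le_mul_of_nonneg_left ihd (abs_nonneg (r i t0))
        have h3 : |r i t0| * (η / (1 - ρ)) ≤ ρ * (η / (1 - ρ)) :=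
          mul_le_mul_of_nonneg_right (hr0 i) (by positivity)
        linarith
      have b3 : ρ * (η / (1 - ρ)) + η = η / (1 - ρ) := by
        field_simp
        ring
      have := abs_add_le (r i t0 * (u - u')) ((r i t - r i t0) * u + (s i t - s i t0))
      linarith

/-! ### Decomposition over the dyadic intervals of generation `n` -/

/-- Entropy decomposition over the pieces `ν_Q`, with error `log₂ M` whenever each dyadic cell
of generation `k` is charged by the pieces of at most `M` intervals `Q`. -/
lemma entropy_decomp {Λ : Type*} [Fintype Λ] [Nonempty Λ] (r s : Λ → ℝ → ℝ)
    (p : Λ → ℝ) (hp : ∀ i, 0 < p i) (t0 t : ℝ) (h : ∀ i, |r i t0| < 1)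
    (n : ℕ) (hn : 1 ≤ n) (x0 : ℝ)
    (μ : Measure ℝ) (hμ : IsSelfSimilarMeasure r s p t μ) (R : ℝ)
    (hR : μ {x | R < |x|} = 0) (k M : ℕ)
    (hM : ∀ e : ℤ, ∀ T : Finset ℤ, (∀ j ∈ T, ∃ I ∈ AQ r s t0 n x0 j,
      μ (wordFun r s I t ⁻¹' {y : ℝ | ⌊(2 : ℝ) ^ k * y⌋ = e}) ≠ 0) → T.card ≤ M) :
    |ent1 μ k - ((∑' j : ℤ, aQ r s p t0 n x0 j * Real.logb 2 (aQ r s p t0 n x0 j)⁻¹) +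
      ∑' j : ℤ, aQ r s p t0 n x0 j * ent1 (nuQ r s p t0 n x0 j μ t) k)| ≤ Real.logb 2 M := by
  have hprob := hμ.1
  set cell : ℤ → Set ℝ := fun e => {y : ℝ | ⌊(2 : ℝ) ^ k * y⌋ = e} with hcell
  have cell_meas : ∀ e, MeasurableSet (cell e) := fun e =>
    (Int.measurable_floor.comp (measurable_id.const_mul _)) (measurableSet_singleton e)
  have cell_sum : ∀ θ : Measure ℝ, IsProbabilityMeasure θ → ∑' e, θ (cell e) = 1 := by
    intro θ _
    rw [← measure_iUnion _ cell_meas]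
    · have : (⋃ e, cell e) = univ := by
        ext x
        simp [hcell]
      rw [this, measure_univ]
    · intro e e' hne
      refine Set.disjoint_left.2 fun x hx hx' => hne ?_
      exact hx.symm.trans hx'
  set L := (genIdx_finite r t0 h n).toFinset with hL
  let A : ℤ → Finset (List Λ) := fun j =>
    L.filter (fun I => ⌊(2 : ℝ) ^ n * wordFun r s I t0 x0⌋ = j)
  have hA : ∀ j, AQ r s t0 n x0 j = (A j : Set (List Λ)) := by
    intro j
    ext I
    simp [A, hL, AQ]
  have haQ : ∀ j, aQ r s p t0 n x0 j = ∑ I ∈ A j, wordP p I := by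
    intro j
    unfold aQ
    rw [hA j]
    exact Finset.tsum_subtype (A j) (wordP p)
  set a : ℤ → ℝ := aQ r s p t0 n x0 with ha
  let S : Finset ℤ := L.image (fun I => ⌊(2 : ℝ) ^ n * wordFun r s I t0 x0⌋)
  have hSA : ∀ j, j ∈ S ↔ (A j).Nonempty := by
    intro j
    simp [S, A, Finset.Nonempty, Finset.mem_filter]
  have ha0 : ∀ j ∉ S, a j = 0 := by
    intro j hj
    rw [hSA, Finset.not_nonempty_iff_eq_empty] at hj
    rw [haQ, hj, Finset.sum_empty]
  have hapos : ∀ j ∈ S, 0 < a j := by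
    intro j hj
    rw [haQ]
    exact Finset.sum_pos (fun I _ => wordP_pos p hp I) ((hSA j).1 hj)
  set ν : ℤ → Measure ℝ := fun j => nuQ r s p t0 n x0 j μ t with hν
  have hνB : ∀ j B, MeasurableSet B → ν j B = (ENNReal.ofReal (a j))⁻¹ *
      ∑ I ∈ A j, ENNReal.ofReal (wordP p I) * μ (wordFun r s I t ⁻¹' B) := by
    intro j B hB
    simp only [hν, nuQ]
    rw [Measure.smul_apply, smul_eq_mul, Measure.sum_apply _ hB]
    congr 1
    rw [hA j]
    refine (Finset.tsum_subtype (A j)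
      (fun I => (ENNReal.ofReal (wordP p I) • μ.map (wordFun r s I t)) B)).trans ?_
    refine Finset.sum_congr rfl fun I _ => ?_
    rw [Measure.smul_apply, smul_eq_mul, Measure.map_apply (wordFun_measurable r s I t) hB]
  have hνB' : ∀ j ∈ S, ∀ B, MeasurableSet B → ENNReal.ofReal (a j) * ν j B =
      ∑ I ∈ A j, ENNReal.ofReal (wordP p I) * μ (wordFun r s I t ⁻¹' B) := by
    intro j hj B hB
    rw [hνB j B hB, ← mul_assoc, ENNReal.mul_inv_cancel (by simpa using hapos j hj)
      ENNReal.ofReal_ne_top, one_mul]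
  have hνprob : ∀ j ∈ S, IsProbabilityMeasure (ν j) := by
    intro j hj
    refine ⟨?_⟩
    rw [hνB j _ MeasurableSet.univ]
    simp only [preimage_univ, measure_univ, mul_one]
    rw [← ENNReal.ofReal_sum_of_nonneg (fun I _ => (wordP_pos p hp I).le), ← haQ]
    exact ENNReal.inv_mul_cancel (by simpa using hapos j hj) ENNReal.ofReal_ne_top
  have hmix : ∀ B, MeasurableSet B → μ B = ∑ j ∈ S, ENNReal.ofReal (a j) * ν j B := by
    intro B hB
    rw [selfSimilar_cutset r s p hp t0 t h n hn μ hμ B hB, ← hL,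
      ← Finset.sum_fiberwise_of_maps_to (t := S)
        (g := fun I => ⌊(2 : ℝ) ^ n * wordFun r s I t0 x0⌋)
        (fun I hI => Finset.mem_image_of_mem _ hI)]
    exact Finset.sum_congr rfl fun j hj => (hνB' j hj B hB).symm
  let E : Finset ℤ := Finset.Icc ⌊(2 : ℝ) ^ k * (-R)⌋ ⌊(2 : ℝ) ^ k * R⌋
  have hE : ∀ e ∉ E, μ (cell e) = 0 := by
    intro e he
    refine measure_mono_null (fun x hx => ?_) hR
    by_contra hx'
    simp only [mem_ofPred_eq, not_lt] at hx'
    obtain ⟨h1, h2⟩ := abs_le.1 hx'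
    refine he (Finset.mem_Icc.2 ?_)
    rw [← show ⌊(2 : ℝ) ^ k * x⌋ = e from hx]
    constructor <;> apply Int.floor_le_floor <;> gcongr
  have hEν : ∀ j ∈ S, ∀ e ∉ E, ν j (cell e) = 0 := by
    intro j hj e he
    have h1 := hE e he
    rw [hmix _ (cell_meas e), Finset.sum_eq_zero_iff] at h1
    exact (mul_eq_zero.1 (h1 j hj)).resolve_left (by simpa using hapos j hj)
  have hsum1 : ∀ θ : Measure ℝ, IsProbabilityMeasure θ → (∀ e ∉ E, θ (cell e) = 0) →
      ∑ e ∈ E, (θ (cell e)).toReal = 1 := by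
    intro θ hθ h0
    have hE1 : ∑' e, θ (cell e) = ∑ e ∈ E, θ (cell e) := tsum_eq_sum h0
    rw [← ENNReal.toReal_sum (fun e _ => measure_ne_top θ _), ← hE1, cell_sum θ hθ,
      ENNReal.toReal_one]
  have hent : ∀ θ : Measure ℝ, (∀ e ∉ E, θ (cell e) = 0) →
      ent1 θ k = ∑ e ∈ E, -((θ (cell e)).toReal * Real.logb 2 (θ (cell e)).toReal) := by
    intro θ h0
    unfold ent1
    rw [tsum_eq_sum (s := E)]
    · rfl
    · intro e he
      have := h0 e he
      simp only [hcell] at this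
      simp [negMulLog2, this]
  have hmain := mixture_entropy S E a (fun j e => (ν j (cell e)).toReal)
    (fun e => (μ (cell e)).toReal) hapos (fun _ _ => ENNReal.toReal_nonneg)
    (fun j hj => hsum1 _ (hνprob j hj) (hEν j hj)) ?_ (hsum1 μ hprob hE) M ?_
  · have hentν : ∑ j ∈ S, a j * ent1 (nuQ r s p t0 n x0 j μ t) k = ∑ j ∈ S, a j *
        ∑ e ∈ E, -((ν j (cell e)).toReal * Real.logb 2 (ν j (cell e)).toReal) :=
      Finset.sum_congr rfl fun j hj => by rw [← hent (ν j) (hEν j hj)]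
    rw [hent μ hE, tsum_eq_sum (s := S) (fun j hj => by rw [ha0 j hj, zero_mul]),
      tsum_eq_sum (s := S) (fun j hj => by rw [ha0 j hj, zero_mul]), hentν]
    exact hmain
  · intro e
    rw [hmix _ (cell_meas e), ENNReal.toReal_sum]
    · refine Finset.sum_congr rfl fun j hj => ?_
      rw [ENNReal.toReal_mul, ENNReal.toReal_ofReal (hapos j hj).le]
    · intro j hj
      have := hνprob j hj
      exact ENNReal.mul_ne_top ENNReal.ofReal_ne_top (measure_ne_top _ _)
  · intro e _
    refine hM e _ fun j hj => ?_
    obtain ⟨hjS, hne⟩ := Finset.mem_filter.1 hj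
    have h1 : ENNReal.ofReal (a j) * ν j (cell e) ≠ 0 := by
      intro h0
      apply hne
      have := congrArg ENNReal.toReal h0
      rwa [ENNReal.toReal_mul, ENNReal.toReal_ofReal (hapos j hjS).le] at this
    rw [hνB' j hjS _ (cell_meas e)] at h1
    obtain ⟨I, hI, hne'⟩ := Finset.exists_ne_zero_of_sum_ne_zero h1
    refine ⟨I, ?_, right_ne_zero_of_mul hne'⟩
    rw [hA j]
    exact hI

lemma card_le_of_near (T : Finset ℤ) (z D : ℝ) (hT : ∀ j ∈ T, |(j : ℝ) - z| ≤ D) :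
    T.card ≤ ⌈2 * D + 1⌉₊ := by
  rcases T.eq_empty_or_nonempty with rfl | ⟨j0, hj0⟩
  · simp
  have hD : 0 ≤ D := (abs_nonneg _).trans (hT j0 hj0)
  have hsub : T ⊆ Finset.Icc ⌈z - D⌉ ⌊z + D⌋ := by
    intro j hj
    obtain ⟨h1, h2⟩ := abs_le.1 (hT j hj)
    rw [Finset.mem_Icc, Int.ceil_le, Int.le_floor]
    constructor <;> linarith
  refine (Finset.card_le_card hsub).trans ?_
  rw [Int.card_Icc, Int.toNat_le]
  have h1 := Int.floor_le (z + D)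
  have h2 := Int.le_ceil (z - D)
  have h3 := Nat.le_ceil (2 * D + 1)
  have : ((⌊z + D⌋ + 1 - ⌈z - D⌉ : ℤ) : ℝ) ≤ ((⌈2 * D + 1⌉₊ : ℕ) : ℝ) := by
    push_cast
    linarith
  exact_mod_cast this

/-- Uniform data for parameters near `t0`: a contraction bound `ρ`, a radius `R` whose interval
is invariant and contains `K`, and a Lipschitz bound `D` for the maps on that interval. -/
lemma local_data {Λ : Type*} [Fintype Λ] [Nonempty Λ] (r s : Λ → ℝ → ℝ) (t0 : ℝ)
    (h : ∀ i, |r i t0| < 1) (hdr : ∀ i, DifferentiableAt ℝ (r i) t0)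
    (hds : ∀ i, DifferentiableAt ℝ (s i) t0) (K : Set ℝ) (hK : IsCompact K) :
    ∃ ρ R D δ : ℝ, 0 < ρ ∧ ρ < 1 ∧ 0 ≤ R ∧ 0 ≤ D ∧ 0 < δ ∧ (∀ x ∈ K, |x| ≤ R) ∧
      (∀ i, |r i t0| ≤ ρ) ∧ ∀ t, |t - t0| < δ → ∀ i, |r i t| ≤ ρ ∧ |s i t| ≤ (1 - ρ) * R ∧
        |r i t - r i t0| * R + |s i t - s i t0| ≤ D * |t - t0| := by
  obtain ⟨ρ, hρ0, hρ1, hρ⟩ := exists_ratio (fun i => r i t0) h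
  obtain ⟨B, hB⟩ := hK.isBounded.exists_norm_le
  have h1 : 0 < 1 - ρ := by linarith
  set s0 := ∑ i, |s i t0| with hs0
  have hs0_nonneg : 0 ≤ s0 := Finset.sum_nonneg fun i _ => abs_nonneg _
  set R := |B| + (s0 + 1) / (1 - ρ) with hRdef
  have hR0 : 0 ≤ R := by positivity
  have hSR : s0 + 1 ≤ (1 - ρ) * R := by
    have : (1 - ρ) * ((s0 + 1) / (1 - ρ)) = s0 + 1 := by field_simp
    rw [hRdef, mul_add, this]
    have : 0 ≤ (1 - ρ) * |B| := by positivity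
    linarith
  have hbr : ∀ i, ∃ c : ℝ, ∀ᶠ t in nhds t0, |r i t - r i t0| ≤ c * |t - t0| := fun i =>
    (hdr i).isBigO_sub.bound
  have hbs : ∀ i, ∃ c : ℝ, ∀ᶠ t in nhds t0, |s i t - s i t0| ≤ c * |t - t0| := fun i =>
    (hds i).isBigO_sub.bound
  choose cr hcr using hbr
  choose cs hcs using hbs
  have hev : ∀ᶠ t in nhds t0, ∀ i, |r i t| < ρ ∧ |s i t| < s0 + 1 ∧
      |r i t - r i t0| ≤ cr i * |t - t0| ∧ |s i t - s i t0| ≤ cs i * |t - t0| := by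
    rw [Filter.eventually_all]
    intro i
    have e1 := (hdr i).continuousAt.abs.eventually_lt continuousAt_const (hρ i)
    have hsi : |s i t0| < s0 + 1 :=
      lt_of_le_of_lt (Finset.single_le_sum (f := fun i => |s i t0|)
        (fun i _ => abs_nonneg _) (Finset.mem_univ i)) (lt_add_one _)
    have e2 := (hds i).continuousAt.abs.eventually_lt continuousAt_const hsi
    filter_upwards [e1, e2, hcr i, hcs i] with t a1 a2 a3 a4
    exact ⟨a1, a2, a3, a4⟩
  obtain ⟨δ, hδ, hδt⟩ := Metric.eventually_nhds_iff.1 hev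
  refine ⟨ρ, R, ∑ i, (|cr i| * R + |cs i|), δ, hρ0, hρ1, hR0, ?_, hδ, ?_,
    fun i => (hρ i).le, ?_⟩
  · exact Finset.sum_nonneg fun i _ => by positivity
  · intro x hx
    have h2 : |x| ≤ B := hB x hx
    have h3 : 0 ≤ (s0 + 1) / (1 - ρ) := by positivity
    linarith [le_abs_self B]
  · intro t ht i
    obtain ⟨a1, a2, a3, a4⟩ := hδt (y := t) (by rwa [Real.dist_eq]) i
    refine ⟨a1.le, a2.le.trans hSR, ?_⟩
    have h2 : |cr i| * R + |cs i| ≤ ∑ i, (|cr i| * R + |cs i|) :=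
      Finset.single_le_sum (f := fun i => |cr i| * R + |cs i|)
        (fun i _ => by positivity) (Finset.mem_univ i)
    have h3 := mul_le_mul_of_nonneg_right h2 (abs_nonneg (t - t0))
    have h4 : |r i t - r i t0| ≤ |cr i| * |t - t0| :=
      a3.trans (mul_le_mul_of_nonneg_right (le_abs_self _) (abs_nonneg _))
    have h5 : |s i t - s i t0| ≤ |cs i| * |t - t0| :=
      a4.trans (mul_le_mul_of_nonneg_right (le_abs_self _) (abs_nonneg _))
    have h6 := mul_le_mul_of_nonneg_right h4 hR0
    linarith

/-- A uniform bound on the number of intervals `Q` of generation `n` whose pieces charge a given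
cell of a finer generation `k`, for `t` within `2⁻ⁿ` of `t0` satisfying the bounds of `local_data`. -/
lemma overlap_bound {Λ : Type*} [Fintype Λ] (r s : Λ → ℝ → ℝ) (t0 t ρ R D : ℝ)
    (hρ0 : 0 < ρ) (hρ1 : ρ < 1) (hD : 0 ≤ D)
    (hr0 : ∀ i, |r i t0| ≤ ρ)
    (hdat : ∀ i, |r i t| ≤ ρ ∧ |s i t| ≤ (1 - ρ) * R ∧
        |r i t - r i t0| * R + |s i t - s i t0| ≤ D * |t - t0|)
    (n k : ℕ) (hnk : n ≤ k) (ht : |t - t0| ≤ (2 : ℝ) ^ (-(n : ℝ)))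
    (x0 : ℝ) (hx0 : |x0| ≤ R) (μ : Measure ℝ) (hR : μ {x | R < |x|} = 0)
    (e : ℤ) (T : Finset ℤ) (hT : ∀ j ∈ T, ∃ I ∈ AQ r s t0 n x0 j,
      μ (wordFun r s I t ⁻¹' {y : ℝ | ⌊(2 : ℝ) ^ k * y⌋ = e}) ≠ 0) :
    T.card ≤ ⌈2 * (2 * R + D / (1 - ρ) + 2) + 1⌉₊ := by
  refine card_le_of_near T ((2 : ℝ) ^ n / 2 ^ k * e) _ fun j hj => ?_
  obtain ⟨I, ⟨hI, hIj⟩, hne⟩ := hT j hj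
  have h1ρ : 0 < 1 - ρ := by linarith
  obtain ⟨y, hy, hyR⟩ : ∃ y, ⌊(2 : ℝ) ^ k * wordFun r s I t y⌋ = e ∧ |y| ≤ R := by
    by_contra hcon
    push Not at hcon
    exact hne (measure_mono_null (fun y hy => hcon y hy) hR)
  have hclose := (wordFun_close r s t0 t ρ R (D * |t - t0|) hρ0 hρ1 (by positivity) hr0
    (fun i => (hdat i).1) (fun i => (hdat i).2.1) (fun i => (hdat i).2.2) y x0 hyR I).2
  set u := wordFun r s I t y
  set u' := wordFun r s I t0 x0
  have hc : (2 : ℝ) ^ (-(n : ℝ)) = ((2 : ℝ) ^ n)⁻¹ := by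
    rw [Real.rpow_neg two_pos.le, Real.rpow_natCast]
  have h2n : (0 : ℝ) < 2 ^ n := by positivity
  have hyx : |y - x0| ≤ 2 * R := (abs_sub _ _).trans (by linarith)
  have hd : |u - u'| ≤ ((2 : ℝ) ^ n)⁻¹ * (2 * R + D / (1 - ρ)) := by
    have a1 : |wordRatio r I t0| * |y - x0| ≤ ((2 : ℝ) ^ n)⁻¹ * (2 * R) :=
      mul_le_mul (hc ▸ hI.2.1) hyx (abs_nonneg _) (by positivity)
    have a2 : D * |t - t0| / (1 - ρ) ≤ D * ((2 : ℝ) ^ n)⁻¹ / (1 - ρ) := by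
      rw [← hc]
      gcongr
    have a3 : D * ((2 : ℝ) ^ n)⁻¹ / (1 - ρ) = ((2 : ℝ) ^ n)⁻¹ * (D / (1 - ρ)) := by ring
    linarith
  have hd' : |(2 : ℝ) ^ n * u - 2 ^ n * u'| ≤ 2 * R + D / (1 - ρ) := by
    rw [← mul_sub, abs_mul, abs_of_pos h2n]
    have := mul_le_mul_of_nonneg_left hd h2n.le
    rwa [mul_inv_cancel_left₀ h2n.ne'] at this
  have hq : (2 : ℝ) ^ n / 2 ^ k ≤ 1 := by
    rw [div_le_one (by positivity)]
    exact pow_le_pow_right₀ one_le_two hnk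
  have hq0 : (0 : ℝ) < (2 : ℝ) ^ n / 2 ^ k := by positivity
  obtain ⟨f1, f2⟩ := Int.floor_eq_iff.1 hy
  obtain ⟨g1, g2⟩ := Int.floor_eq_iff.1 hIj
  have e1 : (2 : ℝ) ^ n / 2 ^ k * (2 ^ k * u) = 2 ^ n * u := by
    field_simp
  have f1' := mul_le_mul_of_nonneg_left f1 hq0.le
  have f2' := mul_le_mul_of_nonneg_left f2.le hq0.le
  rw [e1] at f1' f2'
  rw [mul_add, mul_one] at f2'
  obtain ⟨d1, d2⟩ := abs_le.1 hd'
  rw [abs_le]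
  constructor <;> linarith

/-- the global entropy at scale `2^{-3nm}` decomposes, up to an additive constant
depending only on the attractor `K` and the IFS data at `t₀`, as the entropy of the weights
`(a_Q)_Q` plus the average entropy of the measures `ν_Q`, both at `t₀` and at a nearby
parameter `t` with `|t - t₀| = 2^{-nm±m}`. -/
theorem stmt7 {Λ : Type*} [Fintype Λ] [Nonempty Λ] (a b : ℝ)
    (r s : Λ → ℝ → ℝ)
    (hcontr : ∀ i, ∀ t ∈ Ioo a b, 0 < |r i t| ∧ |r i t| < 1)
    (hC2 : ∀ i, ContDiffOn ℝ 2 (r i) (Ioo a b) ∧ ContDiffOn ℝ 2 (s i) (Ioo a b))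
    (hreg : ∀ J' ⊆ Ioo a b, IsCompact J' →
      ∃ C : ℝ, ∀ x : ℕ → Λ, ∀ t ∈ J',
        |deriv (codingPoint r s x) t| ≤ C ∧ |deriv (deriv (codingPoint r s x)) t| ≤ C)
    (β : ℝ) (hβ : 0 ≤ β)
    (htrans : ∃ Cβ : ℝ, 0 < Cβ ∧ ∀ t ∈ Ioo a b, ∀ x y : ℕ → Λ, x ≠ y →
      |codingPoint r s x t - codingPoint r s y t| ≤ Cβ * seqDist x y ^ β →
      Cβ * seqDist x y ^ β ≤ |deriv (fun u => codingPoint r s x u - codingPoint r s y u) t|)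
    (p : Λ → ℝ) (hp : ∀ i, 0 < p i) (hp1 : ∑ i : Λ, p i = 1)
    (μ : ℝ → Measure ℝ) (hμ : ∀ t ∈ Ioo a b, IsSelfSimilarMeasure r s p t (μ t))
    (t0 : ℝ) (ht0 : t0 ∈ Ioo a b)
    (K : Set ℝ) (hKne : K.Nonempty) (hKc : IsCompact K)
    (hKinv : K = ⋃ i : Λ, (fun x => r i t0 * x + s i t0) '' K) :
    ∃ m : ℕ, β + 3 ≤ (m : ℝ) ∧ ∃ C : ℝ,
      ∀ n : ℕ, 1 ≤ n → ∀ t ∈ Ioo a b,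
        (2 : ℝ) ^ (-((n * m : ℕ) : ℝ) - (m : ℝ)) ≤ |t - t0| →
        |t - t0| ≤ (2 : ℝ) ^ (-((n * m : ℕ) : ℝ) + (m : ℝ)) →
        ∀ x0 ∈ K,
          |ent1 (μ t0) (3 * n * m) -
              ((∑' j : ℤ, aQ r s p t0 n x0 j * Real.logb 2 (aQ r s p t0 n x0 j)⁻¹) +
                ∑' j : ℤ, aQ r s p t0 n x0 j *
                  ent1 (nuQ r s p t0 n x0 j (μ t0) t0) (3 * n * m))| ≤ C ∧
          |ent1 (μ t) (3 * n * m) -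
              ((∑' j : ℤ, aQ r s p t0 n x0 j * Real.logb 2 (aQ r s p t0 n x0 j)⁻¹) +
                ∑' j : ℤ, aQ r s p t0 n x0 j *
                  ent1 (nuQ r s p t0 n x0 j (μ t) t) (3 * n * m))| ≤ C := by
  obtain ⟨m, hm⟩ := exists_nat_ge (β + 3)
  have hm3 : (3 : ℝ) ≤ m := by linarith
  have hm3' : 3 ≤ m := by exact_mod_cast hm3
  have h1 : ∀ i, |r i t0| < 1 := fun i => (hcontr i t0 ht0).2
  have hnhds : Ioo a b ∈ nhds t0 := isOpen_Ioo.mem_nhds ht0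
  obtain ⟨ρ, R, D, δ, hρ0, hρ1, hR0, hD, hδ, hKR, hr0, hdat⟩ := local_data r s t0 h1
    (fun i => ((hC2 i).1.contDiffAt hnhds).differentiableAt (by norm_num))
    (fun i => ((hC2 i).2.contDiffAt hnhds).differentiableAt (by norm_num)) K hKc
  obtain ⟨N0, hN0⟩ := exists_pow_lt_of_lt_one hδ (show (1 / 2 : ℝ) < 1 by norm_num)
  set N := max N0 2 with hN
  -- Generations below `N` are handled by the crude bound `#Λ_n`, which needs no closeness of
  -- `t` to `t0`; the others by the bounded overlap of the pieces.
  set M : ℕ := ⌈2 * (2 * R + D / (1 - ρ) + 2) + 1⌉₊ +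
    ∑ n ∈ Finset.range N, (genIdx_finite r t0 h1 n).toFinset.card with hMdef
  have main : ∀ n : ℕ, 1 ≤ n → ∀ t ∈ Ioo a b,
      |t - t0| ≤ (2 : ℝ) ^ (-((n * m : ℕ) : ℝ) + (m : ℝ)) → ∀ x0 ∈ K,
      |ent1 (μ t) (3 * n * m) -
        ((∑' j : ℤ, aQ r s p t0 n x0 j * Real.logb 2 (aQ r s p t0 n x0 j)⁻¹) +
          ∑' j : ℤ, aQ r s p t0 n x0 j *
            ent1 (nuQ r s p t0 n x0 j (μ t) t) (3 * n * m))| ≤ Real.logb 2 M := by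
    intro n hn t ht htt x0 hx0
    rcases lt_or_ge n N with hnN | hnN
    · obtain ⟨ρ', h0', h1', hρ'⟩ := exists_ratio (fun i => r i t) (fun i => (hcontr i t ht).2)
      have hsupp := selfSimilar_supp r s p hp hp1 t (μ t) (hμ t ht) ρ'
        ((∑ i, |s i t|) / (1 - ρ')) h0' h1' (fun i => (hρ' i).le) (fun i => by
          rw [mul_div_cancel₀ _ (by linarith : (1 - ρ') ≠ 0)]
          exact Finset.single_le_sum (f := fun i => |s i t|)
            (fun i _ => abs_nonneg _) (Finset.mem_univ i))
      refine entropy_decomp r s p hp t0 t h1 n hn x0 (μ t) (hμ t ht) _ hsupp _ M ?_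
      intro e T hT
      have hsub : T ⊆ (genIdx_finite r t0 h1 n).toFinset.image
          (fun I => ⌊(2 : ℝ) ^ n * wordFun r s I t0 x0⌋) := by
        intro j hj
        obtain ⟨I, hI, -⟩ := hT j hj
        exact Finset.mem_image.2 ⟨I, by simpa using hI.1, hI.2⟩
      refine (Finset.card_le_card hsub).trans (Finset.card_image_le.trans ?_)
      exact (Finset.single_le_sum
        (f := fun n => (genIdx_finite r t0 h1 n).toFinset.card)
        (fun _ _ => Nat.zero_le _) (Finset.mem_range.2 hnN)).trans (Nat.le_add_left _ _)
    · have hn2 : 2 ≤ n := (le_max_right _ _).trans hnN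
      have hexp : -((n * m : ℕ) : ℝ) + (m : ℝ) ≤ -(n : ℝ) := by
        have hn2' : (2 : ℝ) ≤ n := by exact_mod_cast hn2
        push_cast
        nlinarith
      have htn : |t - t0| ≤ (2 : ℝ) ^ (-(n : ℝ)) :=
        htt.trans (Real.rpow_le_rpow_of_exponent_le one_le_two hexp)
      have htδ : |t - t0| < δ := by
        refine htn.trans_lt (lt_of_le_of_lt ?_ hN0)
        rw [Real.rpow_neg two_pos.le, Real.rpow_natCast, ← inv_pow, ← one_div]
        exact pow_le_pow_of_le_one (by norm_num) (by norm_num) ((le_max_left _ _).trans hnN)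
      have hd := hdat t htδ
      have hsupp := selfSimilar_supp r s p hp hp1 t (μ t) (hμ t ht) ρ R hρ0 hρ1
        (fun i => (hd i).1) (fun i => (hd i).2.1)
      refine entropy_decomp r s p hp t0 t h1 n hn x0 (μ t) (hμ t ht) R hsupp _ M ?_
      intro e T hT
      have hnk : n ≤ 3 * n * m := by nlinarith
      exact (overlap_bound r s t0 t ρ R D hρ0 hρ1 hD hr0 hd n _ hnk htn x0 (hKR x0 hx0)
        (μ t) hsupp e T hT).trans (Nat.le_add_right _ _)
  refine ⟨m, hm, Real.logb 2 M, fun n hn t ht _ htt x0 hx0 => ⟨?_, main n hn t ht htt x0 hx0⟩⟩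
  refine main n hn t0 ht0 ?_ x0 hx0
  rw [sub_self, abs_zero]
  positivity

end
end

section
/- Given 0 < γ < 1 and l ∈ ℕ, there exists δ > 0 such that the following holds for all sufficiently large n. Let A ⊂ [0,1] ∩ 2^{−n}ℤ and let η be a probability measure on [0,1] ∩ 2^{−n}ℤ with η(A) ≥ 1/2 and such that for each x ∈ A, #{1 ≤ k ≤ n : η(D_k(x)) ≥ 2·η(D_{k+l}(x))} ≥ (1 − γ/2)n. Let B ⊂ [0,1] ∩ 2^{−n}ℤ and, for each a ∈ A, let B_a ⊂ B. If |B| ≤ 2^{n(1−γ)} and |B_a| ≥ |B|^{1−δ} for all a ∈ A, then |⋃_{a∈A}(a + B_a)| ≥ |B|^{1+δ}, where a + B_a = {a + b : b ∈ B_a}. -/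
/-!
Write `η_A` for the restriction of `η` to `A`. If the set of sums had fewer than `|B| ^ (1 + δ)`
elements, Cauchy–Schwarz would bound the `ℓ²` norm of `η_A * 1_B` from below by nearly the norm of
`1_B`. The `ℓ²` norms of the iterated convolutions of `η_A` with `1_B` are log-convex
(`nsq_log_convex`), so for every fixed `k` the `k`-fold convolution of `η_A` would have an atom of
size at least `4 ^ (-k) |B| ^ (-1 - 3δk)` (`atoms_of_small_sumset`).

The branching hypothesis rules this out for a suitable bounded `k = 4 ^ m` (`small_atoms`). Call a
dyadic level good for a point if `η` has large variance on the interval of that level around the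
point, or if the point lies in an exceptionally light descendant of this interval. At a bad level
most of the nearby mass is carried by three adjacent short intervals, so only `3l` of the next `L`
levels can branch (`card_branch_le`); hence every point of `A` of positive mass has at
least about `(1 - γ/2) n` good levels (`good_count`).

The gain from good levels comes from a multiscale induction on the dyadic tree, descending `m`
levels at a time in `k = 4 ^ m` independent coordinates, in which each good level in each coordinate
is rewarded by a factor `2 ^ (m / k)`. If many coordinates have large variance, their sum spreads
over an interval of length about `2 ^ m` (`CentredFamily.concentration`), and this spreading pays
for the largest possible reward `2 ^ m`; if few have, the reward is small on average
(`CentredFamily.step`). Each step loses only a factor `2 ^ (ε m)` (`exists_params`), so the atoms of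
the `k`-fold convolution of `η_A` are at most a constant times `2 ^ (-(1 - 5γ/8) n)` (`multiscale`,
`sup_bound`). Since `|B| ≤ 2 ^ ((1 - γ) n)`, this contradicts the lower bound when `δ = γ / (24 k)`
and `n` is large (`core`).
-/

open MeasureTheory Set
open scoped Classical

noncomputable section

/-- The dyadic interval of generation `k` with index `j`. -/
def dyI (k : ℕ) (j : ℤ) : Set ℝ := Set.Ico ((j : ℝ) / 2 ^ k) (((j : ℝ) + 1) / 2 ^ k)

/-- The dyadic interval of generation `k` containing `x`. -/
def dyadicCell (k : ℕ) (x : ℝ) : Set ℝ := dyI k ⌊(2 : ℝ) ^ k * x⌋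

/-- The grid `[0,1] ∩ 2^{-n}ℤ`. -/
def dyGrid (n : ℕ) : Set ℝ := {x : ℝ | x ∈ Set.Icc (0 : ℝ) 1 ∧ ∃ j : ℤ, x = (j : ℝ) / 2 ^ n}

/-! ### Sums of independent centred bounded variables -/

/-- Gaussian decay near the origin of the characteristic function of a centred variable with values
in `[-1, 1]`, from the second-order Taylor expansion of `exp`. -/
lemma char_bound {α : Type*} (C : Finset α) (p d : α → ℝ) (hp : ∀ a ∈ C, 0 ≤ p a)
    (h1 : ∑ a ∈ C, p a = 1) (h0 : ∑ a ∈ C, p a * d a = 0) (hd : ∀ a ∈ C, |d a| ≤ 1)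
    (t : ℝ) (ht : |t| ≤ 1) :
    ‖∑ a ∈ C, (p a : ℂ) * Complex.exp (((t * d a : ℝ) : ℂ) * Complex.I)‖ ≤
      Real.exp (-(t ^ 2 * (∑ a ∈ C, p a * d a ^ 2) / 4)) := by
  set V := ∑ a ∈ C, p a * d a ^ 2 with hV
  have hV0 : 0 ≤ V := Finset.sum_nonneg fun a ha => mul_nonneg (hp a ha) (sq_nonneg _)
  have hV1 : V ≤ 1 := by
    rw [← h1]
    refine Finset.sum_le_sum fun a ha => ?_
    have := (sq_le_one_iff_abs_le_one (d a)).2 (hd a ha)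
    nlinarith [hp a ha]
  have ht2 : t ^ 2 ≤ 1 := (sq_le_one_iff_abs_le_one t).2 ht
  have htV : t ^ 2 * V ≤ 1 := by nlinarith [sq_nonneg t]
  have hsplit : ∑ a ∈ C, (p a : ℂ) * Complex.exp (((t * d a : ℝ) : ℂ) * Complex.I) =
      ((1 - t ^ 2 * V / 2 : ℝ) : ℂ) + ∑ a ∈ C, (p a : ℂ) *
        (Complex.exp (((t * d a : ℝ) : ℂ) * Complex.I) -
          (1 + ((t * d a : ℝ) : ℂ) * Complex.I - ((t * d a : ℝ) : ℂ) ^ 2 / 2)) := by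
    have e : ((1 - t ^ 2 * V / 2 : ℝ) : ℂ) = ∑ a ∈ C, (p a : ℂ) *
        (1 + ((t * d a : ℝ) : ℂ) * Complex.I - ((t * d a : ℝ) : ℂ) ^ 2 / 2) := by
      have h1' : ∑ a ∈ C, (p a : ℂ) = 1 := by exact_mod_cast h1
      have h0' : ∑ a ∈ C, (p a : ℂ) * (d a : ℂ) = 0 := by exact_mod_cast h0
      have hV' : ∑ a ∈ C, (p a : ℂ) * (d a : ℂ) ^ 2 = V := by rw [hV]; push_cast; rfl
      have : ∀ a ∈ C, (p a : ℂ) *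
        (1 + ((t * d a : ℝ) : ℂ) * Complex.I - ((t * d a : ℝ) : ℂ) ^ 2 / 2) =
        (p a : ℂ) + (t * Complex.I) * ((p a : ℂ) * d a) -
          (t ^ 2 / 2) * ((p a : ℂ) * (d a : ℂ) ^ 2) := by
        intro a _; push_cast; ring
      rw [Finset.sum_congr rfl this, Finset.sum_sub_distrib, Finset.sum_add_distrib,
        ← Finset.mul_sum, ← Finset.mul_sum, h1', h0', hV']
      push_cast; ring
    rw [e, ← Finset.sum_add_distrib]
    exact Finset.sum_congr rfl fun a _ => by ring
  have hrem : ∀ a ∈ C, ‖(p a : ℂ) *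
        (Complex.exp (((t * d a : ℝ) : ℂ) * Complex.I) -
          (1 + ((t * d a : ℝ) : ℂ) * Complex.I - ((t * d a : ℝ) : ℂ) ^ 2 / 2))‖ ≤
        2 / 9 * t ^ 2 * (p a * d a ^ 2) := by
    intro a ha
    have hx : ‖((t * d a : ℝ) : ℂ) * Complex.I‖ = |t * d a| := by
      rw [norm_mul, Complex.norm_I, mul_one, Complex.norm_real, Real.norm_eq_abs]
    have hle : |t * d a| ≤ 1 := by
      rw [abs_mul]; exact mul_le_one₀ ht (abs_nonneg _) (hd a ha)
    have hb := Complex.exp_bound (x := ((t * d a : ℝ) : ℂ) * Complex.I) (by rw [hx]; exact hle)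
      (n := 3) (by norm_num)
    rw [hx] at hb
    have hs : ∑ m ∈ Finset.range 3, (((t * d a : ℝ) : ℂ) * Complex.I) ^ m / (m.factorial : ℂ) =
        1 + ((t * d a : ℝ) : ℂ) * Complex.I - ((t * d a : ℝ) : ℂ) ^ 2 / 2 := by
      simp [Finset.sum_range_succ, mul_pow, Complex.I_sq]
      ring
    rw [hs] at hb
    rw [norm_mul, Complex.norm_real, Real.norm_of_nonneg (hp a ha)]
    have h3 : |t * d a| ^ 3 ≤ t ^ 2 * d a ^ 2 := by
      have : |t * d a| ^ 3 = |t * d a| * (t ^ 2 * d a ^ 2) := by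
        rw [← mul_pow, ← sq_abs (t * d a)]; ring
      rw [this]
      exact mul_le_of_le_one_left (by positivity) hle
    have h4 := hb.trans (mul_le_mul_of_nonneg_right h3 (by positivity))
    norm_num [Nat.factorial] at h4
    calc _ ≤ p a * (t ^ 2 * d a ^ 2 * (2 / 9)) := by
          refine mul_le_mul_of_nonneg_left ?_ (hp a ha)
          push_cast
          exact h4
      _ = _ := by ring
  rw [hsplit]
  have hsum := (norm_sum_le _ _).trans (Finset.sum_le_sum hrem)
  rw [← Finset.mul_sum, ← hV] at hsum
  refine (norm_add_le _ _).trans ?_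
  rw [Complex.norm_real, Real.norm_of_nonneg (by linarith)]
  have := Real.add_one_le_exp (-(t ^ 2 * V / 4))
  have : 0 ≤ t ^ 2 * V := by positivity
  linarith

lemma mgf_bound {α : Type*} (C : Finset α) (p d : α → ℝ) (hp : ∀ a ∈ C, 0 ≤ p a)
    (h1 : ∑ a ∈ C, p a = 1) (h0 : ∑ a ∈ C, p a * d a = 0) (hd : ∀ a ∈ C, |d a| ≤ 1)
    (t : ℝ) (ht : |t| ≤ 1) :
    ∑ a ∈ C, p a * Real.exp (t * d a) ≤ Real.exp (t ^ 2) := by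
  have key : ∀ a ∈ C, p a * Real.exp (t * d a) ≤ p a + t * (p a * d a) + t ^ 2 * p a := by
    intro a ha
    have hle : |t * d a| ≤ 1 := by
      rw [abs_mul]; exact mul_le_one₀ ht (abs_nonneg _) (hd a ha)
    have h := (abs_le.1 (Real.abs_exp_sub_one_sub_id_le hle)).2
    have hd2 := (sq_le_one_iff_abs_le_one (d a)).2 (hd a ha)
    have : (t * d a) ^ 2 ≤ t ^ 2 := by rw [mul_pow]; nlinarith [sq_nonneg t]
    have : Real.exp (t * d a) ≤ 1 + t * d a + t ^ 2 := by linarith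
    nlinarith [hp a ha, mul_le_mul_of_nonneg_left this (hp a ha)]
  refine (Finset.sum_le_sum key).trans ?_
  rw [Finset.sum_add_distrib, Finset.sum_add_distrib, ← Finset.mul_sum, ← Finset.mul_sum, h1, h0]
  linarith [Real.add_one_le_exp (t ^ 2)]

lemma sum_half_pow_le {s : Finset ℕ} {g : ℕ → ℕ} (hg : Set.InjOn g s) :
    ∑ i ∈ s, (1 / 2 : ℝ) ^ g i ≤ 2 := by
  rw [← Finset.sum_image (f := fun m => (1 / 2 : ℝ) ^ m) hg]
  exact (summable_geometric_two.sum_le_tsum _ fun _ _ => by positivity).trans_eq tsum_geometric_two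

lemma sum_exp_neg_sq_le (N j : ℕ) :
    ∑ i ∈ Finset.range N, Real.exp (-((j : ℝ) - i) ^ 2) ≤ 4 := by
  have e2 : Real.exp (-1) ≤ 1 / 2 := by
    rw [Real.exp_neg, inv_le_comm₀ (Real.exp_pos _) (by norm_num)]
    have := Real.add_one_le_exp (1 : ℝ); norm_num; linarith
  have gen : ∀ m : ℕ, Real.exp (-(m : ℝ) ^ 2) ≤ (1 / 2 : ℝ) ^ m := by
    intro m
    calc Real.exp (-(m : ℝ) ^ 2) ≤ Real.exp (m * (-1)) := by
          apply Real.exp_le_exp.2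
          have : (m : ℝ) ≤ (m : ℝ) ^ 2 := by exact_mod_cast Nat.le_self_pow (by norm_num) m
          linarith
      _ = Real.exp (-1) ^ m := Real.exp_nat_mul _ _
      _ ≤ _ := by gcongr
  rw [← Finset.sum_filter_add_sum_filter_not (Finset.range N) (fun i => j < i)]
  have b1 : ∑ i ∈ (Finset.range N).filter (fun i => j < i), Real.exp (-((j : ℝ) - i) ^ 2) ≤ 2 := by
    refine le_trans (Finset.sum_le_sum fun i hi => ?_) (sum_half_pow_le (g := fun i => i - j) ?_)
    · have h := (Finset.mem_filter.1 hi).2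
      have := gen (i - j)
      rw [Nat.cast_sub h.le] at this
      rwa [show ((j : ℝ) - i) ^ 2 = ((i : ℝ) - j) ^ 2 by ring]
    · intro a ha b hb hab
      simp only [Finset.coe_filter, Set.mem_ofPred_eq] at ha hb hab
      omega
  have b2 : ∑ i ∈ (Finset.range N).filter (fun i => ¬ j < i),
      Real.exp (-((j : ℝ) - i) ^ 2) ≤ 2 := by
    refine le_trans (Finset.sum_le_sum fun i hi => ?_) (sum_half_pow_le (g := fun i => j - i) ?_)
    · have h := not_lt.1 (Finset.mem_filter.1 hi).2
      have := gen (j - i)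
      rwa [Nat.cast_sub h] at this
    · intro a ha b hb hab
      simp only [Finset.coe_filter, Set.mem_ofPred_eq] at ha hb hab
      omega
  linarith

/-- The data of `k` independent centred random variables with finitely many values in `[-1, 1]`:
the `i`-th one takes the value `d i a` with probability `p i a`, for `a` in `C i`. -/
structure CentredFamily {α : Type*} (k : ℕ) (C : Fin k → Finset α) (p d : Fin k → α → ℝ) :
    Prop where
  nonneg : ∀ i, ∀ a ∈ C i, 0 ≤ p i a
  total : ∀ i, ∑ a ∈ C i, p i a = 1
  centred : ∀ i, ∑ a ∈ C i, p i a * d i a = 0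
  bounded : ∀ i, ∀ a ∈ C i, |d i a| ≤ 1

section Family

variable {α : Type*} {k : ℕ} {C : Fin k → Finset α} {p d : Fin k → α → ℝ}

lemma CentredFamily.weight_nonneg (H : CentredFamily k C p d) {c : Fin k → α}
    (hc : c ∈ Fintype.piFinset C) : 0 ≤ ∏ i, p i (c i) :=
  Finset.prod_nonneg fun i _ => H.nonneg i _ (Fintype.mem_piFinset.1 hc i)

lemma CentredFamily.sum_weight (H : CentredFamily k C p d) :
    ∑ c ∈ Fintype.piFinset C, ∏ i, p i (c i) = 1 := by
  rw [← Finset.prod_univ_sum]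
  simp [H.total]

/-- The real part of the translated characteristic function of the sum of the variables is Gaussian
in terms of the total variance. -/
lemma CentredFamily.cos_bound (H : CentredFamily k C p d) (t u : ℝ) (ht : |t| ≤ 1) :
    ∑ c ∈ Fintype.piFinset C, (∏ i, p i (c i)) * Real.cos (t * (∑ i, d i (c i) - u)) ≤
      Real.exp (-(t ^ 2 * (∑ i, ∑ a ∈ C i, p i a * d i a ^ 2) / 4)) := by
  have e1 : ((∑ c ∈ Fintype.piFinset C, (∏ i, p i (c i)) *
      Real.cos (t * (∑ i, d i (c i) - u)) : ℝ)) =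
      (Complex.exp (((-(t * u) : ℝ) : ℂ) * Complex.I) * ∏ i, ∑ a ∈ C i, (p i a : ℂ) *
        Complex.exp (((t * d i a : ℝ) : ℂ) * Complex.I)).re := by
    rw [Finset.prod_univ_sum, Finset.mul_sum, Complex.re_sum]
    refine Finset.sum_congr rfl fun c _ => ?_
    rw [Finset.prod_mul_distrib, ← Complex.exp_sum, mul_left_comm, ← Complex.exp_add,
      ← Finset.sum_mul, ← add_mul, ← Complex.ofReal_prod, Complex.re_ofReal_mul,
      ← Complex.ofReal_sum, ← Complex.ofReal_add, Complex.exp_ofReal_mul_I_re, ← Finset.mul_sum]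
    congr 2
    ring
  rw [e1]
  refine (Complex.re_le_norm _).trans ?_
  rw [norm_mul, Complex.norm_exp_ofReal_mul_I, one_mul, norm_prod]
  refine (Finset.prod_le_prod (fun _ _ => norm_nonneg _) fun i _ =>
    char_bound (C i) (p i) (d i) (H.nonneg i) (H.total i) (H.centred i) (H.bounded i) t ht).trans ?_
  rw [← Real.exp_sum]
  apply le_of_eq
  congr 1
  rw [Finset.mul_sum, Finset.sum_div, Finset.sum_neg_distrib]

/-- Anti-concentration: if the total variance is at least `(2NR)²`, an interval of length `2R`
carries at most `16 / N` of the distribution of the sum. The indicator of the interval is dominated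
by a multiple of the squared modulus of a Dirichlet sum, to which `cos_bound` is applied. -/
lemma CentredFamily.concentration (H : CentredFamily k C p d) (N R : ℕ) (hN : 1 ≤ N) (hR : 1 ≤ R)
    (hV : 4 * (N : ℝ) ^ 2 * (R : ℝ) ^ 2 ≤ ∑ i, ∑ a ∈ C i, p i a * d i a ^ 2) (u : ℝ) :
    ∑ c ∈ Fintype.piFinset C, (∏ i, p i (c i)) *
      (if |u - ∑ i, d i (c i)| ≤ R then 1 else 0) ≤ 16 / (N : ℝ) := by
  set V := ∑ i, ∑ a ∈ C i, p i a * d i a ^ 2 with hVdef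
  have hN' : (1 : ℝ) ≤ N := by exact_mod_cast hN
  have hR' : (1 : ℝ) ≤ R := by exact_mod_cast hR
  set s : ℝ := 1 / (N * R) with hs
  have hs0 : 0 < s := by positivity
  -- the squared modulus of the Dirichlet sum `∑_{j<N} e^{i j s t}`
  have kernel : ∀ t : ℝ, |t| ≤ R → (N : ℝ) ^ 2 / 4 ≤
      ∑ j ∈ Finset.range N, ∑ j' ∈ Finset.range N, Real.cos (((j : ℝ) - j') * s * t) := by
    intro t ht
    have : ∑ j ∈ Finset.range N, ∑ j' ∈ Finset.range N, Real.cos (((j : ℝ) - j') * s * t) ≥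
        ∑ j ∈ Finset.range N, ∑ j' ∈ Finset.range N, (1 / 4 : ℝ) := by
      refine Finset.sum_le_sum fun j hj => Finset.sum_le_sum fun j' hj' => ?_
      have hj1 : (j : ℝ) ≤ N := by exact_mod_cast (Finset.mem_range.1 hj).le
      have hj2 : (j' : ℝ) ≤ N := by exact_mod_cast (Finset.mem_range.1 hj').le
      have habs : |((j : ℝ) - j') * s * t| ≤ 1 := by
        rw [abs_mul, abs_mul, abs_of_pos hs0]
        have h1 : |(j : ℝ) - j'| ≤ N := by
          rw [abs_le]; constructor <;> linarith [Nat.cast_nonneg (α := ℝ) j, Nat.cast_nonneg (α := ℝ) j']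
        calc |(j : ℝ) - j'| * s * |t| ≤ N * s * R := by gcongr
          _ = 1 := by rw [hs]; field_simp
      have := Real.one_sub_sq_div_two_le_cos (x := ((j : ℝ) - j') * s * t)
      have := (sq_le_one_iff_abs_le_one _).2 habs
      linarith
    refine le_trans (le_of_eq ?_) this
    simp; ring
  have kernel0 : ∀ t : ℝ, 0 ≤
      ∑ j ∈ Finset.range N, ∑ j' ∈ Finset.range N, Real.cos (((j : ℝ) - j') * s * t) := by
    intro t
    have : ∑ j ∈ Finset.range N, ∑ j' ∈ Finset.range N, Real.cos (((j : ℝ) - j') * s * t) =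
        (∑ j ∈ Finset.range N, Real.cos (j * s * t)) ^ 2 +
        (∑ j ∈ Finset.range N, Real.sin (j * s * t)) ^ 2 := by
      rw [sq, sq, Finset.sum_mul_sum, Finset.sum_mul_sum, ← Finset.sum_add_distrib]
      refine Finset.sum_congr rfl fun j _ => ?_
      rw [← Finset.sum_add_distrib]
      refine Finset.sum_congr rfl fun j' _ => ?_
      rw [← Real.cos_sub]; congr 1; ring
    rw [this]; positivity
  have main : (∑ c ∈ Fintype.piFinset C, (∏ i, p i (c i)) *
      (if |u - ∑ i, d i (c i)| ≤ R then 1 else 0)) * ((N : ℝ) ^ 2 / 4) ≤ 4 * N := by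
    calc _ ≤ ∑ c ∈ Fintype.piFinset C, (∏ i, p i (c i)) *
          ∑ j ∈ Finset.range N, ∑ j' ∈ Finset.range N,
            Real.cos (((j : ℝ) - j') * s * (∑ i, d i (c i) - u)) := by
          rw [Finset.sum_mul]
          refine Finset.sum_le_sum fun c hc => ?_
          rw [mul_assoc]
          refine mul_le_mul_of_nonneg_left ?_ (H.weight_nonneg hc)
          split_ifs with h
          · rw [one_mul]; exact kernel _ (by rwa [abs_sub_comm])
          · rw [zero_mul]; exact kernel0 _
      _ = ∑ j ∈ Finset.range N, ∑ j' ∈ Finset.range N, ∑ c ∈ Fintype.piFinset C,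
            (∏ i, p i (c i)) * Real.cos (((j : ℝ) - j') * s * (∑ i, d i (c i) - u)) := by
          simp_rw [Finset.mul_sum]
          rw [Finset.sum_comm]
          refine Finset.sum_congr rfl fun j _ => ?_
          rw [Finset.sum_comm]
      _ ≤ ∑ j ∈ Finset.range N, ∑ j' ∈ Finset.range N, Real.exp (-((j : ℝ) - j') ^ 2) := by
          refine Finset.sum_le_sum fun j hj => Finset.sum_le_sum fun j' hj' => ?_
          have hj1 : (j : ℝ) ≤ N := by exact_mod_cast (Finset.mem_range.1 hj).le
          have hj2 : (j' : ℝ) ≤ N := by exact_mod_cast (Finset.mem_range.1 hj').le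
          have h1 : |(j : ℝ) - j'| ≤ N := by
            rw [abs_le]; constructor <;> linarith [Nat.cast_nonneg (α := ℝ) j, Nat.cast_nonneg (α := ℝ) j']
          have habs : |((j : ℝ) - j') * s| ≤ 1 := by
            rw [abs_mul, abs_of_pos hs0]
            calc |(j : ℝ) - j'| * s ≤ N * s := by gcongr
              _ = 1 / R := by rw [hs]; field_simp
              _ ≤ 1 := by rw [div_le_one (by linarith)]; exact hR'
          refine (H.cos_bound _ u habs).trans ?_
          apply Real.exp_le_exp.2
          rw [← hVdef, mul_pow]
          have : 4 ≤ s ^ 2 * V := by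
            calc (4 : ℝ) = s ^ 2 * (4 * (N : ℝ) ^ 2 * (R : ℝ) ^ 2) := by
                  rw [hs]; field_simp
              _ ≤ _ := by gcongr
          nlinarith [sq_nonneg ((j : ℝ) - j')]
      _ ≤ ∑ j ∈ Finset.range N, (4 : ℝ) := Finset.sum_le_sum fun j _ => sum_exp_neg_sq_le N j
      _ = 4 * N := by simp; ring
  rw [le_div_iff₀ (by linarith)]
  have : (∑ c ∈ Fintype.piFinset C, (∏ i, p i (c i)) *
      (if |u - ∑ i, d i (c i)| ≤ R then 1 else 0)) * N * N ≤ 16 * N := by nlinarith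
  exact le_of_mul_le_mul_right this (by linarith)

/-- Sub-Gaussian bound for the exponential moments of the sum. -/
lemma CentredFamily.exp_abs_le (H : CentredFamily k C p d) (t : ℝ) (ht0 : 0 ≤ t) (ht : t ≤ 1) :
    ∑ c ∈ Fintype.piFinset C, (∏ i, p i (c i)) * Real.exp (t * |∑ i, d i (c i)|) ≤
      2 * Real.exp (k * t ^ 2) := by
  have one : ∀ s : ℝ, |s| ≤ 1 → ∑ c ∈ Fintype.piFinset C, (∏ i, p i (c i)) *
      Real.exp (s * ∑ i, d i (c i)) ≤ Real.exp (k * s ^ 2) := by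
    intro s hs
    have : ∀ c ∈ Fintype.piFinset C, (∏ i, p i (c i)) * Real.exp (s * ∑ i, d i (c i)) =
        ∏ i, p i (c i) * Real.exp (s * d i (c i)) := by
      intro c _
      rw [Finset.prod_mul_distrib, ← Real.exp_sum, Finset.mul_sum]
    rw [Finset.sum_congr rfl this,
      ← Finset.prod_univ_sum C (fun i a => p i a * Real.exp (s * d i a))]
    refine (Finset.prod_le_prod (fun i _ => Finset.sum_nonneg fun a ha =>
      mul_nonneg (H.nonneg i a ha) (Real.exp_pos _).le) fun i _ =>
      mgf_bound (C i) (p i) (d i) (H.nonneg i) (H.total i) (H.centred i) (H.bounded i) s hs).trans ?_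
    rw [← Real.exp_sum]
    simp
  have h1 := one t (by rwa [abs_of_nonneg ht0])
  have h2 := one (-t) (by rwa [abs_neg, abs_of_nonneg ht0])
  rw [neg_sq] at h2
  have : ∑ c ∈ Fintype.piFinset C, (∏ i, p i (c i)) * Real.exp (t * |∑ i, d i (c i)|) ≤
      ∑ c ∈ Fintype.piFinset C, (∏ i, p i (c i)) * Real.exp (t * ∑ i, d i (c i)) +
      ∑ c ∈ Fintype.piFinset C, (∏ i, p i (c i)) * Real.exp (-t * ∑ i, d i (c i)) := by
    rw [← Finset.sum_add_distrib]
    refine Finset.sum_le_sum fun c hc => ?_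
    rw [← mul_add]
    refine mul_le_mul_of_nonneg_left ?_ (H.weight_nonneg hc)
    rcases abs_cases (∑ i, d i (c i)) with ⟨h, _⟩ | ⟨h, _⟩ <;> rw [h]
    · linarith [Real.exp_pos (-t * ∑ i, d i (c i))]
    · rw [mul_neg, neg_mul]; linarith [Real.exp_pos (t * ∑ i, d i (c i))]
  linarith

/-! ### One step of the multiscale estimate -/

lemma two_rpow_le_one_add {x : ℝ} (h0 : 0 ≤ x) (h1 : x ≤ 1) : (2 : ℝ) ^ x ≤ 1 + x := by
  have := rpow_one_add_le_one_add_mul_self (s := 1) (p := x) (by norm_num) h0 h1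
  norm_num at this
  exact this

/-- The loss factor of one step of the multiscale induction. The first summand covers the case of
many coordinates of large variance (`N` and `R` from `CentredFamily.concentration`, `T` a truncation
level, `P` the order of the moment controlling the tail), the second one the case where less than a
proportion `τ` of the coordinates has large variance. -/
def stepConst (m N R P : ℕ) (T τ κ : ℝ) : ℝ :=
  2 ^ m * (T * (16 / N + Real.exp (-(R / 2))) + 2 * Real.exp ((P + 1) ^ 2) / T ^ P) +
    (2 : ℝ) ^ (τ * m) * (2 * Real.exp 4 + Real.exp (2 * κ * m))

/-- The reward attached to one good level in one coordinate. It is normalised so that `4 ^ m`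
rewards multiply to `2 ^ m`. -/
def rew (m : ℕ) : ℝ := (2 : ℝ) ^ ((m : ℝ) / 4 ^ m)

lemma one_le_rew (m : ℕ) : 1 ≤ rew m := Real.one_le_rpow (by norm_num) (by positivity)

/-- One step of the multiscale estimate. In every coordinate either the variance is at least `ρ` or
the rewarded values `G` have probability at most `κ`. If at least `τ 4 ^ m` variances are large, the
sum spreads at scale `2 ^ m` and anti-concentration pays for the maximal reward `2 ^ m`. Otherwise
the coordinates of large variance collect at most `2 ^ (τ m)`, and the others collect little on
average. The weight `exp (-|u - D|)` is reproduced at the coarser scale `2 ^ m`. -/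
lemma CentredFamily.step (H : CentredFamily k C p d) (m : ℕ) (hk : k = 4 ^ m) (hm : 1 ≤ m)
    (G : Fin k → α → Prop) (ρ τ κ T : ℝ) (N R P : ℕ) (hρ : 0 ≤ ρ) (hκ : 0 ≤ κ) (hτ : 0 ≤ τ)
    (hN : 1 ≤ N) (hR : 1 ≤ R) (hP : P + 1 ≤ 2 ^ m) (hT : 1 ≤ T)
    (hG : ∀ i, ρ ≤ ∑ a ∈ C i, p i a * d i a ^ 2 ∨ ∑ a ∈ C i, (if G i a then p i a else 0) ≤ κ)
    (hNR : 4 * (N : ℝ) ^ 2 * (R : ℝ) ^ 2 ≤ τ * 4 ^ m * ρ) (u : ℝ) :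
    ∑ c ∈ Fintype.piFinset C, (∏ i, p i (c i)) * (Real.exp (-|u - ∑ i, d i (c i)|) *
      ∏ i, (if G i (c i) then rew m else 1)) ≤
      stepConst m N R P T τ κ * Real.exp (-(|u| / 2 ^ m)) := by
  have h2m : (2 : ℝ) ≤ 2 ^ m := by
    calc (2 : ℝ) = 2 ^ 1 := by norm_num
      _ ≤ 2 ^ m := pow_le_pow_right₀ (by norm_num) hm
  have h4m : (4 : ℝ) ^ m = 2 ^ m * 2 ^ m := by rw [← mul_pow]; norm_num
  have hkR : (k : ℝ) = 4 ^ m := by rw [hk]; push_cast; rfl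
  have hT0 : 0 < T := by linarith
  have hb1 := one_le_rew m
  have hW0 : ∀ c : Fin k → α, 0 ≤ ∏ i, (if G i (c i) then rew m else 1) := fun c =>
    Finset.prod_nonneg fun i _ => by split_ifs <;> linarith
  -- `|u| ≤ |D| + |u - D|` and `2 ^ m ≥ 2`
  have split : ∀ D : ℝ, Real.exp (-|u - D|) ≤ Real.exp (-(|u| / 2 ^ m)) *
      (Real.exp (1 / 2 ^ m * |D|) * Real.exp (-(|u - D| / 2))) := by
    intro D
    rw [← Real.exp_add, ← Real.exp_add]
    apply Real.exp_le_exp.2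
    have h1 : |u| ≤ |u - D| + |D| := by simpa using abs_add_le (u - D) D
    have h2 : |u| / 2 ^ m ≤ |u - D| / 2 ^ m + |D| / 2 ^ m := by
      rw [← add_div]; gcongr
    have h3 : |u - D| / 2 ^ m ≤ |u - D| / 2 := by gcongr
    have : 1 / 2 ^ m * |D| = |D| / 2 ^ m := by ring
    linarith
  have hfac : ∑ c ∈ Fintype.piFinset C, (∏ i, p i (c i)) * (Real.exp (-|u - ∑ i, d i (c i)|) *
      ∏ i, (if G i (c i) then rew m else 1)) ≤ Real.exp (-(|u| / 2 ^ m)) *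
      ∑ c ∈ Fintype.piFinset C, (∏ i, p i (c i)) * (Real.exp (1 / 2 ^ m * |∑ i, d i (c i)|) *
        Real.exp (-(|u - ∑ i, d i (c i)| / 2)) * ∏ i, (if G i (c i) then rew m else 1)) := by
    rw [Finset.mul_sum]
    refine Finset.sum_le_sum fun c hc => ?_
    calc _ ≤ (∏ i, p i (c i)) * ((Real.exp (-(|u| / 2 ^ m)) *
          (Real.exp (1 / 2 ^ m * |∑ i, d i (c i)|) * Real.exp (-(|u - ∑ i, d i (c i)| / 2)))) *
          ∏ i, (if G i (c i) then rew m else 1)) := by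
          refine mul_le_mul_of_nonneg_left ?_ (H.weight_nonneg hc)
          exact mul_le_mul_of_nonneg_right (split _) (hW0 c)
      _ = _ := by ring
  refine hfac.trans ?_
  rw [mul_comm (stepConst _ _ _ _ _ _ _)]
  refine mul_le_mul_of_nonneg_left ?_ (Real.exp_pos _).le
  have hpos1 : 0 ≤ 2 ^ m * (T * (16 / N + Real.exp (-(R / 2))) +
      2 * Real.exp ((P + 1) ^ 2) / T ^ P) := by positivity
  have hpos2 : 0 ≤ (2 : ℝ) ^ (τ * m) * (2 * Real.exp 4 + Real.exp (2 * κ * m)) := by positivity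
  set J : Finset (Fin k) := Finset.univ.filter fun i => ρ ≤ ∑ a ∈ C i, p i a * d i a ^ 2 with hJ
  have hrewk : ∀ x : ℝ, 0 ≤ x → ∀ j : ℕ, (j : ℝ) ≤ x * 4 ^ m → rew m ^ j ≤ (2 : ℝ) ^ (x * m) := by
    intro x hx j hj
    rw [rew, ← Real.rpow_natCast, ← Real.rpow_mul (by norm_num)]
    apply Real.rpow_le_rpow_of_exponent_le (by norm_num)
    calc (m : ℝ) / 4 ^ m * j ≤ (m : ℝ) / 4 ^ m * (x * 4 ^ m) := by gcongr
      _ = x * m := by field_simp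
  by_cases hcase : τ * 4 ^ m ≤ (J.card : ℝ)
  · refine le_trans ?_ (le_add_of_nonneg_right hpos2)
    have hV : 4 * (N : ℝ) ^ 2 * (R : ℝ) ^ 2 ≤ ∑ i, ∑ a ∈ C i, p i a * d i a ^ 2 := by
      calc _ ≤ τ * 4 ^ m * ρ := hNR
        _ ≤ J.card * ρ := by gcongr
        _ = ∑ i ∈ J, ρ := by simp
        _ ≤ ∑ i ∈ J, ∑ a ∈ C i, p i a * d i a ^ 2 :=
          Finset.sum_le_sum fun i hi => (Finset.mem_filter.1 hi).2
        _ ≤ _ := Finset.sum_le_sum_of_subset_of_nonneg (Finset.subset_univ _) fun i _ _ =>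
          Finset.sum_nonneg fun a ha => mul_nonneg (H.nonneg i a ha) (sq_nonneg _)
    have hconc := H.concentration N R hN hR hV u
    have hexp := H.exp_abs_le ((P + 1) / 2 ^ m) (by positivity) (by
      rw [div_le_one (by positivity)]; exact_mod_cast hP)
    have hkt : (k : ℝ) * ((P + 1) / 2 ^ m) ^ 2 = (P + 1) ^ 2 := by
      rw [hkR, h4m]; field_simp
    rw [hkt] at hexp
    have hpt : ∀ c ∈ Fintype.piFinset C, (∏ i, p i (c i)) *
        (Real.exp (1 / 2 ^ m * |∑ i, d i (c i)|) *
        Real.exp (-(|u - ∑ i, d i (c i)| / 2)) * ∏ i, (if G i (c i) then rew m else 1)) ≤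
        2 ^ m * (T * ((∏ i, p i (c i)) * (if |u - ∑ i, d i (c i)| ≤ R then 1 else 0) +
          (∏ i, p i (c i)) * Real.exp (-(R / 2))) +
          (∏ i, p i (c i)) * Real.exp ((P + 1) / 2 ^ m * |∑ i, d i (c i)|) / T ^ P) := by
      intro c hc
      set D := ∑ i, d i (c i)
      have hWle : ∏ i, (if G i (c i) then rew m else 1) ≤ 2 ^ m := by
        calc _ ≤ ∏ i : Fin k, rew m := by
              refine Finset.prod_le_prod (fun i _ => by split_ifs <;> linarith) fun i _ => ?_
              split_ifs <;> linarith
          _ = rew m ^ k := by simp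
          _ ≤ (2 : ℝ) ^ ((1 : ℝ) * m) := hrewk 1 zero_le_one k (by rw [hkR, one_mul])
          _ = 2 ^ m := by rw [one_mul, Real.rpow_natCast]
      have hA : Real.exp (1 / 2 ^ m * |D|) * Real.exp (-(|u - D| / 2)) ≤
          T * Real.exp (-(|u - D| / 2)) + Real.exp ((P + 1) / 2 ^ m * |D|) / T ^ P := by
        have hle1 : Real.exp (-(|u - D| / 2)) ≤ 1 := by
          rw [Real.exp_le_one_iff]; linarith [abs_nonneg (u - D)]
        have hApow : Real.exp ((P + 1) / 2 ^ m * |D|) = Real.exp (1 / 2 ^ m * |D|) ^ (P + 1) := by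
          rw [← Real.exp_nat_mul]; congr 1; push_cast; ring
        rw [hApow]
        set A := Real.exp (1 / 2 ^ m * |D|)
        have hA0 : 0 < A := Real.exp_pos _
        by_cases h : A ≤ T
        · have : A * Real.exp (-(|u - D| / 2)) ≤ T * Real.exp (-(|u - D| / 2)) := by gcongr
          have : 0 ≤ A ^ (P + 1) / T ^ P := by positivity
          linarith
        · have h' := (not_le.1 h).le
          have : A ≤ A ^ (P + 1) / T ^ P := by
            rw [le_div_iff₀ (by positivity), pow_succ']
            gcongr
          have : A * Real.exp (-(|u - D| / 2)) ≤ A * 1 := by gcongr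
          have : 0 ≤ T * Real.exp (-(|u - D| / 2)) := by positivity
          linarith
      have hPsi : Real.exp (-(|u - D| / 2)) ≤
          (if |u - D| ≤ R then 1 else 0) + Real.exp (-(R / 2)) := by
        split_ifs with h
        · have : Real.exp (-(|u - D| / 2)) ≤ 1 := by
            rw [Real.exp_le_one_iff]; linarith [abs_nonneg (u - D)]
          linarith [Real.exp_pos (-((R : ℝ) / 2))]
        · rw [zero_add]
          apply Real.exp_le_exp.2
          linarith [not_le.1 h]
      have hw := H.weight_nonneg hc
      calc _ ≤ (∏ i, p i (c i)) * ((T * ((if |u - D| ≤ R then 1 else 0) + Real.exp (-(R / 2))) +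
            Real.exp ((P + 1) / 2 ^ m * |D|) / T ^ P) * 2 ^ m) := by
            refine mul_le_mul_of_nonneg_left ?_ hw
            refine mul_le_mul ?_ hWle (hW0 c) ?_
            · refine hA.trans ?_
              gcongr
            · have : (0 : ℝ) ≤ (if |u - D| ≤ R then 1 else 0) := by split_ifs <;> norm_num
              positivity
        _ = _ := by ring
    refine (Finset.sum_le_sum hpt).trans ?_
    rw [← Finset.mul_sum, Finset.sum_add_distrib, ← Finset.mul_sum, Finset.sum_add_distrib,
      ← Finset.sum_mul, H.sum_weight, one_mul, ← Finset.sum_div]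
    gcongr
  · refine le_trans ?_ (le_add_of_nonneg_left hpos1)
    have hexp := H.exp_abs_le (2 / 2 ^ m) (by positivity) (by
      rw [div_le_one (by positivity)]; exact h2m)
    have hkt : (k : ℝ) * (2 / 2 ^ m) ^ 2 = 4 := by
      rw [hkR, h4m]; field_simp; norm_num
    rw [hkt] at hexp
    have hxle : 2 * ((m : ℝ) / 4 ^ m) ≤ 1 := by
      have : (m : ℝ) < 2 ^ m := by exact_mod_cast Nat.lt_two_pow_self
      rw [h4m, mul_div_assoc', div_le_one (by positivity)]
      nlinarith
    have hb2 : rew m ^ 2 ≤ 1 + 2 * ((m : ℝ) / 4 ^ m) := by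
      rw [rew, ← Real.rpow_natCast, ← Real.rpow_mul (by norm_num), mul_comm]
      exact two_rpow_le_one_add (by positivity) hxle
    -- the reward collected by the indices of small variance
    set W : (Fin k → α) → ℝ := fun c => ∏ i, (if i ∉ J ∧ G i (c i) then rew m else 1) with hW
    have hWsq : ∑ c ∈ Fintype.piFinset C, (∏ i, p i (c i)) * W c ^ 2 ≤ Real.exp (2 * κ * m) := by
      have e : ∀ c ∈ Fintype.piFinset C, (∏ i, p i (c i)) * W c ^ 2 =
          ∏ i, p i (c i) * (if i ∉ J ∧ G i (c i) then rew m else 1) ^ 2 := by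
        intro c _
        rw [hW, ← Finset.prod_pow, ← Finset.prod_mul_distrib]
      rw [Finset.sum_congr rfl e, ← Finset.prod_univ_sum C
        (fun i a => p i a * (if i ∉ J ∧ G i a then rew m else 1) ^ 2)]
      have hone : ∀ i, ∑ a ∈ C i, p i a * (if i ∉ J ∧ G i a then rew m else 1) ^ 2 ≤
          Real.exp (κ * (2 * ((m : ℝ) / 4 ^ m))) := by
        intro i
        by_cases hi : i ∈ J
        · simp only [hi, not_true_eq_false, false_and, if_false, one_pow, mul_one, H.total i]
          exact Real.one_le_exp (by positivity)
        · have hsm : ∑ a ∈ C i, (if G i a then p i a else 0) ≤ κ := by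
            refine (hG i).resolve_left fun h => hi ?_
            rw [hJ, Finset.mem_filter]; exact ⟨Finset.mem_univ _, h⟩
          have : ∑ a ∈ C i, p i a * (if i ∉ J ∧ G i a then rew m else 1) ^ 2 =
              ∑ a ∈ C i, p i a + (rew m ^ 2 - 1) * ∑ a ∈ C i, (if G i a then p i a else 0) := by
            rw [Finset.mul_sum, ← Finset.sum_add_distrib]
            refine Finset.sum_congr rfl fun a _ => ?_
            by_cases hg : G i a <;> simp [hi, hg]
            ring
          rw [this, H.total i]
          have h1 : (rew m ^ 2 - 1) * ∑ a ∈ C i, (if G i a then p i a else 0) ≤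
              (2 * ((m : ℝ) / 4 ^ m)) * κ := by
            refine mul_le_mul (by linarith) hsm (Finset.sum_nonneg fun a ha => ?_) (by positivity)
            split_ifs
            · exact H.nonneg i a ha
            · exact le_rfl
          linarith [Real.add_one_le_exp (κ * (2 * ((m : ℝ) / 4 ^ m)))]
      refine (Finset.prod_le_prod (fun i _ => Finset.sum_nonneg fun a ha =>
        mul_nonneg (H.nonneg i a ha) (sq_nonneg _)) fun i _ => hone i).trans ?_
      rw [← Real.exp_sum]
      apply Real.exp_le_exp.2
      simp only [Finset.sum_const, Finset.card_univ, Fintype.card_fin, nsmul_eq_mul, hkR]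
      apply le_of_eq; field_simp
    have hpt : ∀ c ∈ Fintype.piFinset C, (∏ i, p i (c i)) *
        (Real.exp (1 / 2 ^ m * |∑ i, d i (c i)|) *
        Real.exp (-(|u - ∑ i, d i (c i)| / 2)) * ∏ i, (if G i (c i) then rew m else 1)) ≤
        (2 : ℝ) ^ (τ * m) * ((∏ i, p i (c i)) * Real.exp (2 / 2 ^ m * |∑ i, d i (c i)|) +
          (∏ i, p i (c i)) * W c ^ 2) := by
      intro c hc
      set D := ∑ i, d i (c i)
      have hW0' : 0 ≤ W c := Finset.prod_nonneg fun i _ => by split_ifs <;> linarith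
      have hWle : ∏ i, (if G i (c i) then rew m else 1) ≤ (2 : ℝ) ^ (τ * m) * W c := by
        calc _ ≤ ∏ i, (if i ∈ J then rew m else 1) * (if i ∉ J ∧ G i (c i) then rew m else 1) := by
              refine Finset.prod_le_prod (fun i _ => by split_ifs <;> linarith) fun i _ => ?_
              by_cases hi : i ∈ J <;> by_cases hg : G i (c i) <;> simp [hi, hg, hb1]
          _ = rew m ^ J.card * W c := by
              rw [Finset.prod_mul_distrib, Finset.prod_ite_mem]; simp [hW]
          _ ≤ _ := by
              refine mul_le_mul_of_nonneg_right ?_ hW0'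
              exact hrewk τ hτ _ (not_le.1 hcase).le
      have hle1 : Real.exp (-(|u - D| / 2)) ≤ 1 := by
        rw [Real.exp_le_one_iff]; linarith [abs_nonneg (u - D)]
      have hA2 : Real.exp (2 / 2 ^ m * |D|) = Real.exp (1 / 2 ^ m * |D|) ^ 2 := by
        rw [← Real.exp_nat_mul]; congr 1; push_cast; ring
      have hA0 := Real.exp_pos (1 / 2 ^ m * |D|)
      rw [hA2]
      calc _ ≤ (∏ i, p i (c i)) * (Real.exp (1 / 2 ^ m * |D|) * 1 * ((2 : ℝ) ^ (τ * m) * W c)) := by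
            refine mul_le_mul_of_nonneg_left ?_ (H.weight_nonneg hc)
            refine mul_le_mul ?_ hWle (hW0 c) (by positivity)
            gcongr
        _ = (2 : ℝ) ^ (τ * m) * ((∏ i, p i (c i)) * (Real.exp (1 / 2 ^ m * |D|) * W c)) := by ring
        _ ≤ (2 : ℝ) ^ (τ * m) * ((∏ i, p i (c i)) * (Real.exp (1 / 2 ^ m * |D|) ^ 2 + W c ^ 2)) := by
            refine mul_le_mul_of_nonneg_left ?_ (by positivity)
            refine mul_le_mul_of_nonneg_left ?_ (H.weight_nonneg hc)
            nlinarith [sq_nonneg (Real.exp (1 / 2 ^ m * |D|) - W c)]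
        _ = _ := by ring
    refine (Finset.sum_le_sum hpt).trans ?_
    rw [← Finset.mul_sum, Finset.sum_add_distrib]
    gcongr

end Family

/-! ### The dyadic tree of a measure on the integers -/

section Tree

variable (η : ℕ → ℝ) (Ω : Finset ℕ)

/-- The points of `Ω` in the dyadic interval `[a 2^t, (a+1) 2^t)`. -/
def cell (t a : ℕ) : Finset ℕ := Ω.filter fun z => z / 2 ^ t = a

/-- The mass of a dyadic interval. -/
def mass (t a : ℕ) : ℝ := ∑ z ∈ cell Ω t a, η z

/-- The barycentre of `η` on a dyadic interval, by convention the left end point when the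
interval has mass zero. -/
def bary (t a : ℕ) : ℝ :=
  if mass η Ω t a = 0 then a * 2 ^ t else (∑ z ∈ cell Ω t a, η z * z) / mass η Ω t a

/-- The (unnormalised) variance of `η` on a dyadic interval. -/
def vari (t a : ℕ) : ℝ := ∑ z ∈ cell Ω t a, η z * ((z : ℝ) - bary η Ω t a) ^ 2

/-- The indices of the dyadic intervals `m` generations below the interval of index `a`. -/
def kids (m a : ℕ) : Finset ℕ := Finset.Ico (a * 2 ^ m) ((a + 1) * 2 ^ m)

variable {η Ω}

lemma mem_cell {t a z : ℕ} : z ∈ cell Ω t a ↔ z ∈ Ω ∧ z / 2 ^ t = a := by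
  simp [cell]

lemma mem_kids {m a b : ℕ} : b ∈ kids m a ↔ b / 2 ^ m = a := by
  rw [kids, Finset.mem_Ico, Nat.div_eq_iff (by positivity)]
  have : 0 < 2 ^ m := by positivity
  rw [add_mul, one_mul]
  omega

lemma div_add (z s m : ℕ) : z / 2 ^ (s + m) = z / 2 ^ s / 2 ^ m := by
  rw [Nat.div_div_eq_div_mul, pow_add]

lemma cell_subset_of_kid {s m a b : ℕ} (hb : b ∈ kids m a) : cell Ω s b ⊆ cell Ω (s + m) a := by
  intro z hz
  rw [mem_cell] at hz ⊢
  refine ⟨hz.1, ?_⟩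
  rw [div_add, hz.2]
  exact mem_kids.1 hb

lemma sum_cell (s m a : ℕ) (f : ℕ → ℝ) :
    ∑ z ∈ cell Ω (s + m) a, f z = ∑ b ∈ kids m a, ∑ z ∈ cell Ω s b, f z := by
  rw [← Finset.sum_fiberwise_of_maps_to (s := cell Ω (s + m) a) (t := kids m a)
    (g := fun z => z / 2 ^ s)]
  · refine Finset.sum_congr rfl fun b hb => Finset.sum_congr ?_ fun _ _ => rfl
    ext z
    rw [Finset.mem_filter]
    constructor
    · rintro ⟨h1, h2⟩
      exact mem_cell.2 ⟨(mem_cell.1 h1).1, h2⟩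
    · intro h
      exact ⟨cell_subset_of_kid hb h, (mem_cell.1 h).2⟩
  · intro z hz
    rw [mem_kids, ← div_add]
    exact (mem_cell.1 hz).2

lemma mass_nonneg (hη : ∀ z, 0 ≤ η z) (t a : ℕ) : 0 ≤ mass η Ω t a :=
  Finset.sum_nonneg fun z _ => hη z

lemma vari_nonneg (hη : ∀ z, 0 ≤ η z) (t a : ℕ) : 0 ≤ vari η Ω t a :=
  Finset.sum_nonneg fun z _ => mul_nonneg (hη z) (sq_nonneg _)

lemma mass_kids (s m a : ℕ) : mass η Ω (s + m) a = ∑ b ∈ kids m a, mass η Ω s b :=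
  sum_cell s m a η

lemma mass_mul_bary (hη : ∀ z, 0 ≤ η z) (t a : ℕ) :
    mass η Ω t a * bary η Ω t a = ∑ z ∈ cell Ω t a, η z * z := by
  rw [bary]
  split_ifs with h
  · rw [h, zero_mul]
    rw [mass, Finset.sum_eq_zero_iff_of_nonneg fun z _ => hη z] at h
    exact (Finset.sum_eq_zero fun z hz => by rw [h z hz, zero_mul]).symm
  · field_simp

lemma le_of_mem_cell {t a z : ℕ} (hz : z ∈ cell Ω t a) :
    (a : ℝ) * 2 ^ t ≤ z ∧ (z : ℝ) ≤ (a + 1) * 2 ^ t := by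
  have h := (mem_cell.1 hz).2
  have h1 := Nat.div_mul_le_self z (2 ^ t)
  have h2 := (Nat.lt_div_mul_add (a := z) (b := 2 ^ t) (by positivity)).le
  rw [h] at h1 h2
  constructor
  · exact_mod_cast h1
  · have : z ≤ (a + 1) * 2 ^ t := by linarith
    exact_mod_cast this

lemma bary_mem (hη : ∀ z, 0 ≤ η z) (t a : ℕ) :
    (a : ℝ) * 2 ^ t ≤ bary η Ω t a ∧ bary η Ω t a ≤ (a + 1) * 2 ^ t := by
  have hb := mass_mul_bary (Ω := Ω) hη t a
  by_cases h : mass η Ω t a = 0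
  · rw [bary, if_pos h]
    exact ⟨le_rfl, by have : (0 : ℝ) < 2 ^ t := by positivity
                      linarith⟩
  · have hpos : 0 < mass η Ω t a := lt_of_le_of_ne (mass_nonneg hη t a) (Ne.symm h)
    constructor
    · refine le_of_mul_le_mul_left ?_ hpos
      rw [hb, mass, Finset.sum_mul]
      exact Finset.sum_le_sum fun z hz => mul_le_mul_of_nonneg_left (le_of_mem_cell hz).1 (hη z)
    · refine le_of_mul_le_mul_left ?_ hpos
      rw [hb, mass, Finset.sum_mul]
      exact Finset.sum_le_sum fun z hz => mul_le_mul_of_nonneg_left (le_of_mem_cell hz).2 (hη z)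

lemma abs_sub_bary_kid (hη : ∀ z, 0 ≤ η z) {s m a b : ℕ} (hb : b ∈ kids m a) :
    |bary η Ω s b - bary η Ω (s + m) a| ≤ 2 ^ (s + m) := by
  have h1 := bary_mem (Ω := Ω) hη s b
  have h2 := bary_mem (Ω := Ω) hη (s + m) a
  rw [kids, Finset.mem_Ico] at hb
  have h3 : (a : ℝ) * 2 ^ m ≤ b := by exact_mod_cast hb.1
  have h4 : (b : ℝ) + 1 ≤ (a + 1) * 2 ^ m := by exact_mod_cast hb.2
  have hs : (0 : ℝ) < 2 ^ s := by positivity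
  have h5 := mul_le_mul_of_nonneg_right h3 hs.le
  have h6 := mul_le_mul_of_nonneg_right h4 hs.le
  rw [pow_add] at h2 ⊢
  rw [abs_le]
  constructor <;> nlinarith

/-- The variance on an interval is the variance of the barycentres of its descendants plus the
variance inside the descendants, which is at most `4 ^ s` per unit of mass. -/
lemma vari_le_kids (hη : ∀ z, 0 ≤ η z) (s m a : ℕ) :
    vari η Ω (s + m) a ≤ 4 ^ s * mass η Ω (s + m) a +
      ∑ b ∈ kids m a, mass η Ω s b * (bary η Ω s b - bary η Ω (s + m) a) ^ 2 := by
  rw [vari, sum_cell, mass_kids, Finset.mul_sum, ← Finset.sum_add_distrib]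
  refine Finset.sum_le_sum fun b _ => ?_
  set μ := bary η Ω (s + m) a
  set ν := bary η Ω s b with hν
  have e : ∑ z ∈ cell Ω s b, η z * ((z : ℝ) - μ) ^ 2 =
      ∑ z ∈ cell Ω s b, η z * ((z : ℝ) - ν) ^ 2 + mass η Ω s b * (ν - μ) ^ 2 := by
    have h1 : ∑ z ∈ cell Ω s b, η z * ((z : ℝ) - μ) ^ 2 =
        ∑ z ∈ cell Ω s b, (η z * ((z : ℝ) - ν) ^ 2 + 2 * (ν - μ) * (η z * z) +
          ((ν - μ) ^ 2 - 2 * (ν - μ) * ν) * η z) :=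
      Finset.sum_congr rfl fun z _ => by ring
    rw [h1, Finset.sum_add_distrib, Finset.sum_add_distrib, ← Finset.mul_sum, ← Finset.mul_sum,
      ← mass_mul_bary hη, ← hν]
    rw [show ∑ z ∈ cell Ω s b, η z = mass η Ω s b from rfl]
    ring
  rw [e]
  refine add_le_add ?_ le_rfl
  rw [mass, Finset.mul_sum]
  refine Finset.sum_le_sum fun z hz => ?_
  rw [mul_comm]
  refine mul_le_mul_of_nonneg_right ?_ (hη z)
  have h1 := le_of_mem_cell hz
  have h2 := bary_mem (Ω := Ω) hη s b
  have h4 : (4 : ℝ) ^ s = (2 ^ s) ^ 2 := by rw [← pow_mul, mul_comm, pow_mul]; norm_num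
  rw [h4]
  apply sq_le_sq'
  · linarith
  · linarith

variable (η Ω)

/-- The level `t` is good for `z` when the variance of `η` on the dyadic interval of length `2^t`
around `z` is large, or when `z` lies in an exceptionally light descendant, `L` generations below,
of that interval. -/
def Good (ρ κ₀ : ℝ) (L t z : ℕ) : Prop :=
  ρ * 4 ^ t * mass η Ω t (z / 2 ^ t) ≤ vari η Ω t (z / 2 ^ t) ∨
    mass η Ω (t - L) (z / 2 ^ (t - L)) < κ₀ * mass η Ω t (z / 2 ^ t)

variable {η Ω}

/-- Whether level `s + m` is good for `z` is decided by the interval of length `2^s` around `z`. -/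
lemma good_iff {ρ κ₀ : ℝ} {L m s b z : ℕ} (hL : L ≤ m) (hz : z / 2 ^ s = b) :
    Good η Ω ρ κ₀ L (s + m) z ↔ Good η Ω ρ κ₀ L (s + m) (b * 2 ^ s) := by
  have h : b * 2 ^ s / 2 ^ s = b := Nat.mul_div_cancel _ (by positivity)
  rw [Good, Good, show s + m - L = s + (m - L) by omega, div_add, div_add, div_add, div_add, hz, h]

/-- An interval has `2 ^ L` descendants `L` generations below, so the light ones have little total
mass. -/
lemma light_le (hη : ∀ z, 0 ≤ η z) {κ₀ : ℝ} (hκ₀ : 0 ≤ κ₀) (L m s a : ℕ) (hL : L ≤ m) :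
    ∑ b ∈ kids m a, (if mass η Ω (s + m - L) (b / 2 ^ (m - L)) < κ₀ * mass η Ω (s + m) a
      then mass η Ω s b else 0) ≤ 2 ^ L * κ₀ * mass η Ω (s + m) a := by
  set M := mass η Ω (s + m) a with hM
  have hM0 : 0 ≤ M := mass_nonneg hη _ _
  have e1 : ∑ b ∈ kids m a, (if mass η Ω (s + m - L) (b / 2 ^ (m - L)) < κ₀ * M
      then mass η Ω s b else 0) = ∑ z ∈ cell Ω (s + m) a,
      (if mass η Ω (s + m - L) (z / 2 ^ (s + m - L)) < κ₀ * M then η z else 0) := by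
    rw [sum_cell]
    refine Finset.sum_congr rfl fun b _ => ?_
    have : ∀ z ∈ cell Ω s b,
        (if mass η Ω (s + m - L) (z / 2 ^ (s + m - L)) < κ₀ * M then η z else 0) =
        (if mass η Ω (s + m - L) (b / 2 ^ (m - L)) < κ₀ * M then η z else 0) := by
      intro z hz
      rw [show s + m - L = s + (m - L) by omega, div_add, (mem_cell.1 hz).2]
    rw [Finset.sum_congr rfl this]
    split_ifs
    · rfl
    · simp
  have hκ : ∀ c ∈ kids L a, ∑ z ∈ cell Ω (s + m - L) c,
      (if mass η Ω (s + m - L) (z / 2 ^ (s + m - L)) < κ₀ * M then η z else 0) ≤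
      max 0 (κ₀ * M) := by
    intro c _
    have : ∀ z ∈ cell Ω (s + m - L) c,
        (if mass η Ω (s + m - L) (z / 2 ^ (s + m - L)) < κ₀ * M then η z else 0) =
        (if mass η Ω (s + m - L) c < κ₀ * M then η z else 0) := by
      intro z hz
      rw [(mem_cell.1 hz).2]
    rw [Finset.sum_congr rfl this]
    split_ifs with h
    · exact h.le.trans (le_max_right _ _)
    · simp
  rw [e1]
  rw [max_eq_right (mul_nonneg hκ₀ hM0)] at hκ
  rw [show s + m = (s + m - L) + L by omega, sum_cell]
  rw [show s + m - L + L - L = s + m - L by omega]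
  refine (Finset.sum_le_sum hκ).trans ?_
  have : (kids L a).card = 2 ^ L := by
    rw [kids, Nat.card_Ico, ← Nat.sub_mul]; simp
  simp [this, mul_assoc]

end Tree

/-! ### Multiscale induction -/

section Multiscale

/-- The numerical conditions under which `CentredFamily.step` applies at every scale of the
dyadic tree. -/
structure Admissible (m N R P L : ℕ) (T τ ρ κ₀ : ℝ) : Prop where
  one_le_m : 1 ≤ m
  L_le : L ≤ m
  one_le_N : 1 ≤ N
  one_le_R : 1 ≤ R
  P_le : P + 1 ≤ 2 ^ m
  one_le_T : 1 ≤ T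
  rho_nonneg : 0 ≤ ρ
  kappa_nonneg : 0 ≤ κ₀
  tau_nonneg : 0 ≤ τ
  rho_le : 1 / 4 ^ m ≤ ρ / 2
  var_le : 4 * (N : ℝ) ^ 2 * (R : ℝ) ^ 2 ≤ τ * 4 ^ m * (ρ / 2)

variable {η : ℕ → ℝ} {Ω : Finset ℕ} {m N R P L k : ℕ} {T τ ρ κ₀ : ℝ}

lemma stepConst_nonneg (m N R P : ℕ) {T : ℝ} (hT : 1 ≤ T) (τ κ : ℝ) :
    0 ≤ stepConst m N R P T τ κ := by
  unfold stepConst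
  have : 0 ≤ T := by linarith
  positivity

/-- Descending `m` generations in each of the `4 ^ m` coordinates. -/
lemma tree_step (hη : ∀ z, 0 ≤ η z) (H : Admissible m N R P L T τ ρ κ₀) (hk : k = 4 ^ m)
    (s : ℕ) (a : Fin k → ℕ) (x : ℝ) :
    ∑ b ∈ Fintype.piFinset (fun i => kids m (a i)), (∏ i, mass η Ω s (b i)) *
      (Real.exp (-(|x - ∑ i, bary η Ω s (b i)| / 2 ^ (s + m))) *
        ∏ i, (if Good η Ω ρ κ₀ L (s + m) (b i * 2 ^ s) then rew m else 1)) ≤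
    stepConst m N R P T τ (2 ^ L * κ₀) * ((∏ i, mass η Ω (s + m) (a i)) *
      Real.exp (-(|x - ∑ i, bary η Ω (s + m) (a i)| / 2 ^ (s + m + m)))) := by
  by_cases hz : ∃ i, mass η Ω (s + m) (a i) = 0
  · obtain ⟨i, hi⟩ := hz
    rw [Finset.prod_eq_zero (Finset.mem_univ i) hi, zero_mul, mul_zero]
    refine le_of_eq (Finset.sum_eq_zero fun b hb => ?_)
    rw [mass_kids, Finset.sum_eq_zero_iff_of_nonneg fun b _ => mass_nonneg hη _ _] at hi
    rw [Finset.prod_eq_zero (Finset.mem_univ i) (hi _ (Fintype.mem_piFinset.1 hb i)), zero_mul]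
  push Not at hz
  have hpos : ∀ i, 0 < mass η Ω (s + m) (a i) := fun i =>
    lt_of_le_of_ne (mass_nonneg hη _ _) (Ne.symm (hz i))
  have h2 : (0 : ℝ) < 2 ^ (s + m) := by positivity
  set p : Fin k → ℕ → ℝ := fun i b => mass η Ω s b / mass η Ω (s + m) (a i) with hp
  set d : Fin k → ℕ → ℝ := fun i b =>
    (bary η Ω s b - bary η Ω (s + m) (a i)) / 2 ^ (s + m) with hd
  have hsum : ∀ i, ∑ b ∈ kids m (a i), mass η Ω s b * bary η Ω s b =
      mass η Ω (s + m) (a i) * bary η Ω (s + m) (a i) := by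
    intro i
    rw [mass_mul_bary hη, sum_cell]
    exact Finset.sum_congr rfl fun b _ => mass_mul_bary hη s b
  have F : CentredFamily k (fun i => kids m (a i)) p d :=
    { nonneg := fun i b _ => div_nonneg (mass_nonneg hη _ _) (mass_nonneg hη _ _)
      total := fun i => by
        simp only [hp]
        rw [← Finset.sum_div, ← mass_kids, div_self (hz i)]
      centred := fun i => by
        have : ∀ b ∈ kids m (a i), p i b * d i b =
            (mass η Ω s b * bary η Ω s b - mass η Ω s b * bary η Ω (s + m) (a i)) /
              (mass η Ω (s + m) (a i) * 2 ^ (s + m)) := fun b _ => by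
          simp only [hp, hd]; field_simp
        rw [Finset.sum_congr rfl this, ← Finset.sum_div, Finset.sum_sub_distrib, hsum,
          ← Finset.sum_mul, ← mass_kids, sub_self, zero_div]
      bounded := fun i b hb => by
        simp only [hd]
        rw [abs_div, abs_of_pos h2, div_le_one h2]
        exact abs_sub_bary_kid hη hb }
  have key := F.step m hk H.one_le_m (fun i b => Good η Ω ρ κ₀ L (s + m) (b * 2 ^ s))
    (ρ / 2) τ (2 ^ L * κ₀) T N R P (by linarith [H.rho_nonneg])
    (mul_nonneg (by positivity) H.kappa_nonneg) H.tau_nonneg H.one_le_N H.one_le_R H.P_le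
    H.one_le_T ?_ H.var_le ((x - ∑ i, bary η Ω (s + m) (a i)) / 2 ^ (s + m))
  · have hPpos : 0 < ∏ i, mass η Ω (s + m) (a i) := Finset.prod_pos fun i _ => hpos i
    have e1 : |(x - ∑ i, bary η Ω (s + m) (a i)) / 2 ^ (s + m)| / 2 ^ m =
        |x - ∑ i, bary η Ω (s + m) (a i)| / 2 ^ (s + m + m) := by
      rw [abs_div, abs_of_pos h2, div_div, ← pow_add]
    rw [e1] at key
    have e2 : ∀ b : Fin k → ℕ, |(x - ∑ i, bary η Ω (s + m) (a i)) / 2 ^ (s + m) -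
        ∑ i, d i (b i)| = |x - ∑ i, bary η Ω s (b i)| / 2 ^ (s + m) := by
      intro b
      simp only [hd]
      rw [← Finset.sum_div, ← sub_div, abs_div, abs_of_pos h2, Finset.sum_sub_distrib]
      congr 2; ring
    have e3 : ∀ b : Fin k → ℕ, ∏ i, p i (b i) =
        (∏ i, mass η Ω s (b i)) / ∏ i, mass η Ω (s + m) (a i) := fun b => by
      simp only [hp]; rw [Finset.prod_div_distrib]
    simp only [e2, e3] at key
    have := mul_le_mul_of_nonneg_left key hPpos.le
    rw [Finset.mul_sum] at this
    refine le_trans (le_of_eq (Finset.sum_congr rfl fun b _ => ?_)) (this.trans (le_of_eq ?_))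
    · field_simp
    · ring
  -- a good interval of small variance collects its reward on light descendants only
  intro i
  by_cases hv : ρ * 4 ^ (s + m) * mass η Ω (s + m) (a i) ≤ vari η Ω (s + m) (a i)
  · left
    have h1 := hv.trans (vari_le_kids hη s m (a i))
    have e : ∑ b ∈ kids m (a i), p i b * d i b ^ 2 =
        (∑ b ∈ kids m (a i), mass η Ω s b * (bary η Ω s b - bary η Ω (s + m) (a i)) ^ 2) /
          (mass η Ω (s + m) (a i) * 4 ^ (s + m)) := by
      rw [Finset.sum_div]
      refine Finset.sum_congr rfl fun b _ => ?_
      have : (4 : ℝ) ^ (s + m) = (2 ^ (s + m)) ^ 2 := by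
        rw [← pow_mul, mul_comm, pow_mul]; norm_num
      simp only [hp, hd]
      rw [this]; field_simp
    rw [e, le_div_iff₀ (mul_pos (hpos i) (by positivity))]
    have h3 := H.rho_le
    rw [div_le_iff₀ (by positivity)] at h3
    have h4 := mul_le_mul_of_nonneg_right h3 (mul_nonneg (by positivity : (0 : ℝ) ≤ 4 ^ s)
      (hpos i).le)
    rw [pow_add] at h1 ⊢
    nlinarith
  · right
    have h1 := light_le (Ω := Ω) hη H.kappa_nonneg L m s (a i) H.L_le
    rw [← div_le_iff₀ (hpos i), Finset.sum_div] at h1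
    refine le_trans (Finset.sum_le_sum fun b hb => ?_) h1
    have hb' := mem_kids.1 hb
    have hbs : b * 2 ^ s / 2 ^ s = b := Nat.mul_div_cancel _ (by positivity)
    have : Good η Ω ρ κ₀ L (s + m) (b * 2 ^ s) ↔
        mass η Ω (s + m - L) (b / 2 ^ (m - L)) < κ₀ * mass η Ω (s + m) (a i) := by
      have hL := H.L_le
      rw [Good, div_add, hbs, hb', or_iff_right hv, show s + m - L = s + (m - L) by omega,
        div_add, hbs]
    by_cases hg : Good η Ω ρ κ₀ L (s + m) (b * 2 ^ s)
    · rw [if_pos hg, if_pos (this.1 hg)]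
    · rw [if_neg hg, if_neg (fun h => hg (this.2 h)), zero_div]

/-- The measure `η` rewarded for the good levels among `s₀ + m, …, s₀ + j m`. -/
def wt (η : ℕ → ℝ) (Ω : Finset ℕ) (ρ κ₀ : ℝ) (L m s₀ j z : ℕ) : ℝ :=
  η z * ∏ i ∈ Finset.range j, (if Good η Ω ρ κ₀ L (s₀ + (i + 1) * m) z then rew m else 1)

lemma sum_pi_cell (s m : ℕ) (a : Fin k → ℕ) (F : (Fin k → ℕ) → ℝ) :
    ∑ z ∈ Fintype.piFinset (fun i => cell Ω (s + m) (a i)), F z =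
      ∑ b ∈ Fintype.piFinset (fun i => kids m (a i)),
        ∑ z ∈ Fintype.piFinset (fun i => cell Ω s (b i)), F z := by
  rw [← Finset.sum_fiberwise_of_maps_to (t := Fintype.piFinset (fun i => kids m (a i)))
    (g := fun z i => z i / 2 ^ s)]
  · refine Finset.sum_congr rfl fun b hb => Finset.sum_congr ?_ fun _ _ => rfl
    ext z
    rw [Finset.mem_filter, Fintype.mem_piFinset, Fintype.mem_piFinset]
    constructor
    · rintro ⟨h1, h2⟩ i
      exact mem_cell.2 ⟨(mem_cell.1 (h1 i)).1, congrFun h2 i⟩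
    · intro h
      exact ⟨fun i => cell_subset_of_kid (Fintype.mem_piFinset.1 hb i) (h i),
        funext fun i => (mem_cell.1 (h i)).2⟩
  · intro z hz
    rw [Fintype.mem_piFinset] at hz ⊢
    intro i
    rw [mem_kids, ← div_add]
    exact (mem_cell.1 (hz i)).2

/-- The rewarded `k`-fold convolution of `η`, started from `k` dyadic intervals of length
`2 ^ (s₀ + j m)`, loses a factor `stepConst` at each of the `j` steps. The bound carries an exponential weight
centred at the sum of the barycentres, which makes the induction on `j` possible. -/
lemma multiscale (hη : ∀ z, 0 ≤ η z) (H : Admissible m N R P L T τ ρ κ₀) (hk : k = 4 ^ m)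
    (s₀ j : ℕ) : ∀ (a : Fin k → ℕ) (x : ℕ),
    ∑ z ∈ Fintype.piFinset (fun i => cell Ω (s₀ + j * m) (a i)),
      (∏ i, wt η Ω ρ κ₀ L m s₀ j (z i)) * (if ∑ i, z i = x then 1 else 0) ≤
    stepConst m N R P T τ (2 ^ L * κ₀) ^ j * Real.exp (2 ^ m) *
      ((∏ i, mass η Ω (s₀ + j * m) (a i)) *
        Real.exp (-(|(x : ℝ) - ∑ i, bary η Ω (s₀ + j * m) (a i)| / 2 ^ (s₀ + j * m + m)))) := by
  induction j with
  | zero =>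
    intro a x
    have e : ∏ i, mass η Ω (s₀ + 0 * m) (a i) =
        ∑ z ∈ Fintype.piFinset (fun i => cell Ω (s₀ + 0 * m) (a i)), ∏ i, η (z i) := by
      simp only [mass]
      exact Finset.prod_univ_sum _ _
    rw [e, pow_zero, one_mul, Finset.sum_mul, Finset.mul_sum]
    refine Finset.sum_le_sum fun z hz => ?_
    have hη0 : 0 ≤ ∏ i, η (z i) := Finset.prod_nonneg fun i _ => hη _
    simp only [wt, Finset.range_zero, Finset.prod_empty, mul_one]
    split_ifs with hx
    · rw [mul_one, mul_left_comm, ← Real.exp_add]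
      refine le_mul_of_one_le_right hη0 (Real.one_le_exp ?_)
      rw [Fintype.mem_piFinset] at hz
      simp only [zero_mul, add_zero] at hz ⊢
      have h1 : |(x : ℝ) - ∑ i, bary η Ω s₀ (a i)| ≤ ∑ i : Fin k, (2 : ℝ) ^ s₀ := by
        rw [← hx]; push_cast
        rw [← Finset.sum_sub_distrib]
        refine (Finset.abs_sum_le_sum_abs _ _).trans (Finset.sum_le_sum fun i _ => ?_)
        have h1 := le_of_mem_cell (hz i)
        have h2 := bary_mem (Ω := Ω) hη s₀ (a i)
        rw [abs_le]; constructor <;> linarith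
      have h2 : ∑ i : Fin k, (2 : ℝ) ^ s₀ = 2 ^ m * 2 ^ (s₀ + m) := by
        simp only [Finset.sum_const, Finset.card_univ, Fintype.card_fin, nsmul_eq_mul, hk]
        push_cast
        rw [show (4 : ℝ) = 2 * 2 by norm_num, mul_pow, pow_add]; ring
      rw [h2, ← div_le_iff₀ (by positivity)] at h1
      linarith
    · rw [mul_zero]; positivity
  | succ j ih =>
    intro a x
    set s := s₀ + j * m with hs
    have hs' : s₀ + (j + 1) * m = s + m := by rw [hs]; ring
    have hK := stepConst_nonneg m N R P H.one_le_T τ (2 ^ L * κ₀)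
    set K := stepConst m N R P T τ (2 ^ L * κ₀) with hKdef
    rw [hs', sum_pi_cell]
    have hrew := one_le_rew m
    have h1 : ∀ b : Fin k → ℕ, ∑ z ∈ Fintype.piFinset (fun i => cell Ω s (b i)),
        (∏ i, wt η Ω ρ κ₀ L m s₀ (j + 1) (z i)) * (if ∑ i, z i = x then (1 : ℝ) else 0) ≤
        K ^ j * Real.exp (2 ^ m) * ((∏ i, mass η Ω s (b i)) *
          (Real.exp (-(|(x : ℝ) - ∑ i, bary η Ω s (b i)| / 2 ^ (s + m))) *
          ∏ i, (if Good η Ω ρ κ₀ L (s + m) (b i * 2 ^ s) then rew m else 1))) := by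
      intro b
      have e : ∀ z ∈ Fintype.piFinset (fun i => cell Ω s (b i)),
          (∏ i, wt η Ω ρ κ₀ L m s₀ (j + 1) (z i)) * (if ∑ i, z i = x then (1 : ℝ) else 0) =
          (∏ i, wt η Ω ρ κ₀ L m s₀ j (z i)) * (if ∑ i, z i = x then (1 : ℝ) else 0) *
          ∏ i, (if Good η Ω ρ κ₀ L (s + m) (b i * 2 ^ s) then rew m else 1) := by
        intro z hz
        rw [Fintype.mem_piFinset] at hz
        rw [mul_right_comm, ← Finset.prod_mul_distrib]
        congr 1
        refine Finset.prod_congr rfl fun i _ => ?_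
        rw [wt, wt, Finset.prod_range_succ, hs', ← mul_assoc]
        congr 1
        simp only [good_iff (η := η) (Ω := Ω) (ρ := ρ) (κ₀ := κ₀) H.L_le (mem_cell.1 (hz i)).2]
      rw [Finset.sum_congr rfl e, ← Finset.sum_mul]
      refine (mul_le_mul_of_nonneg_right (ih b x) (Finset.prod_nonneg fun i _ => ?_)).trans
        (le_of_eq (by ring))
      split_ifs <;> linarith
    refine (Finset.sum_le_sum fun b _ => h1 b).trans ?_
    rw [← Finset.mul_sum]
    refine (mul_le_mul_of_nonneg_left (tree_step hη H hk s a x) (by positivity)).trans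
      (le_of_eq ?_)
    rw [pow_succ]; ring

end Multiscale

/-! ### Branching levels and good levels -/

section Counting

variable {η : ℕ → ℝ} {Ω : Finset ℕ}

/-- The mass at least doubles between the levels `t - l` and `t` around `z`. -/
def Branch (η : ℕ → ℝ) (Ω : Finset ℕ) (l t z : ℕ) : Prop :=
  2 * mass η Ω (t - l) (z / 2 ^ (t - l)) ≤ mass η Ω t (z / 2 ^ t)

lemma cell_mono {s t : ℕ} (hst : s ≤ t) (z : ℕ) :
    cell Ω s (z / 2 ^ s) ⊆ cell Ω t (z / 2 ^ t) := by
  obtain ⟨m, rfl⟩ := Nat.exists_eq_add_of_le hst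
  exact cell_subset_of_kid (mem_kids.2 (div_add z s m).symm)

lemma mass_mono (hη : ∀ z, 0 ≤ η z) {s t : ℕ} (hst : s ≤ t) (z : ℕ) :
    mass η Ω s (z / 2 ^ s) ≤ mass η Ω t (z / 2 ^ t) :=
  Finset.sum_le_sum_of_subset_of_nonneg (cell_mono hst z) fun _ _ _ => hη _

lemma card_le_of_spread {X : Finset ℕ} {l : ℕ} (h : ∀ s ∈ X, ∀ s' ∈ X, s' < s + l) :
    X.card ≤ l := by
  rcases X.eq_empty_or_nonempty with rfl | hX
  · simp
  · have : X ⊆ Finset.Ico (X.min' hX) (X.min' hX + l) := fun s hs =>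
      Finset.mem_Ico.2 ⟨X.min'_le s hs, h _ (X.min'_mem hX) s hs⟩
    simpa using Finset.card_le_card this

/-- If level `t` is bad for `z`, then by Chebyshev the mass of the part of its interval of length `2 ^ t`
outside the interval of length `2 ^ (t - L)` around `z` and its two neighbours is less than the mass
of that short interval. -/
lemma far_mass_lt (hη : ∀ z, 0 ≤ η z) {ρ κ₀ : ℝ} {L t z : ℕ} (hκ : 0 < κ₀)
    (hρκ : 4 * ρ * 4 ^ L ≤ κ₀ ^ 2) (hz : z ∈ Ω) (hz0 : 0 < η z) (hL : L ≤ t)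
    (hbad : ¬ Good η Ω ρ κ₀ L t z) :
    ∑ w ∈ (cell Ω t (z / 2 ^ t)).filter (fun w => ¬ (w / 2 ^ (t - L) ≤ z / 2 ^ (t - L) + 1 ∧
      z / 2 ^ (t - L) ≤ w / 2 ^ (t - L) + 1)), η w < mass η Ω (t - L) (z / 2 ^ (t - L)) := by
  obtain ⟨q, rfl⟩ := Nat.exists_eq_add_of_le' hL
  rw [Good, Nat.add_sub_cancel, not_or, not_le, not_lt] at hbad
  rw [Nat.add_sub_cancel]
  obtain ⟨hv, hE⟩ := hbad
  set c := z / 2 ^ q with hc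
  set a := z / 2 ^ (q + L) with ha
  set M := mass η Ω (q + L) a with hM
  set E := mass η Ω q c with hEdef
  set far := (cell Ω (q + L) a).filter (fun w => ¬ (w / 2 ^ q ≤ c + 1 ∧ c ≤ w / 2 ^ q + 1))
    with hfar
  set Rst := ∑ w ∈ far, η w with hR
  set μ := bary η Ω (q + L) a with hμ
  have hEpos : 0 < E := lt_of_lt_of_le hz0
    (Finset.single_le_sum (f := η) (fun w _ => hη w) (mem_cell.2 ⟨hz, rfl⟩))
  have hEM : E ≤ M := mass_mono hη (Nat.le_add_right q L) z
  have hRM : Rst ≤ M := Finset.sum_le_sum_of_subset_of_nonneg (Finset.filter_subset _ _)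
    fun _ _ _ => hη _
  have hR0 : 0 ≤ Rst := Finset.sum_nonneg fun _ _ => hη _
  have hMpos : 0 < M := by linarith
  have hvar : ∀ X ⊆ cell Ω (q + L) a, ∑ w ∈ X, η w * ((w : ℝ) - μ) ^ 2 ≤ vari η Ω (q + L) a :=
    fun X hX => Finset.sum_le_sum_of_subset_of_nonneg hX
      fun w _ _ => mul_nonneg (hη w) (sq_nonneg _)
  have h4 : (4 : ℝ) ^ q = (2 ^ q) ^ 2 := by rw [← pow_mul, mul_comm, pow_mul]; norm_num
  have hpt : ∀ w ∈ far, ∀ v ∈ cell Ω q c, (4 : ℝ) ^ q * (η w * η v) ≤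
      2 * (η w * ((w : ℝ) - μ) ^ 2 * η v + η w * (η v * ((v : ℝ) - μ) ^ 2)) := by
    intro w hw v hv
    have hw' := (Finset.mem_filter.1 hw).2
    have h1 := le_of_mem_cell hv
    have h2 := le_of_mem_cell (Ω := {w}) (t := q) (a := w / 2 ^ q) (z := w) (by simp [mem_cell])
    have hd : (4 : ℝ) ^ q ≤ ((w : ℝ) - v) ^ 2 := by
      rw [h4]
      have hp : (0 : ℝ) < 2 ^ q := by positivity
      rw [not_and_or, not_le, not_le] at hw'
      rcases hw' with h | h
      · have h' : (c : ℝ) + 2 ≤ (w / 2 ^ q : ℕ) := by exact_mod_cast h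
        have := mul_le_mul_of_nonneg_right h' hp.le
        apply sq_le_sq' <;> linarith
      · have h' : ((w / 2 ^ q : ℕ) : ℝ) + 2 ≤ c := by exact_mod_cast h
        have := mul_le_mul_of_nonneg_right h' hp.le
        rw [← neg_sq ((w : ℝ) - v)]
        apply sq_le_sq' <;> linarith
    have h3 : ((w : ℝ) - v) ^ 2 ≤ 2 * (((w : ℝ) - μ) ^ 2 + ((v : ℝ) - μ) ^ 2) := by
      nlinarith [sq_nonneg ((w : ℝ) - μ + (v - μ))]
    have := mul_le_mul_of_nonneg_left (hd.trans h3) (mul_nonneg (hη w) (hη v))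
    linarith
  have hsum : (4 : ℝ) ^ q * (Rst * E) ≤ 2 * (vari η Ω (q + L) a * M + M * vari η Ω (q + L) a) := by
    have e1 : (4 : ℝ) ^ q * (Rst * E) =
        ∑ w ∈ far, ∑ v ∈ cell Ω q c, (4 : ℝ) ^ q * (η w * η v) := by
      rw [hR, hEdef, mass, Finset.sum_mul_sum, Finset.mul_sum]
      exact Finset.sum_congr rfl fun w _ => Finset.mul_sum _ _ _
    rw [e1]
    refine (Finset.sum_le_sum fun w hw => Finset.sum_le_sum fun v hv => hpt w hw v hv).trans ?_
    have e2 : ∑ w ∈ far, ∑ v ∈ cell Ω q c,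
        2 * (η w * ((w : ℝ) - μ) ^ 2 * η v + η w * (η v * ((v : ℝ) - μ) ^ 2)) =
        2 * ((∑ w ∈ far, η w * ((w : ℝ) - μ) ^ 2) * E +
          Rst * ∑ v ∈ cell Ω q c, η v * ((v : ℝ) - μ) ^ 2) := by
      rw [hR, hEdef, mass, Finset.sum_mul_sum, Finset.sum_mul_sum, ← Finset.sum_add_distrib,
        Finset.mul_sum]
      refine Finset.sum_congr rfl fun w _ => ?_
      rw [← Finset.sum_add_distrib, Finset.mul_sum]
    rw [e2]
    have hv0 := vari_nonneg (Ω := Ω) hη (q + L) a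
    refine mul_le_mul_of_nonneg_left (add_le_add ?_ ?_) (by norm_num)
    · exact mul_le_mul (hvar _ (Finset.filter_subset _ _)) hEM hEpos.le hv0
    · exact mul_le_mul hRM (hvar _ (cell_mono (Nat.le_add_right q L) z))
        (Finset.sum_nonneg fun v _ => mul_nonneg (hη v) (sq_nonneg _)) hMpos.le
  have h5 : (4 : ℝ) ^ q * (Rst * E) < 4 ^ q * (4 * ρ * 4 ^ L * M ^ 2) := by
    have := mul_lt_mul_of_pos_right hv hMpos
    rw [pow_add] at this
    nlinarith
  have h6 : Rst * E < 4 * ρ * 4 ^ L * M ^ 2 := lt_of_mul_lt_mul_left h5 (by positivity)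
  have h7 : 4 * ρ * 4 ^ L * M ^ 2 ≤ (κ₀ * M) ^ 2 := by
    rw [mul_pow]; exact mul_le_mul_of_nonneg_right hρκ (sq_nonneg _)
  have h8 : (κ₀ * M) ^ 2 ≤ E ^ 2 := pow_le_pow_left₀ (by positivity) hE 2
  nlinarith

/-- Below a bad level there is almost no branching: near `z` the measure is carried by three
adjacent short intervals, and each neighbour of the central one makes at most `l` levels branch. The
lowest `l` levels are counted as branching. -/
lemma card_branch_le (hη : ∀ z, 0 ≤ η z) {ρ κ₀ : ℝ} {L t z : ℕ} (l : ℕ) (hκ : 0 < κ₀)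
    (hρκ : 4 * ρ * 4 ^ L ≤ κ₀ ^ 2) (hz : z ∈ Ω) (hz0 : 0 < η z) (hL : L ≤ t)
    (hbad : ¬ Good η Ω ρ κ₀ L t z) :
    ((Finset.Ioc (t - L) t).filter fun s => Branch η Ω l s z).card ≤ 3 * l := by
  have hfar := far_mass_lt hη hκ hρκ hz hz0 hL hbad
  set q := t - L with hq
  set c := z / 2 ^ q with hc
  -- the levels at which the neighbour `u` of `c` joins
  set U : ℕ → Finset ℕ := fun u => (Finset.Icc (q + l) t).filter fun s =>
    u / 2 ^ (s - q) = c / 2 ^ (s - q) ∧ u / 2 ^ (s - l - q) ≠ c / 2 ^ (s - l - q) with hU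
  have hUcard : ∀ u, (U u).card ≤ l := by
    intro u
    refine card_le_of_spread fun s hs s' hs' => ?_
    by_contra hlt
    rw [not_lt] at hlt
    simp only [hU, Finset.mem_filter, Finset.mem_Icc] at hs hs'
    refine hs'.2.2 ?_
    rw [show s' - l - q = (s - q) + (s' - l - s) by omega, div_add, div_add, hs.2.1]
  have hsub : ((Finset.Ioc q t).filter fun s => Branch η Ω l s z) ⊆
      Finset.Ioo q (q + l) ∪ (U (c + 1) ∪ U (c - 1)) := by
    intro s hs
    rw [Finset.mem_filter, Finset.mem_Ioc] at hs
    obtain ⟨⟨hs1, hs2⟩, hbr⟩ := hs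
    by_contra hnot
    simp only [Finset.mem_union, not_or, Finset.mem_Ioo, not_and, not_lt] at hnot
    obtain ⟨h1, h2, h3⟩ := hnot
    have hsl : q + l ≤ s := h1 hs1
    simp only [hU, Finset.mem_filter, Finset.mem_Icc, not_and, not_not] at h2 h3
    have h2' := h2 ⟨hsl, hs2⟩
    have h3' := h3 ⟨hsl, hs2⟩
    have hE : mass η Ω q c ≤ mass η Ω (s - l) (z / 2 ^ (s - l)) := mass_mono hη (by omega) z
    have hcov : cell Ω s (z / 2 ^ s) ⊆ cell Ω (s - l) (z / 2 ^ (s - l)) ∪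
        (cell Ω t (z / 2 ^ t)).filter
          (fun w => ¬ (w / 2 ^ q ≤ c + 1 ∧ c ≤ w / 2 ^ q + 1)) := by
      intro w hw
      rw [Finset.mem_union]
      by_cases hn : w / 2 ^ q ≤ c + 1 ∧ c ≤ w / 2 ^ q + 1
      · left
        have hw' := mem_cell.1 hw
        refine mem_cell.2 ⟨hw'.1, ?_⟩
        have e1 : w / 2 ^ q / 2 ^ (s - q) = c / 2 ^ (s - q) := by
          have h := hw'.2
          rw [show s = q + (s - q) by omega, div_add, div_add] at h
          simpa using h
        have e2 : w / 2 ^ q / 2 ^ (s - l - q) = c / 2 ^ (s - l - q) := by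
          have hv : ∀ v : ℕ, v ≤ c + 1 ∧ c ≤ v + 1 → v = c - 1 ∨ v = c ∨ v = c + 1 := by omega
          rcases hv _ hn with h | h | h
          · rw [h] at e1 ⊢; exact h3' e1
          · rw [h]
          · rw [h] at e1 ⊢; exact h2' e1
        have e3 : s - l = q + (s - l - q) := by omega
        rw [e3, div_add, div_add, e2]
      · right
        exact Finset.mem_filter.2 ⟨cell_mono hs2 z hw, hn⟩
    have hle : mass η Ω s (z / 2 ^ s) ≤ mass η Ω (s - l) (z / 2 ^ (s - l)) +
        ∑ w ∈ (cell Ω t (z / 2 ^ t)).filter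
          (fun w => ¬ (w / 2 ^ q ≤ c + 1 ∧ c ≤ w / 2 ^ q + 1)), η w := by
      refine (Finset.sum_le_sum_of_subset_of_nonneg hcov fun _ _ _ => hη _).trans ?_
      rw [mass, ← Finset.sum_union_inter]
      exact le_add_of_nonneg_right (Finset.sum_nonneg fun _ _ => hη _)
    rw [Branch] at hbr
    linarith
  refine (Finset.card_le_card hsub).trans ((Finset.card_union_le _ _).trans ?_)
  have h1 := Finset.card_union_le (U (c + 1)) (U (c - 1))
  have h2 := hUcard (c + 1)
  have h3 := hUcard (c - 1)
  have h4 : (Finset.Ioo q (q + l)).card ≤ l := by rw [Nat.card_Ioo]; omega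
  omega

/-- Double counting of the non-branching levels below bad ones: each bad level has at least
`L - 3l` of them among the `L` levels beneath it, and each level is counted at most `L` times. -/
lemma good_count (hη : ∀ z, 0 ≤ η z) {ρ κ₀ : ℝ} {L m n l z : ℕ} (hκ : 0 < κ₀)
    (hρκ : 4 * ρ * 4 ^ L ≤ κ₀ ^ 2) (hz : z ∈ Ω) (hz0 : 0 < η z) (hL : L ≤ m) (hl : 3 * l ≤ L)
    {γ : ℝ}
    (hbr : (1 - γ / 2) * (n : ℝ) ≤ ((Finset.range n).filter fun t => Branch η Ω l t z).card) :
    ((L : ℝ) - 3 * l) * ((n : ℝ) - m - ((Finset.Ico m n).filter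
      fun t => Good η Ω ρ κ₀ L t z).card) ≤ L * (γ / 2 * n) := by
  set bad := (Finset.Ico m n).filter fun t => ¬ Good η Ω ρ κ₀ L t z with hbad
  set nb := (Finset.range n).filter fun t => ¬ Branch η Ω l t z with hnb
  have hc1 : ((Finset.Ico m n).filter fun t => Good η Ω ρ κ₀ L t z).card + bad.card =
      (Finset.Ico m n).card := by
    rw [hbad]
    convert Finset.card_filter_add_card_filter_not (s := Finset.Ico m n)
      (fun t => Good η Ω ρ κ₀ L t z)
  have hc2 := Finset.card_filter_add_card_filter_not (s := Finset.range n)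
    (fun t => Branch η Ω l t z)
  rw [Nat.card_Ico] at hc1
  rw [Finset.card_range] at hc2
  have hdc : bad.card * (L - 3 * l) ≤ nb.card * L := by
    refine Finset.card_mul_le_card_mul (fun t s => s ∈ Finset.Ioc (t - L) t) ?_ ?_
    · intro t ht
      rw [hbad, Finset.mem_filter, Finset.mem_Ico] at ht
      have h1 := card_branch_le hη l hκ hρκ hz hz0 (hL.trans ht.1.1) ht.2
      have h2 := Finset.card_filter_add_card_filter_not (s := Finset.Ioc (t - L) t)
        (fun s => Branch η Ω l s z)
      rw [Nat.card_Ioc] at h2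
      have h3 : ((Finset.Ioc (t - L) t).filter fun s => ¬ Branch η Ω l s z) ⊆
          Finset.bipartiteAbove (fun t s => s ∈ Finset.Ioc (t - L) t) nb t := by
        intro s hs
        rw [Finset.mem_filter, Finset.mem_Ioc] at hs
        rw [Finset.mem_bipartiteAbove, hnb, Finset.mem_filter, Finset.mem_range, Finset.mem_Ioc]
        exact ⟨⟨by omega, hs.2⟩, hs.1⟩
      have h4 := Finset.card_le_card h3
      omega
    · intro s _
      have : Finset.bipartiteBelow (fun t s => s ∈ Finset.Ioc (t - L) t) bad s ⊆
          Finset.Ico s (s + L) := by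
        intro t ht
        rw [Finset.mem_bipartiteBelow, Finset.mem_Ioc, hbad, Finset.mem_filter,
          Finset.mem_Ico] at ht
        rw [Finset.mem_Ico]; omega
      simpa using Finset.card_le_card this
  have hdc' : (bad.card : ℝ) * ((L : ℝ) - 3 * l) ≤ nb.card * L := by
    have : ((L - 3 * l : ℕ) : ℝ) = (L : ℝ) - 3 * l := by push_cast [Nat.cast_sub hl]; ring
    rw [← this]; exact_mod_cast hdc
  have h1 : (n : ℝ) - m - ((Finset.Ico m n).filter fun t => Good η Ω ρ κ₀ L t z).card ≤
      bad.card := by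
    have : n ≤ m + ((Finset.Ico m n).filter fun t => Good η Ω ρ κ₀ L t z).card + bad.card := by
      omega
    have : (n : ℝ) ≤ m + ((Finset.Ico m n).filter fun t => Good η Ω ρ κ₀ L t z).card +
      bad.card := by exact_mod_cast this
    linarith
  have h2 : (nb.card : ℝ) ≤ γ / 2 * n := by
    have : (((Finset.range n).filter fun t => Branch η Ω l t z).card : ℝ) + nb.card = n := by
      exact_mod_cast hc2
    linarith
  have h3 : (0 : ℝ) ≤ (L : ℝ) - 3 * l := by
    have : ((3 * l : ℕ) : ℝ) ≤ L := by exact_mod_cast hl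
    push_cast at this; linarith
  calc _ ≤ ((L : ℝ) - 3 * l) * bad.card := mul_le_mul_of_nonneg_left h1 h3
    _ = bad.card * ((L : ℝ) - 3 * l) := mul_comm _ _
    _ ≤ _ := hdc'
    _ = L * nb.card := mul_comm _ _
    _ ≤ _ := mul_le_mul_of_nonneg_left h2 (Nat.cast_nonneg _)

end Counting

/-! ### Atoms of the iterated convolution -/

section SupBound

variable {η : ℕ → ℝ} {m N R P L k : ℕ} {T τ ρ κ₀ : ℝ}

lemma wt_eq (Ω : Finset ℕ) (s₀ j z : ℕ) : wt η Ω ρ κ₀ L m s₀ j z =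
    η z * rew m ^ ((Finset.range j).filter fun i => Good η Ω ρ κ₀ L (s₀ + (i + 1) * m) z).card := by
  rw [wt, Finset.prod_ite, Finset.prod_const, Finset.prod_const_one, mul_one]

/-- The levels split into residue classes modulo `m`, each of which `multiscale` treats separately. -/
lemma good_card_le (Ω : Finset ℕ) (hm : 1 ≤ m) (n z : ℕ) :
    ((Finset.Ico m n).filter fun t => Good η Ω ρ κ₀ L t z).card ≤
      ∑ s₀ ∈ Finset.range m, ((Finset.range (n / m + 2)).filter
        fun i => Good η Ω ρ κ₀ L (s₀ + (i + 1) * m) z).card := by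
  simp only [Finset.card_filter (s := Finset.range (n / m + 2))]
  rw [← Finset.sum_product', ← Finset.card_filter]
  refine Finset.card_le_card_of_injOn (fun t => (t % m, t / m - 1)) ?_ ?_
  · intro t ht
    rw [Finset.mem_coe, Finset.mem_filter, Finset.mem_Ico] at ht
    obtain ⟨⟨h1, h2⟩, h3⟩ := ht
    have h4 : 1 ≤ t / m := (Nat.one_le_div_iff (by omega)).2 h1
    have h5 : t / m ≤ n / m := Nat.div_le_div_right h2.le
    simp only [Finset.coe_filter, Set.mem_ofPred_eq, Finset.mem_product, Finset.mem_range]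
    refine ⟨⟨Nat.mod_lt _ (by omega), by omega⟩, ?_⟩
    rwa [Nat.sub_add_cancel h4, mul_comm, Nat.mod_add_div]
  · intro t ht t' ht' h
    rw [Finset.mem_coe, Finset.mem_filter, Finset.mem_Ico] at ht ht'
    have h4 : 1 ≤ t / m := (Nat.one_le_div_iff (by omega)).2 ht.1.1
    have h4' : 1 ≤ t' / m := (Nat.one_le_div_iff (by omega)).2 ht'.1.1
    simp only [Prod.mk.injEq] at h
    rw [← Nat.mod_add_div t m, ← Nat.mod_add_div t' m, h.1, show t / m = t' / m by omega]

/-- The `k`-fold convolution of the restriction of `η` to points with at least `g` good levels has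
no large atoms. -/
lemma sup_bound (hη : ∀ z, 0 ≤ η z) (H : Admissible m N R P L T τ ρ κ₀) (hk : k = 4 ^ m)
    (n : ℕ) (htot : ∑ z ∈ Finset.range (2 ^ n + 1), η z = 1) {A : Finset ℕ}
    (hA : A ⊆ Finset.range (2 ^ n + 1)) {g : ℝ}
    (hg : ∀ z ∈ A, 0 < η z → g ≤ ((Finset.Ico m n).filter
      fun t => Good η (Finset.range (2 ^ n + 1)) ρ κ₀ L t z).card) (x : ℕ) :
    ∑ z ∈ Fintype.piFinset (fun _ : Fin k => A),
      (∏ i, η (z i)) * (if ∑ i, z i = x then 1 else 0) ≤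
    m * (2 : ℝ) ^ (-g) * (stepConst m N R P T τ (2 ^ L * κ₀) ^ (n / m + 2) *
      Real.exp (2 ^ m)) := by
  set Ω := Finset.range (2 ^ n + 1) with hΩ
  set J := n / m + 2 with hJ
  have hm := H.one_le_m
  have hrew := one_le_rew m
  have hwt0 : ∀ s₀ z, 0 ≤ wt η Ω ρ κ₀ L m s₀ J z := fun s₀ z => by
    rw [wt_eq]; exact mul_nonneg (hη z) (by positivity)
  have hone : ∀ s₀, ∑ z ∈ Fintype.piFinset (fun _ : Fin k => A),
      (∏ i, wt η Ω ρ κ₀ L m s₀ J (z i)) * (if ∑ i, z i = x then (1 : ℝ) else 0) ≤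
      stepConst m N R P T τ (2 ^ L * κ₀) ^ J * Real.exp (2 ^ m) := by
    intro s₀
    have hcell : cell Ω (s₀ + J * m) 0 = Ω := by
      refine Finset.filter_true_of_mem fun z hz => Nat.div_eq_of_lt ?_
      rw [hΩ, Finset.mem_range] at hz
      have h1 : n + 1 ≤ s₀ + J * m := by
        have := Nat.div_add_mod n m
        have := Nat.mod_lt n hm
        rw [hJ, add_mul, mul_comm (n / m)]; omega
      have h2 : 2 ^ (n + 1) ≤ 2 ^ (s₀ + J * m) := Nat.pow_le_pow_right (by norm_num) h1
      have h3 : 1 ≤ 2 ^ n := Nat.one_le_two_pow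
      rw [pow_succ] at h2
      omega
    have h := multiscale (η := η) (Ω := Ω) hη H hk s₀ J (fun _ => 0) x
    have hmass : mass η Ω (s₀ + J * m) 0 = 1 := by rw [mass, hcell, htot]
    simp only [hcell, hmass, Finset.prod_const_one, one_mul] at h
    refine (Finset.sum_le_sum_of_subset_of_nonneg
      (Fintype.piFinset_subset _ _ fun _ => hA) fun z _ _ => ?_).trans (h.trans ?_)
    · exact mul_nonneg (Finset.prod_nonneg fun i _ => hwt0 _ _) (by split_ifs <;> norm_num)
    · have := stepConst_nonneg m N R P H.one_le_T τ (2 ^ L * κ₀)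
      refine mul_le_of_le_one_right (by positivity) ?_
      rw [Real.exp_le_one_iff, neg_nonpos]
      positivity
  have hpt : ∀ z ∈ Fintype.piFinset (fun _ : Fin k => A), ∏ i, η (z i) ≤
      (2 : ℝ) ^ (-g) * ∑ s₀ ∈ Finset.range m, ∏ i, wt η Ω ρ κ₀ L m s₀ J (z i) := by
    intro z hz
    rw [Fintype.mem_piFinset] at hz
    have hRHS : 0 ≤ (2 : ℝ) ^ (-g) * ∑ s₀ ∈ Finset.range m, ∏ i, wt η Ω ρ κ₀ L m s₀ J (z i) :=
      mul_nonneg (by positivity) (Finset.sum_nonneg fun s₀ _ =>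
        Finset.prod_nonneg fun i _ => hwt0 _ _)
    by_cases h0 : ∃ i, η (z i) = 0
    · obtain ⟨i, hi⟩ := h0
      rwa [Finset.prod_eq_zero (Finset.mem_univ i) hi]
    push Not at h0
    set c : ℕ → ℕ := fun s₀ => ∑ i, ((Finset.range J).filter
      fun j => Good η Ω ρ κ₀ L (s₀ + (j + 1) * m) (z i)).card with hc
    have hw : ∀ s₀, ∏ i, wt η Ω ρ κ₀ L m s₀ J (z i) = (∏ i, η (z i)) * rew m ^ c s₀ := by
      intro s₀
      simp only [wt_eq]
      rw [Finset.prod_mul_distrib, Finset.prod_pow_eq_pow_sum]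
    have hcs : (k : ℝ) * g ≤ ∑ s₀ ∈ Finset.range m, (c s₀ : ℝ) := by
      have h1 : (k : ℝ) * g = ∑ i : Fin k, g := by simp
      have h2 : ∑ s₀ ∈ Finset.range m, (c s₀ : ℝ) =
          ∑ i : Fin k, ((∑ s₀ ∈ Finset.range m, ((Finset.range J).filter
            fun j => Good η Ω ρ κ₀ L (s₀ + (j + 1) * m) (z i)).card : ℕ) : ℝ) := by
        simp only [hc]; push_cast; rw [Finset.sum_comm]
      rw [h1, h2]
      refine Finset.sum_le_sum fun i _ => ?_
      refine (hg (z i) (hz i) (lt_of_le_of_ne (hη _) (Ne.symm (h0 i)))).trans ?_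
      exact_mod_cast good_card_le Ω hm n (z i)
    -- some residue class of levels contains at least its share of good levels
    obtain ⟨s₀, hs₀, hcs₀⟩ : ∃ s₀ ∈ Finset.range m, (k : ℝ) * g / m ≤ c s₀ := by
      apply Finset.exists_le_of_sum_le (Finset.nonempty_range_iff.2 (by omega))
      have : (m : ℝ) ≠ 0 := by positivity
      rw [Finset.sum_const, Finset.card_range, nsmul_eq_mul]
      field_simp
      exact hcs
    have hr : (2 : ℝ) ^ g ≤ rew m ^ c s₀ := by
      rw [rew, ← Real.rpow_natCast, ← Real.rpow_mul (by norm_num)]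
      apply Real.rpow_le_rpow_of_exponent_le (by norm_num)
      have hkR : (k : ℝ) = 4 ^ m := by rw [hk]; push_cast; rfl
      have : (m : ℝ) ≠ 0 := by positivity
      calc g = (m : ℝ) / 4 ^ m * ((k : ℝ) * g / m) := by rw [hkR]; field_simp
        _ ≤ _ := by gcongr
    have hprod : 0 ≤ ∏ i, η (z i) := Finset.prod_nonneg fun i _ => hη _
    calc ∏ i, η (z i) = (2 : ℝ) ^ (-g) * ((∏ i, η (z i)) * (2 : ℝ) ^ g) := by
          rw [mul_left_comm, ← Real.rpow_add (by norm_num)]; simp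
      _ ≤ (2 : ℝ) ^ (-g) * ∏ i, wt η Ω ρ κ₀ L m s₀ J (z i) := by rw [hw]; gcongr
      _ ≤ _ := by
        refine mul_le_mul_of_nonneg_left ?_ (by positivity)
        exact Finset.single_le_sum (f := fun s₀ => ∏ i, wt η Ω ρ κ₀ L m s₀ J (z i))
          (fun s _ => Finset.prod_nonneg fun i _ => hwt0 _ _) hs₀
  calc _ ≤ ∑ z ∈ Fintype.piFinset (fun _ : Fin k => A), ((2 : ℝ) ^ (-g) *
        ∑ s₀ ∈ Finset.range m, ∏ i, wt η Ω ρ κ₀ L m s₀ J (z i)) *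
          (if ∑ i, z i = x then 1 else 0) := by
        refine Finset.sum_le_sum fun z hz => mul_le_mul_of_nonneg_right (hpt z hz) ?_
        split_ifs <;> norm_num
    _ = (2 : ℝ) ^ (-g) * ∑ s₀ ∈ Finset.range m, ∑ z ∈ Fintype.piFinset (fun _ : Fin k => A),
        (∏ i, wt η Ω ρ κ₀ L m s₀ J (z i)) * (if ∑ i, z i = x then 1 else 0) := by
        rw [Finset.sum_comm, Finset.mul_sum]
        refine Finset.sum_congr rfl fun z _ => ?_
        rw [mul_assoc, Finset.sum_mul]
    _ ≤ (2 : ℝ) ^ (-g) * ∑ s₀ ∈ Finset.range m,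
        (stepConst m N R P T τ (2 ^ L * κ₀) ^ J * Real.exp (2 ^ m)) := by
        refine mul_le_mul_of_nonneg_left (Finset.sum_le_sum fun s₀ _ => hone s₀) (by positivity)
    _ = _ := by
        rw [Finset.sum_const, Finset.card_range, nsmul_eq_mul]; ring

end SupBound

/-! ### Choice of parameters -/

section Parameters

lemma eventually_linear_le_pow (a b : ℝ) {r : ℝ} (hr : 1 < r) :
    ∀ᶠ m : ℕ in Filter.atTop, a * m + b ≤ r ^ m := by
  have h1 := (tendsto_pow_const_div_const_pow_of_one_lt 1 hr).const_mul a
  have h0 := (tendsto_pow_const_div_const_pow_of_one_lt 0 hr).const_mul b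
  have h := h1.add h0
  rw [mul_zero, mul_zero, add_zero] at h
  filter_upwards [h.eventually_le_const (zero_lt_one)] with m hm
  have hrm : 0 < r ^ m := by positivity
  rw [pow_one, pow_zero, mul_div_assoc', mul_div_assoc', ← add_div, div_le_one hrm, mul_one] at hm
  exact hm

set_option maxHeartbeats 1000000 in
/-- The parameters can be chosen so that one step of `m` levels loses at most `2 ^ (ε m)`. Here `L`
and `P` depend on `ε` and `l` only, and `m` is large in terms of them. -/
lemma exists_params {ε : ℝ} (hε : 0 < ε) (l : ℕ) :
    ∃ (m N R P L : ℕ) (T τ ρ κ₀ : ℝ), Admissible m N R P L T τ ρ κ₀ ∧ 0 < κ₀ ∧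
      4 * ρ * 4 ^ L ≤ κ₀ ^ 2 ∧ 3 * l < L ∧ (L : ℝ) ≤ (1 + ε) * ((L : ℝ) - 3 * l) ∧
      stepConst m N R P T τ (2 ^ L * κ₀) ≤ (2 : ℝ) ^ (ε * m) := by
  obtain ⟨L, hL⟩ := exists_nat_gt (3 * l * (1 + ε) / ε)
  obtain ⟨P, hP⟩ := exists_nat_gt (4 / ε)
  rw [div_lt_iff₀ hε] at hL hP
  have hlL : ((3 * l : ℕ) : ℝ) < L := by
    push_cast
    have : (0 : ℝ) ≤ 3 * l := by positivity
    by_contra h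
    rw [not_lt] at h
    nlinarith
  set κ₀ : ℝ := ε / 16 / 2 ^ L with hκ₀
  have hκpos : 0 < κ₀ := by positivity
  set ρ : ℝ := κ₀ ^ 2 / (4 * 4 ^ L) with hρ
  have hρpos : 0 < ρ := by positivity
  set τ : ℝ := ε / 4 with hτ
  set σ : ℝ := Real.sqrt (τ * ρ / 32) with hσ
  have hσpos : 0 < σ := Real.sqrt_pos.2 (by positivity)
  have hσsq : σ ^ 2 = τ * ρ / 32 := Real.sq_sqrt (by positivity)
  have hr : (1 : ℝ) < 2 ^ (ε / 2) := Real.one_lt_rpow (by norm_num) (by positivity)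
  set D : ℝ := 2 + 2 * Real.exp ((P + 1) ^ 2) + 2 * Real.exp 4 with hD
  obtain ⟨m, hm1, hmL, hmP, hmρ, hmσ, hmD⟩ := ((Filter.eventually_ge_atTop 1).and
    ((Filter.eventually_ge_atTop L).and
    ((eventually_linear_le_pow 0 ((P + 1 : ℕ) : ℝ) (one_lt_two)).and
    ((eventually_linear_le_pow 0 (2 / ρ) (by norm_num : (1 : ℝ) < 4)).and
    ((eventually_linear_le_pow (1 / σ) 0 (one_lt_two)).and
    (eventually_linear_le_pow (32 / σ) D hr)))))).exists
  rw [zero_mul, zero_add] at hmP hmρ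
  rw [add_zero] at hmσ
  have hmpos : (0 : ℝ) < m := by exact_mod_cast hm1
  have h2m : (0 : ℝ) < 2 ^ m := by positivity
  -- `N` is as large as the variance condition permits
  set y : ℝ := σ * 2 ^ m / m with hy
  have hy1 : 1 ≤ y := by
    rw [hy, le_div_iff₀ hmpos, one_mul]
    rw [div_mul_eq_mul_div, one_mul, div_le_iff₀ hσpos] at hmσ
    linarith
  set N := ⌊y⌋₊ with hN
  have hN1 : 1 ≤ N := Nat.le_floor (by exact_mod_cast hy1)
  have hN1' : (1 : ℝ) ≤ N := by exact_mod_cast hN1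
  have hNy : (N : ℝ) ≤ y := Nat.floor_le (by linarith)
  have hyN : y ≤ 2 * N := by
    have := Nat.lt_floor_add_one y
    linarith
  set T : ℝ := 2 ^ (ε / 4 * m) with hT
  have hT1 : 1 ≤ T := Real.one_le_rpow (by norm_num) (by positivity)
  refine ⟨m, N, 2 * m, P, L, T, τ, ρ, κ₀, ?_, hκpos, ?_, by exact_mod_cast hlL, by linarith, ?_⟩
  · refine ⟨hm1, hmL, hN1, by omega, by exact_mod_cast hmP, hT1, hρpos.le, hκpos.le,
      by positivity, ?_, ?_⟩
    · rw [div_le_iff₀ hρpos] at hmρ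
      rw [div_le_iff₀ (by positivity)]
      linarith
    · have h1 : (N : ℝ) * m ≤ σ * 2 ^ m := by
        rw [hy, le_div_iff₀ hmpos] at hNy; exact hNy
      have h2 := pow_le_pow_left₀ (by positivity) h1 2
      have h4 : (4 : ℝ) ^ m = (2 ^ m) ^ 2 := by rw [← pow_mul, mul_comm, pow_mul]; norm_num
      rw [mul_pow, mul_pow, hσsq, ← h4] at h2
      push_cast
      nlinarith
  · rw [hρ]; apply le_of_eq; field_simp
  · have e1 : (2 : ℝ) ^ (ε * m) = 2 ^ (ε / 2 * m) * 2 ^ (ε / 2 * m) := by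
      rw [← Real.rpow_add (by norm_num)]; congr 1; ring
    set X : ℝ := 2 ^ (ε / 2 * m) with hX
    have hX1 : 1 ≤ X := Real.one_le_rpow (by norm_num) (by positivity)
    have hTX : T ≤ X := Real.rpow_le_rpow_of_exponent_le (by norm_num) (by nlinarith)
    have hXX : 32 / σ * m + D ≤ X := by
      rw [hX, Real.rpow_mul (by norm_num), Real.rpow_natCast]; exact hmD
    have hTT : (2 : ℝ) ^ (τ * m) = T := rfl
    have hTP : (2 : ℝ) ^ m ≤ T ^ P := by
      rw [hT, ← Real.rpow_natCast, ← Real.rpow_natCast, ← Real.rpow_mul (by norm_num)]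
      apply Real.rpow_le_rpow_of_exponent_le (by norm_num)
      nlinarith
    have hexp : Real.exp (-(((2 * m : ℕ) : ℝ) / 2)) ≤ 1 / 2 ^ m := by
      rw [Real.exp_neg, one_div]
      apply inv_anti₀ h2m
      have : ((2 * m : ℕ) : ℝ) / 2 = m * 1 := by push_cast; ring
      rw [this, Real.exp_nat_mul]
      exact pow_le_pow_left₀ (by norm_num) (by linarith [Real.add_one_le_exp (1 : ℝ)]) m
    have h16 : 2 ^ m * (16 / (N : ℝ)) ≤ 32 / σ * m := by
      have : σ * 2 ^ m ≤ 2 * N * m := by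
        rw [hy, div_le_iff₀ hmpos] at hyN; exact hyN
      rw [mul_div_assoc', div_le_iff₀ (by linarith), div_mul_eq_mul_div, div_mul_eq_mul_div,
        le_div_iff₀ hσpos]
      nlinarith
    have hκ : 2 ^ L * κ₀ = ε / 16 := by rw [hκ₀]; field_simp
    have hexp2 : Real.exp (2 * (2 ^ L * κ₀) * m) ≤ T := by
      rw [hκ, hT, Real.rpow_def_of_pos (by norm_num)]
      apply Real.exp_le_exp.2
      have := Real.log_two_gt_d9
      nlinarith [mul_pos hε hmpos]
    have hTsq : T * T = X := by
      rw [hT, ← Real.rpow_add (by norm_num)]; congr 1; ring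
    have hA : 2 ^ m * (T * (16 / N + Real.exp (-(((2 * m : ℕ) : ℝ) / 2)))) ≤
        T * (32 / σ * m + 1) := by
      have : 2 ^ m * Real.exp (-(((2 * m : ℕ) : ℝ) / 2)) ≤ 1 := by
        calc _ ≤ (2 : ℝ) ^ m * (1 / 2 ^ m) := by gcongr
          _ = 1 := by field_simp
      calc _ = T * (2 ^ m * (16 / (N : ℝ)) + 2 ^ m * Real.exp (-(((2 * m : ℕ) : ℝ) / 2))) := by
            ring
        _ ≤ _ := by gcongr
    have hB : 2 ^ m * (2 * Real.exp ((P + 1) ^ 2) / T ^ P) ≤ 2 * Real.exp ((P + 1) ^ 2) := by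
      rw [mul_div_assoc', div_le_iff₀ (by positivity)]
      rw [mul_comm]
      gcongr
    have hC : T * (2 * Real.exp 4 + Real.exp (2 * (2 ^ L * κ₀) * m)) ≤
        T * (2 * Real.exp 4) + X := by
      rw [mul_add, ← hTsq]; gcongr
    rw [stepConst, hTT, e1, mul_add (2 ^ m)]
    have hT0 : 0 ≤ T := by linarith
    have hσm : 0 ≤ 32 / σ * m := by positivity
    have he1 := Real.exp_pos ((P + 1 : ℝ) ^ 2)
    have he2 := Real.exp_pos 4
    calc _ ≤ T * (32 / σ * m + 1) + 2 * Real.exp ((P + 1) ^ 2) + (T * (2 * Real.exp 4) + X) := by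
          linarith
      _ ≤ X * (32 / σ * m + 1) + X * (2 * Real.exp ((P + 1) ^ 2)) +
          (X * (2 * Real.exp 4) + X) := by
          have h1 : T * (32 / σ * m + 1) ≤ X * (32 / σ * m + 1) := by gcongr
          have h2 : T * (2 * Real.exp 4) ≤ X * (2 * Real.exp 4) := by gcongr
          have h3 : 2 * Real.exp ((P + 1 : ℝ) ^ 2) ≤ X * (2 * Real.exp ((P + 1 : ℝ) ^ 2)) :=
            le_mul_of_one_le_left (by positivity) hX1
          linarith
      _ = X * (32 / σ * m + D) := by rw [hD]; ring
      _ ≤ X * X := by gcongr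

/-- Under the branching hypothesis a bounded number of convolutions flattens the restriction of `η`
to `A`: no atom exceeds a constant multiple of `2 ^ (-(1 - 5γ/8) n)`. -/
lemma small_atoms {γ : ℝ} (hγ0 : 0 < γ) (hγ1 : γ < 1) (l : ℕ) :
    ∃ (k : ℕ) (K : ℝ), 1 ≤ k ∧ 0 < K ∧ ∀ (n : ℕ) (η : ℕ → ℝ) (A : Finset ℕ), (∀ z, 0 ≤ η z) →
      ∑ z ∈ Finset.range (2 ^ n + 1), η z = 1 → A ⊆ Finset.range (2 ^ n + 1) →
      (∀ z ∈ A, (1 - γ / 2) * (n : ℝ) ≤ ((Finset.range n).filter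
        fun t => Branch η (Finset.range (2 ^ n + 1)) l t z).card) →
      ∀ x : ℕ, ∑ z ∈ Fintype.piFinset (fun _ : Fin k => A),
        (∏ i, η (z i)) * (if ∑ i, z i = x then 1 else 0) ≤
        K * (2 : ℝ) ^ (-((1 - 5 * γ / 8) * n)) := by
  obtain ⟨m, N, R, P, L, T, τ, ρ, κ₀, H, hκ, hρκ, hl, hLε, hstep⟩ :=
    exists_params (ε := γ / 16) (by positivity) l
  have hm := H.one_le_m
  have hmpos : (0 : ℝ) < m := by exact_mod_cast hm
  refine ⟨4 ^ m, m * (2 : ℝ) ^ ((m : ℝ) + 2 * (γ / 16 * m)) * Real.exp (2 ^ m),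
    Nat.one_le_pow _ _ (by norm_num), by positivity, ?_⟩
  intro n η A hη htot hA hbr x
  set g : ℝ := n - m - (1 + γ / 16) * (γ / 2 * n) with hg
  have hlL : (0 : ℝ) < (L : ℝ) - 3 * l := by
    have : ((3 * l : ℕ) : ℝ) < L := by exact_mod_cast hl
    push_cast at this; linarith
  have hgood : ∀ z ∈ A, 0 < η z → g ≤ ((Finset.Ico m n).filter
      fun t => Good η (Finset.range (2 ^ n + 1)) ρ κ₀ L t z).card := by
    intro z hz hz0
    have h := good_count (m := m) hη hκ hρκ (hA hz) hz0 H.L_le hl.le (hbr z hz)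
    have h2 : (L : ℝ) * (γ / 2 * n) ≤ ((L : ℝ) - 3 * l) * ((1 + γ / 16) * (γ / 2 * n)) := by
      have := mul_le_mul_of_nonneg_right hLε (by positivity : 0 ≤ γ / 2 * n)
      linarith
    have := le_of_mul_le_mul_left (h.trans h2) hlL
    rw [hg]; linarith
  refine (sup_bound hη H rfl n htot hA hgood x).trans ?_
  have hK0 := stepConst_nonneg m N R P H.one_le_T τ (2 ^ L * κ₀)
  have h1 : stepConst m N R P T τ (2 ^ L * κ₀) ^ (n / m + 2) ≤
      (2 : ℝ) ^ (γ / 16 * n + 2 * (γ / 16 * m)) := by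
    refine (pow_le_pow_left₀ hK0 hstep _).trans ?_
    rw [← Real.rpow_natCast, ← Real.rpow_mul (by norm_num)]
    apply Real.rpow_le_rpow_of_exponent_le (by norm_num)
    have : ((n / m : ℕ) : ℝ) * m ≤ n := by exact_mod_cast Nat.div_mul_le_self n m
    push_cast
    nlinarith
  calc m * (2 : ℝ) ^ (-g) * (stepConst m N R P T τ (2 ^ L * κ₀) ^ (n / m + 2) *
        Real.exp (2 ^ m)) ≤ m * (2 : ℝ) ^ (-g) *
        ((2 : ℝ) ^ (γ / 16 * n + 2 * (γ / 16 * m)) * Real.exp (2 ^ m)) := by gcongr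
    _ = m * Real.exp (2 ^ m) * (2 : ℝ) ^ (-g + (γ / 16 * n + 2 * (γ / 16 * m))) := by
        rw [Real.rpow_add (by norm_num) (-g)]; ring
    _ ≤ m * Real.exp (2 ^ m) * (2 : ℝ) ^ ((m : ℝ) + 2 * (γ / 16 * m) +
          -((1 - 5 * γ / 8) * n)) := by
        refine mul_le_mul_of_nonneg_left ?_ (by positivity)
        apply Real.rpow_le_rpow_of_exponent_le (by norm_num)
        have hn : (0 : ℝ) ≤ n := Nat.cast_nonneg n
        have h3 : γ * γ * n ≤ γ * n := by nlinarith [mul_nonneg hγ0.le hn]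
        have h4 : 0 ≤ γ * n := by positivity
        rw [hg]
        nlinarith
    _ = _ := by rw [Real.rpow_add (by norm_num)]; ring

end Parameters

/-! ### Log-convexity of iterated convolutions -/

section Convolution

variable {G : Type*} [AddCommGroup G]

/-- Convolution of `f` with the weighted point masses `∑ a ∈ A, w a • δ_{φ a}`. -/
def cv (A : Finset ℕ) (w : ℕ → ℝ) (φ : ℕ → G) (f : G → ℝ) (y : G) : ℝ :=
  ∑ a ∈ A, w a * f (y - φ a)

/-- The square of the `ℓ²` norm. -/
def nsq {G : Type*} [Fintype G] (f : G → ℝ) : ℝ := ∑ y, f y ^ 2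

variable {A : Finset ℕ} {w : ℕ → ℝ} {φ : ℕ → G}

lemma nsq_nonneg {G : Type*} [Fintype G] (f : G → ℝ) : 0 ≤ nsq f := Finset.sum_nonneg fun _ _ => sq_nonneg _

lemma cv_adjoint [Fintype G] (f g : G → ℝ) :
    ∑ y, cv A w φ f y * g y = ∑ y, f y * cv A w (fun a => -φ a) g y := by
  simp only [cv, Finset.sum_mul, Finset.mul_sum]
  rw [Finset.sum_comm, Finset.sum_comm (s := Finset.univ)]
  refine Finset.sum_congr rfl fun a _ => ?_
  rw [← Equiv.sum_comp (Equiv.addRight (φ a))]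
  refine Finset.sum_congr rfl fun y _ => ?_
  simp only [Equiv.coe_addRight, add_sub_cancel_right, sub_neg_eq_add]
  ring

lemma cv_comm (φ ψ : ℕ → G) (f : G → ℝ) :
    cv A w φ (cv A w ψ f) = cv A w ψ (cv A w φ f) := by
  ext y
  simp only [cv, Finset.mul_sum]
  rw [Finset.sum_comm]
  refine Finset.sum_congr rfl fun a _ => Finset.sum_congr rfl fun b _ => ?_
  rw [sub_right_comm]; ring

lemma nsq_cv_neg [Fintype G] (f : G → ℝ) : nsq (cv A w (fun a => -φ a) f) = nsq (cv A w φ f) := by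
  have h1 : nsq (cv A w φ f) = ∑ y, f y * cv A w (fun a => -φ a) (cv A w φ f) y := by
    rw [← cv_adjoint]; exact Finset.sum_congr rfl fun y _ => sq _
  have h2 : nsq (cv A w (fun a => -φ a) f) =
      ∑ y, f y * cv A w φ (cv A w (fun a => -φ a) f) y := by
    have := cv_adjoint (A := A) (w := w) (φ := fun a => -φ a) f (cv A w (fun a => -φ a) f)
    simp only [neg_neg] at this
    rw [← this]; exact Finset.sum_congr rfl fun y _ => sq _
  rw [h1, h2, cv_comm]

/-- Log-convexity of the `ℓ²` norms of the iterated convolutions. -/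
lemma nsq_log_convex [Fintype G] (f : G → ℝ) :
    nsq (cv A w φ f) ^ 2 ≤ nsq f * nsq (cv A w φ (cv A w φ f)) := by
  have h1 : nsq (cv A w φ f) = ∑ y, f y * cv A w (fun a => -φ a) (cv A w φ f) y := by
    rw [← cv_adjoint]; exact Finset.sum_congr rfl fun y _ => sq _
  calc nsq (cv A w φ f) ^ 2 = (∑ y, f y * cv A w (fun a => -φ a) (cv A w φ f) y) ^ 2 := by
        rw [← h1]
    _ ≤ nsq f * nsq (cv A w (fun a => -φ a) (cv A w φ f)) :=
        Finset.sum_mul_sq_le_sq_mul_sq _ _ _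
    _ = _ := by rw [nsq_cv_neg]

/-- The consequence of log-convexity that bounds the first convolution by the `(r + 1)`-st. -/
lemma nsq_pow_le [Fintype G] (f : G → ℝ) (r : ℕ) :
    nsq (cv A w φ f) ^ (r + 1) ≤ nsq f ^ r * nsq ((cv A w φ)^[r + 1] f) := by
  set n : ℕ → ℝ := fun r => nsq ((cv A w φ)^[r] f) with hn
  have hn0 : ∀ r, 0 ≤ n r := fun r => nsq_nonneg _
  have hconv : ∀ r, n (r + 1) ^ 2 ≤ n r * n (r + 2) := by
    intro r
    simp only [hn, Function.iterate_succ_apply']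
    exact nsq_log_convex _
  have hratio : ∀ r, n r * n 1 ≤ n 0 * n (r + 1) := by
    intro r
    induction r with
    | zero => exact le_rfl
    | succ r ih =>
      rcases (hn0 (r + 1)).eq_or_lt with h | h
      · rw [← h, zero_mul]; exact mul_nonneg (hn0 _) (hn0 _)
      · refine le_of_mul_le_mul_left ?_ h
        calc n (r + 1) * (n (r + 1) * n 1) = n (r + 1) ^ 2 * n 1 := by ring
          _ ≤ n r * n (r + 2) * n 1 := mul_le_mul_of_nonneg_right (hconv r) (hn0 _)
          _ = n r * n 1 * n (r + 2) := by ring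
          _ ≤ n 0 * n (r + 1) * n (r + 2) := mul_le_mul_of_nonneg_right ih (hn0 _)
          _ = _ := by ring
  change n 1 ^ (r + 1) ≤ n 0 ^ r * n (r + 1)
  induction r with
  | zero => simp
  | succ r ih =>
    calc n 1 ^ (r + 1 + 1) = n 1 ^ (r + 1) * n 1 := pow_succ _ _
      _ ≤ n 0 ^ r * n (r + 1) * n 1 := mul_le_mul_of_nonneg_right ih (hn0 _)
      _ = n 0 ^ r * (n (r + 1) * n 1) := by ring
      _ ≤ n 0 ^ r * (n 0 * n (r + 1 + 1)) :=
          mul_le_mul_of_nonneg_left (hratio _) (pow_nonneg (hn0 _) _)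
      _ = _ := by ring

lemma cv_iterate (f : G → ℝ) (k : ℕ) : ∀ y, (cv A w φ)^[k] f y =
    ∑ z ∈ Fintype.piFinset (fun _ : Fin k => A), (∏ i, w (z i)) * f (y - ∑ i, φ (z i)) := by
  induction k with
  | zero => intro y; simp
  | succ k ih =>
    intro y
    rw [Function.iterate_succ_apply', cv]
    simp only [ih, Finset.mul_sum]
    rw [← Finset.sum_product']
    refine Finset.sum_nbij' (fun q => Fin.cons q.1 q.2) (fun z => (z 0, Fin.tail z)) ?_ ?_ ?_ ?_ ?_
    · rintro ⟨a, z⟩ h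
      rw [Finset.mem_product, Fintype.mem_piFinset] at h
      rw [Fintype.mem_piFinset]
      intro i
      refine Fin.cases ?_ (fun i => ?_) i
      · exact h.1
      · exact h.2 i
    · intro z h
      rw [Fintype.mem_piFinset] at h
      rw [Finset.mem_product, Fintype.mem_piFinset]
      exact ⟨h 0, fun i => h i.succ⟩
    · rintro ⟨a, z⟩ _
      simp
    · intro z _
      simp
    · rintro ⟨a, z⟩ _
      simp only [Fin.prod_univ_succ, Fin.sum_univ_succ, Fin.cons_zero, Fin.cons_succ]
      rw [mul_assoc, sub_sub]

lemma cv_nonneg (hw : ∀ a, 0 ≤ w a) {f : G → ℝ} (hf : ∀ y, 0 ≤ f y) (y : G) :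
    0 ≤ cv A w φ f y :=
  Finset.sum_nonneg fun a _ => mul_nonneg (hw a) (hf _)

lemma sum_cv [Fintype G] (f : G → ℝ) : ∑ y, cv A w φ f y = (∑ a ∈ A, w a) * ∑ y, f y := by
  simp only [cv]
  rw [Finset.sum_comm, Finset.sum_mul]
  refine Finset.sum_congr rfl fun a _ => ?_
  rw [← Finset.mul_sum, ← Equiv.sum_comp (Equiv.subRight (φ a)) f]
  rfl

lemma iterate_nonneg_and_sum_le [Fintype G] (hw : ∀ a, 0 ≤ w a) (hw1 : ∑ a ∈ A, w a ≤ 1) {f : G → ℝ}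
    (hf : ∀ y, 0 ≤ f y) (k : ℕ) : (∀ y, 0 ≤ (cv A w φ)^[k] f y) ∧
      ∑ y, (cv A w φ)^[k] f y ≤ ∑ y, f y := by
  induction k with
  | zero => exact ⟨hf, le_rfl⟩
  | succ k ih =>
    simp only [Function.iterate_succ_apply']
    refine ⟨fun y => cv_nonneg hw ih.1 y, ?_⟩
    rw [sum_cv]
    refine le_trans ?_ ih.2
    exact mul_le_of_le_one_left (Finset.sum_nonneg fun y _ => ih.1 y) hw1

end Convolution

/-- A small set of sums forces the `k`-fold convolution of `η` on `A` to have a large atom, stated as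
a lower bound for any upper bound `Q` of its atoms. Cauchy–Schwarz on `S` bounds the `ℓ²` norm of the
convolution of `η` on `A` with the indicator of `B` from below, and `nsq_pow_le` transfers this to
the `k`-fold convolution. -/
lemma atoms_of_small_sumset {n k : ℕ} (hk : 1 ≤ k) {η : ℕ → ℝ} (hη : ∀ z, 0 ≤ η z)
    {A B S : Finset ℕ} (hA : A ⊆ Finset.range (2 ^ n + 1)) (hB : B ⊆ Finset.range (2 ^ n + 1))
    (hw1 : ∑ a ∈ A, η a ≤ 1) (Ba : ℕ → Finset ℕ) (hBa : ∀ a ∈ A, Ba a ⊆ B)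
    (hS : ∀ a ∈ A, ∀ b ∈ Ba a, a + b ∈ S) {Q : ℝ}
    (hQ : ∀ x : ℕ, ∑ z ∈ Fintype.piFinset (fun _ : Fin k => A),
        (∏ i, η (z i)) * (if ∑ i, z i = x then 1 else 0) ≤ Q) :
    ((∑ a ∈ A, η a * (Ba a).card) ^ 2) ^ k ≤ (S.card : ℝ) ^ k * ((B.card : ℝ) ^ (k + 1) * Q) := by
  -- no wrap-around occurs modulo `N₀`
  set N₀ : ℕ := (k + 1) * (2 ^ n + 1) with hN₀
  have : NeZero N₀ := ⟨by positivity⟩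
  set φ : ℕ → ZMod N₀ := fun z => (z : ZMod N₀) with hφ
  have hφinj : ∀ x y : ℕ, x < N₀ → y < N₀ → φ x = φ y → x = y := by
    intro x y hx hy h
    rw [hφ] at h
    simp only [ZMod.natCast_eq_natCast_iff'] at h
    rwa [Nat.mod_eq_of_lt hx, Nat.mod_eq_of_lt hy] at h
  set f : ZMod N₀ → ℝ := fun u => ∑ b ∈ B, if u = φ b then 1 else 0 with hf
  have hf0 : ∀ u, 0 ≤ f u := fun u => Finset.sum_nonneg fun b _ => by split_ifs <;> norm_num
  have hf1 : ∀ u, f u ≤ 1 := by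
    intro u
    simp only [hf]
    rw [Finset.sum_boole]
    have : (B.filter fun b => u = φ b).card ≤ 1 := by
      refine Finset.card_le_one.2 fun b hb b' hb' => ?_
      rw [Finset.mem_filter] at hb hb'
      have h1 := Finset.mem_range.1 (hB hb.1)
      have h2 := Finset.mem_range.1 (hB hb'.1)
      exact hφinj b b' (by rw [hN₀]; nlinarith) (by rw [hN₀]; nlinarith) (hb.2.symm.trans hb'.2)
    exact_mod_cast this
  have hfsum : ∑ u, f u = B.card := by
    simp only [hf]
    rw [Finset.sum_comm]
    simp
  have hsum := iterate_nonneg_and_sum_le (A := A) (φ := φ) hη hw1 hf0 k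
  rw [hfsum] at hsum
  have hsup : ∀ y, (cv A η φ)^[k] f y ≤ B.card * Q := by
    intro y
    rw [cv_iterate]
    simp only [hf, Finset.mul_sum]
    rw [Finset.sum_comm, ← nsmul_eq_mul, ← Finset.sum_const]
    refine Finset.sum_le_sum fun b _ => ?_
    refine le_trans (Finset.sum_le_sum fun z hz => ?_) (hQ (y - φ b).val)
    rw [Fintype.mem_piFinset] at hz
    refine mul_le_mul_of_nonneg_left ?_ (Finset.prod_nonneg fun i _ => hη _)
    by_cases h : y - ∑ i, φ (z i) = φ b
    · have h1 : φ (∑ i, z i) = y - φ b := by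
        rw [← h, hφ]; push_cast; abel
      have h2 : ∑ i, z i < N₀ := by
        have : ∑ i, z i ≤ ∑ i : Fin k, (2 ^ n + 1) := Finset.sum_le_sum fun i _ =>
          (Finset.mem_range.1 (hA (hz i))).le
        rw [Finset.sum_const, Finset.card_univ, Fintype.card_fin, smul_eq_mul] at this
        have hp : 0 < 2 ^ n := by positivity
        rw [hN₀, add_mul]; omega
      have h3 : ∑ i, z i = (y - φ b).val := by
        rw [← h1, hφ, ZMod.val_natCast, Nat.mod_eq_of_lt h2]
      rw [if_pos h, if_pos h3]
    · rw [if_neg h]; split_ifs <;> norm_num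
  have hN0 : nsq f ≤ B.card := by
    rw [← hfsum]
    refine Finset.sum_le_sum fun u _ => ?_
    nlinarith [hf0 u, hf1 u]
  have hQ0 : 0 ≤ Q := le_trans (Finset.sum_nonneg fun z _ => mul_nonneg
    (Finset.prod_nonneg fun i _ => hη _) (by split_ifs <;> norm_num)) (hQ 0)
  have hNk : nsq ((cv A η φ)^[k] f) ≤ B.card * Q * B.card := by
    calc nsq ((cv A η φ)^[k] f) ≤ ∑ y, B.card * Q * (cv A η φ)^[k] f y := by
          refine Finset.sum_le_sum fun y _ => ?_
          rw [sq]
          exact mul_le_mul_of_nonneg_right (hsup y) (hsum.1 y)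
      _ = B.card * Q * ∑ y, (cv A η φ)^[k] f y := by rw [Finset.mul_sum]
      _ ≤ _ := mul_le_mul_of_nonneg_left hsum.2 (by positivity)
  have hlow : (∑ a ∈ A, η a * (Ba a).card) ^ 2 ≤ S.card * nsq (cv A η φ f) := by
    set S' := S.image φ with hS'
    have h1 : ∑ a ∈ A, η a * (Ba a).card ≤ ∑ y ∈ S', cv A η φ f y := by
      simp only [cv]
      rw [Finset.sum_comm]
      refine Finset.sum_le_sum fun a ha => ?_
      rw [← Finset.mul_sum]
      refine mul_le_mul_of_nonneg_left ?_ (hη a)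
      simp only [hf]
      rw [Finset.sum_comm]
      calc ((Ba a).card : ℝ) = ∑ b ∈ Ba a, (1 : ℝ) := by simp
        _ ≤ ∑ b ∈ Ba a, ∑ y ∈ S', (if y - φ a = φ b then (1 : ℝ) else 0) := by
            refine Finset.sum_le_sum fun b hb => ?_
            have hmem : φ (a + b) ∈ S' := Finset.mem_image_of_mem _ (hS a ha b hb)
            have hval : (1 : ℝ) = if φ (a + b) - φ a = φ b then (1 : ℝ) else 0 := by
              rw [if_pos]; rw [hφ]; push_cast; abel
            exact hval.le.trans <| Finset.single_le_sum (f := fun y => if y - φ a = φ b then (1 : ℝ) else 0)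
              (fun y _ => by split_ifs <;> norm_num) hmem
        _ ≤ _ := Finset.sum_le_sum_of_subset_of_nonneg (hBa a ha) fun b _ _ =>
            Finset.sum_nonneg fun y _ => by split_ifs <;> norm_num
    have h0 : 0 ≤ ∑ a ∈ A, η a * ((Ba a).card : ℝ) :=
      Finset.sum_nonneg fun a _ => mul_nonneg (hη a) (Nat.cast_nonneg _)
    calc _ ≤ (∑ y ∈ S', cv A η φ f y) ^ 2 := pow_le_pow_left₀ h0 h1 2
      _ ≤ S'.card * ∑ y ∈ S', cv A η φ f y ^ 2 := sq_sum_le_card_mul_sum_sq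
      _ ≤ S.card * nsq (cv A η φ f) := by
          refine mul_le_mul ?_ ?_ (Finset.sum_nonneg fun y _ => sq_nonneg _) (Nat.cast_nonneg _)
          · exact_mod_cast Finset.card_image_le
          · exact Finset.sum_le_sum_of_subset_of_nonneg (Finset.subset_univ _)
              fun y _ _ => sq_nonneg _
  obtain ⟨r, rfl⟩ := Nat.exists_eq_add_of_le' hk
  have hpow := nsq_pow_le (A := A) (w := η) (φ := φ) f r
  calc _ ≤ (S.card * nsq (cv A η φ f)) ^ (r + 1) := pow_le_pow_left₀ (sq_nonneg _) hlow _
    _ = (S.card : ℝ) ^ (r + 1) * nsq (cv A η φ f) ^ (r + 1) := mul_pow _ _ _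
    _ ≤ (S.card : ℝ) ^ (r + 1) * ((B.card : ℝ) ^ r * (B.card * Q * B.card)) := by
        refine mul_le_mul_of_nonneg_left (hpow.trans ?_) (by positivity)
        exact mul_le_mul (pow_le_pow_left₀ (nsq_nonneg f) hN0 r) hNk (nsq_nonneg _) (by positivity)
    _ = _ := by ring

/-! ### The theorem on the integers and its transfer to the grid -/

section Core

/-- The theorem for the integers `0, …, 2 ^ n` in place of the grid. Level `t` now denotes intervals
of length `2 ^ t`, that is, generation `n - t`. -/
lemma core {γ : ℝ} (hγ0 : 0 < γ) (hγ1 : γ < 1) (l : ℕ) :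
    ∃ δ : ℝ, 0 < δ ∧ ∃ N : ℕ, ∀ n : ℕ, N ≤ n → ∀ (η : ℕ → ℝ) (A B S : Finset ℕ)
      (Ba : ℕ → Finset ℕ), (∀ z, 0 ≤ η z) → ∑ z ∈ Finset.range (2 ^ n + 1), η z = 1 →
      A ⊆ Finset.range (2 ^ n + 1) → 1 / 2 ≤ ∑ a ∈ A, η a →
      (∀ z ∈ A, (1 - γ / 2) * (n : ℝ) ≤ ((Finset.range n).filter
        fun t => Branch η (Finset.range (2 ^ n + 1)) l t z).card) →
      B ⊆ Finset.range (2 ^ n + 1) → (∀ a ∈ A, Ba a ⊆ B) →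
      (B.card : ℝ) ≤ 2 ^ ((n : ℝ) * (1 - γ)) →
      (∀ a ∈ A, (B.card : ℝ) ^ (1 - δ) ≤ ((Ba a).card : ℝ)) →
      (∀ a ∈ A, ∀ b ∈ Ba a, a + b ∈ S) → (B.card : ℝ) ^ (1 + δ) ≤ (S.card : ℝ) := by
  obtain ⟨k, K, hk, hK, hatoms⟩ := small_atoms hγ0 hγ1 l
  have hkpos : (0 : ℝ) < k := by exact_mod_cast hk
  set δ : ℝ := γ / (24 * k) with hδ
  have hδpos : 0 < δ := by positivity
  have hδk : 3 * δ * k = γ / 8 := by rw [hδ]; field_simp; norm_num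
  have hr : (1 : ℝ) < 2 ^ (γ / 4) := Real.one_lt_rpow (by norm_num) (by positivity)
  obtain ⟨N, hN⟩ := Filter.eventually_atTop.1 (eventually_linear_le_pow 0 (K * 4 ^ k + 1) hr)
  refine ⟨δ, hδpos, N, ?_⟩
  intro n hn η A B S Ba hη htot hA hAhalf hbr hB hBa hBcard hBacard hS
  by_contra hlt
  rw [not_le] at hlt
  have hM : 1 ≤ (B.card : ℝ) := by
    rcases Nat.eq_zero_or_pos B.card with h | h
    · rw [h, Nat.cast_zero, Real.zero_rpow (by positivity)] at hlt
      exact absurd hlt (not_lt.2 (Nat.cast_nonneg _))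
    · exact_mod_cast h
  set M : ℝ := (B.card : ℝ) with hMdef
  have hMpos : 0 < M := by linarith
  set Q : ℝ := K * (2 : ℝ) ^ (-((1 - 5 * γ / 8) * n)) with hQ
  have hQpos : 0 < Q := by positivity
  clear_value Q
  have hw1 : ∑ a ∈ A, η a ≤ 1 := by
    rw [← htot]; exact Finset.sum_le_sum_of_subset_of_nonneg hA fun _ _ _ => hη _
  have hmain := atoms_of_small_sumset hk hη hA hB hw1 Ba hBa hS (hatoms n η A hη htot hA hbr)
  rw [← hQ, ← hMdef] at hmain
  have hV : M ^ (1 - δ) / 2 ≤ ∑ a ∈ A, η a * (Ba a).card := by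
    calc M ^ (1 - δ) / 2 = 1 / 2 * M ^ (1 - δ) := by ring
      _ ≤ (∑ a ∈ A, η a) * M ^ (1 - δ) := by gcongr
      _ = ∑ a ∈ A, η a * M ^ (1 - δ) := Finset.sum_mul _ _ _
      _ ≤ _ := Finset.sum_le_sum fun a ha => mul_le_mul_of_nonneg_left (hBacard a ha) (hη a)
  have h1 : ((M ^ (1 - δ) / 2) ^ 2) ^ k ≤ (M ^ (1 + δ)) ^ k * (M ^ (k + 1) * Q) := by
    refine le_trans ?_ (hmain.trans ?_)
    · gcongr
    · gcongr
  have e1 : ((M ^ (1 - δ) / 2) ^ 2) ^ k = M ^ (2 * k - 2 * δ * k) / 4 ^ k := by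
    rw [div_pow, div_pow, ← Real.rpow_natCast, ← Real.rpow_natCast, ← Real.rpow_mul hMpos.le,
      ← Real.rpow_mul hMpos.le]
    congr 2
    · push_cast; ring
    · norm_num
  have e2 : (M ^ (1 + δ)) ^ k * (M ^ (k + 1) * Q) =
      M ^ (2 * k - 2 * δ * k) * (M ^ (1 + γ / 8) * Q) := by
    rw [← Real.rpow_natCast, ← Real.rpow_natCast, ← Real.rpow_mul hMpos.le, ← mul_assoc,
      ← mul_assoc, ← Real.rpow_add hMpos, ← Real.rpow_add hMpos, ← hδk]
    congr 2
    push_cast; ring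
  rw [e1, e2, div_eq_mul_inv] at h1
  have h2 : ((4 : ℝ) ^ k)⁻¹ ≤ M ^ (1 + γ / 8) * Q :=
    le_of_mul_le_mul_left h1 (by positivity)
  have h3 : M ^ (1 + γ / 8) ≤ (2 : ℝ) ^ ((n : ℝ) * (1 - γ) * (1 + γ / 8)) := by
    rw [Real.rpow_mul (by norm_num)]
    exact Real.rpow_le_rpow hMpos.le hBcard (by positivity)
  have h4 : (2 : ℝ) ^ ((n : ℝ) * (1 - γ) * (1 + γ / 8)) * (2 : ℝ) ^ (-((1 - 5 * γ / 8) * n)) ≤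
      (2 : ℝ) ^ (-(γ / 4 * n)) := by
    rw [← Real.rpow_add (by norm_num)]
    apply Real.rpow_le_rpow_of_exponent_le (by norm_num)
    have : 0 ≤ γ * γ * n := by positivity
    nlinarith
  have h5 : ((4 : ℝ) ^ k)⁻¹ ≤ K * (2 : ℝ) ^ (-(γ / 4 * n)) := by
    calc _ ≤ M ^ (1 + γ / 8) * Q := h2
      _ ≤ (2 : ℝ) ^ ((n : ℝ) * (1 - γ) * (1 + γ / 8)) * Q := by gcongr
      _ = K * ((2 : ℝ) ^ ((n : ℝ) * (1 - γ) * (1 + γ / 8)) *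
          (2 : ℝ) ^ (-((1 - 5 * γ / 8) * n))) := by rw [hQ]; ring
      _ ≤ _ := by gcongr
  have h6 := hN n hn
  rw [← Real.rpow_natCast _ n, ← Real.rpow_mul (by norm_num)] at h6
  rw [Real.rpow_neg (by norm_num), ← div_eq_mul_inv, inv_eq_one_div,
    div_le_div_iff₀ (by positivity) (by positivity)] at h5
  linarith

end Core

section Translation

/-- The grid point with index `z`. -/
def gp (n z : ℕ) : ℝ := (z : ℝ) / 2 ^ n

lemma gp_injective (n : ℕ) : Function.Injective (gp n) := by
  intro a b h
  unfold gp at h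
  have h2 : (2 : ℝ) ^ n ≠ 0 := by positivity
  exact_mod_cast (div_left_inj' h2).1 h

lemma dyGrid_eq (n : ℕ) : dyGrid n = ((Finset.range (2 ^ n + 1)).image (gp n) : Set ℝ) := by
  have h2 : (0 : ℝ) < 2 ^ n := by positivity
  ext x
  simp only [dyGrid, Set.mem_ofPred_eq, Finset.coe_image, Set.mem_image, Finset.mem_coe,
    Finset.mem_range, Set.mem_Icc]
  constructor
  · rintro ⟨⟨h0, h1⟩, j, rfl⟩
    rw [div_le_one h2] at h1
    have hj0 : 0 ≤ j := by
      by_contra h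
      rw [not_le] at h
      have : (j : ℝ) < 0 := by exact_mod_cast h
      exact absurd h0 (not_le.2 (div_neg_of_neg_of_pos this h2))
    lift j to ℕ using hj0
    refine ⟨j, ?_, by simp [gp]⟩
    have : j ≤ 2 ^ n := by exact_mod_cast h1
    omega
  · rintro ⟨z, hz, rfl⟩
    refine ⟨⟨by unfold gp; positivity, ?_⟩, z, by simp [gp]⟩
    rw [gp, div_le_one h2]
    have : z ≤ 2 ^ n := by omega
    exact_mod_cast this

lemma mem_dyadicCell {k : ℕ} {x y : ℝ} :
    y ∈ dyadicCell k x ↔ ⌊(2 : ℝ) ^ k * y⌋ = ⌊(2 : ℝ) ^ k * x⌋ := by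
  have h2 : (0 : ℝ) < 2 ^ k := by positivity
  rw [dyadicCell, dyI, Set.mem_Ico, Int.floor_eq_iff, div_le_iff₀ h2, lt_div_iff₀ h2, mul_comm y]

lemma gp_mem_dyadicCell {n k z w : ℕ} :
    gp n w ∈ dyadicCell k (gp n z) ↔ w / 2 ^ (n - k) = z / 2 ^ (n - k) := by
  rw [mem_dyadicCell]
  rcases le_total k n with h | h
  · have hfl : ∀ v : ℕ, ⌊(2 : ℝ) ^ k * gp n v⌋ = ((v / 2 ^ (n - k) : ℕ) : ℤ) := by
      intro v
      have : (2 : ℝ) ^ k * gp n v = (v : ℝ) / ((2 ^ (n - k) : ℕ) : ℝ) := by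
        push_cast
        rw [gp, ← Nat.add_sub_cancel' h, pow_add, Nat.add_sub_cancel_left]
        field_simp
      rw [this, ← Int.natCast_floor_eq_floor (by positivity), Nat.floor_div_eq_div]
    rw [hfl, hfl]; norm_cast
  · have hfl : ∀ v : ℕ, ⌊(2 : ℝ) ^ k * gp n v⌋ = ((v * 2 ^ (k - n) : ℕ) : ℤ) := by
      intro v
      have : (2 : ℝ) ^ k * gp n v = ((v * 2 ^ (k - n) : ℕ) : ℝ) := by
        push_cast
        rw [gp, ← Nat.add_sub_cancel' h, pow_add, Nat.add_sub_cancel_left]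
        field_simp
      rw [this, Int.floor_natCast]
    rw [hfl, hfl, Nat.sub_eq_zero_of_le h]
    have : 0 < 2 ^ (k - n) := by positivity
    simp

/-- The indices of the grid points of `X`. -/
def idx (n : ℕ) (X : Finset ℝ) : Finset ℕ :=
  (Finset.range (2 ^ n + 1)).filter fun z => gp n z ∈ X

lemma card_idx {n : ℕ} {X : Finset ℝ} (hX : (X : Set ℝ) ⊆ dyGrid n) : (idx n X).card = X.card := by
  rw [← Finset.card_image_of_injective _ (gp_injective n)]
  congr 1
  ext x
  rw [Finset.mem_image]
  constructor
  · rintro ⟨z, hz, rfl⟩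
    exact (Finset.mem_filter.1 hz).2
  · intro hx
    have := hX hx
    rw [dyGrid_eq, Finset.mem_coe, Finset.mem_image] at this
    obtain ⟨z, hz, rfl⟩ := this
    exact ⟨z, Finset.mem_filter.2 ⟨hz, hx⟩, rfl⟩

lemma measureReal_eq_sum {n : ℕ} {η : Measure ℝ} [IsProbabilityMeasure η] (h : η (dyGrid n) = 1)
    (X : Set ℝ) : η.real X =
      ∑ z ∈ (Finset.range (2 ^ n + 1)).filter (fun z => gp n z ∈ X), η.real {gp n z} := by
  have hc : η (dyGrid n)ᶜ = 0 := by
    refine (prob_compl_eq_zero_iff ?_).2 h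
    rw [dyGrid_eq]; exact Finset.measurableSet _
  have e : X ∩ dyGrid n =
      (((Finset.range (2 ^ n + 1)).filter (fun z => gp n z ∈ X)).image (gp n) : Finset ℝ) := by
    ext x
    rw [dyGrid_eq]
    simp only [Set.mem_inter_iff, Finset.mem_coe, Finset.mem_image, Finset.mem_filter]
    constructor
    · rintro ⟨hx, z, hz, rfl⟩
      exact ⟨z, ⟨hz, hx⟩, rfl⟩
    · rintro ⟨z, ⟨hz, hx⟩, rfl⟩
      exact ⟨hx, z, hz, rfl⟩
  rw [measureReal_def, ← measure_inter_conull hc, ← measureReal_def, e,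
    ← sum_measureReal_singleton, Finset.sum_image fun a _ b _ hab => gp_injective n hab]

lemma measureReal_dyadicCell {n : ℕ} {η : Measure ℝ} [IsProbabilityMeasure η]
    (h : η (dyGrid n) = 1) (k z : ℕ) : η.real (dyadicCell k (gp n z)) =
      mass (fun w => η.real {gp n w}) (Finset.range (2 ^ n + 1)) (n - k) (z / 2 ^ (n - k)) := by
  rw [measureReal_eq_sum h, mass, cell]
  simp only [gp_mem_dyadicCell]

end Translation

/-- an entropy/sumset-increase theorem on the dyadic grid. -/
theorem stmt13 (γ : ℝ) (hγ0 : 0 < γ) (hγ1 : γ < 1) (l : ℕ) :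
    ∃ δ : ℝ, 0 < δ ∧ ∃ N : ℕ, ∀ n : ℕ, N ≤ n →
      ∀ η : Measure ℝ, IsProbabilityMeasure η → η (dyGrid n) = 1 →
      ∀ A : Finset ℝ, ↑A ⊆ dyGrid n →
        1 / 2 ≤ η ↑A →
        (∀ x ∈ A,
          (1 - γ / 2) * (n : ℝ) ≤
            (((Finset.Icc 1 n).filter fun k =>
              2 * η (dyadicCell (k + l) x) ≤ η (dyadicCell k x)).card : ℝ)) →
      ∀ B : Finset ℝ, ↑B ⊆ dyGrid n →
      ∀ Ba : ℝ → Finset ℝ, (∀ a ∈ A, Ba a ⊆ B) →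
        (B.card : ℝ) ≤ 2 ^ ((n : ℝ) * (1 - γ)) →
        (∀ a ∈ A, (B.card : ℝ) ^ (1 - δ) ≤ ((Ba a).card : ℝ)) →
        (B.card : ℝ) ^ (1 + δ) ≤
          ((A.biUnion fun a => (Ba a).image fun b => a + b).card : ℝ) := by
  obtain ⟨δ, hδ, N, hcore⟩ := core hγ0 hγ1 l
  refine ⟨δ, hδ, N, ?_⟩
  intro n hn η hprob hgrid A hA hhalf hbr B hB Ba hBa hBcard hBacard
  set Ω := Finset.range (2 ^ n + 1) with hΩ
  set e : ℕ → ℝ := fun z => η.real {gp n z} with he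
  set U := A.biUnion fun a => (Ba a).image fun b => a + b with hU
  set S : Finset ℕ := (Finset.range (2 ^ (n + 1) + 1)).filter fun z => gp n z ∈ U with hS
  have hidx : ∀ X : Finset ℝ, ∀ z, z ∈ idx n X ↔ z ∈ Ω ∧ gp n z ∈ X := fun X z =>
    Finset.mem_filter
  have hScard : (S.card : ℝ) ≤ U.card := by
    have : S.card ≤ U.card := by
      rw [← Finset.card_image_of_injective S (gp_injective n)]
      refine Finset.card_le_card fun x hx => ?_
      obtain ⟨z, hz, rfl⟩ := Finset.mem_image.1 hx
      exact (Finset.mem_filter.1 hz).2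
    exact_mod_cast this
  refine le_trans ?_ hScard
  rw [← card_idx hB] at hBcard hBacard ⊢
  refine hcore n hn e (idx n A) (idx n B) S (fun a => idx n (Ba (gp n a))) ?_ ?_ ?_ ?_ ?_ ?_ ?_
    hBcard ?_ ?_
  · exact fun z => measureReal_nonneg
  · have h := measureReal_eq_sum hgrid Set.univ
    simp only [probReal_univ, Set.mem_univ, Finset.filter_true] at h
    exact h.symm
  · exact Finset.filter_subset _ _
  · have h := measureReal_eq_sum hgrid (A : Set ℝ)
    have h2 : (1 : ℝ) / 2 ≤ η.real (A : Set ℝ) := by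
      have := ENNReal.toReal_mono (measure_ne_top η _) hhalf
      simpa [measureReal_def] using this
    rw [h] at h2
    refine h2.trans (le_of_eq (Finset.sum_congr ?_ fun _ _ => rfl))
    ext z
    simp [idx]
  · intro z hz
    refine (hbr _ ((hidx A z).1 hz).2).trans ?_
    rw [Nat.cast_le]
    refine Finset.card_le_card_of_injOn (fun k => n - k) ?_ ?_
    · intro k hk
      rw [Finset.mem_coe, Finset.mem_filter, Finset.mem_Icc] at hk
      rw [Finset.mem_coe, Finset.mem_filter, Finset.mem_range]
      refine ⟨by show n - k < n; omega, ?_⟩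
      have h := ENNReal.toReal_mono (measure_ne_top η _) hk.2
      rw [ENNReal.toReal_mul, ← measureReal_def, ← measureReal_def, measureReal_dyadicCell hgrid,
        measureReal_dyadicCell hgrid, ENNReal.toReal_ofNat] at h
      rw [Branch]
      rw [Nat.sub_sub]
      exact h
    · intro k hk k' hk' h
      rw [Finset.mem_coe, Finset.mem_filter, Finset.mem_Icc] at hk hk'
      simp only at h
      omega
  · exact Finset.filter_subset _ _
  · intro a ha b hb
    rw [hidx] at ha hb ⊢
    exact ⟨hb.1, hBa _ ha.2 hb.2⟩
  · intro a ha
    have hmem := ((hidx A a).1 ha).2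
    have hsub : ((Ba (gp n a) : Finset ℝ) : Set ℝ) ⊆ dyGrid n :=
      (Finset.coe_subset.2 (hBa _ hmem)).trans hB
    rw [card_idx hsub]
    exact hBacard _ hmem
  · intro a ha b hb
    rw [hidx] at ha hb
    rw [hS, Finset.mem_filter, Finset.mem_range]
    have h1 := Finset.mem_range.1 ha.1
    have h2 := Finset.mem_range.1 hb.1
    refine ⟨by rw [pow_succ]; omega, ?_⟩
    have : gp n (a + b) = gp n a + gp n b := by simp only [gp]; push_cast; ring
    rw [this, hU, Finset.mem_biUnion]
    exact ⟨gp n a, ha.2, Finset.mem_image_of_mem _ hb.2⟩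

end
end
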